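/- arXiv:1602.04599 — 3 statements merged into one kernel-verified Lean document; each statement's English description precedes it below -/
import Mathlib

section
/- Let n ≥ 7 be a natural number, let Q be a finite group, and let ρ : Q × A_n → O(n+3) be an injective group homomorphism, regarded as a faithful orthogonal representation of Q × A_n on ℝ^{n+3}. Let F = {v ∈ ℝ^{n+3} : ρ(1,σ)v = v for all σ ∈ A_n} be the fixed subspace of the A_n-factor. Then: (i) F has dimension 4; (ii) F is invariant under ρ(q,1) for every q ∈ Q; (iii) every element of the commutator subgroup [Q,Q] acts as the identity on the orthogonal complement of F, i.e., ρ(q,1)w = w for all q ∈ [Q,Q] and all w ∈ F^⊥; and (iv) the kernel of the action of Q on F, namely {q ∈ Q : ρ(q,1)v = v for all v ∈ F}, intersects [Q,Q] trivially. -/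
/-!
A faithful representation of `A_n` in dimension `n + 3`, `n ≥ 7`, is the sum of one copy of the
standard representation, of dimension `n - 1`, and a trivial representation of dimension `4`. The
rest follows from Schur's lemma: since the standard representation is absolutely irreducible, the
commuting group `Q` acts on it by real scalars, so `[Q, Q]` acts on it trivially; and an element of
`[Q, Q]` trivial on the fixed space `F` as well is trivial on `F ⊕ Fᗮ`, hence equal to `1`.

No classification of representations of `A_n` is used. The decomposition rests on the property
`DisjointKill`: if `c` is a 3-cycle and `v` a double transposition with disjoint supports, then
`(1 - c) (1 - v) = 0`.

*Why it holds* (`disjointKill`). On a complexified representation, the multiplicities of eigenvalues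
of 3-cycles and of characters of Klein four-groups are traces of explicit idempotents, hence natural
numbers, and conjugation in the alternating group relates them. A count shows that the property
holds for seven points in dimension at most `10` (`seven_le_ten`), for eight points in dimension at
most `11` (`eight_le_eleven`) and for nine points in dimension at most `14` (`nine_le_fourteen`).
These cover dimension `n + 3` for `n ≤ 11`. For `n ≥ 12`, a nontrivial component of the Klein
four-group containing `v` has dimension at most `(n + 3) / 3`, which is too small for `A_{n - 4}` to
act nontrivially on it, by induction; in particular `c` is trivial on it.

*What it gives.* A vector `y` negated by `(0 1)(2 3)` and by `(0 1)(4 5)` is then negated by every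
`(0 1)(a b)` (`neg_all`), so it behaves like `e_1 - e_0`: its orbit is a family `Y i j`, equivariant
and with `Y i j + Y j k = Y i k` (`exists_std`), whose span has dimension `n - 1`
(`IsStdFamily.finrank_span`). Such a vector exists as soon as a double transposition acts
nontrivially (`exists_stdFamily`). The orthogonal complement of the span has dimension
`4 < n - 1`, so the same construction shows that `A_n` acts trivially on it
(`trivial_of_finrank_lt`), and it equals `F`. Finally `(1 - (0 1)(4 5)) (1 - (0 1)(2 3))` maps the
representation to the line spanned by `Y 0 1`, so an operator commuting with `A_n` preserves this
line, and by equivariance acts on all `Y i j` by the same scalar (`IsStdFamily.exists_scalar`).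
-/

set_option linter.unusedSectionVars false

open Equiv Equiv.Perm Module
open scoped InnerProductSpace

/-! ### Even representations and changes of the point set -/

namespace AltRep

/-- An orthogonal representation of the group of even permutations of `α`, encoded as a function on all
permutations subject to no condition at the odd ones. -/
structure IsEvenRep {α : Type} [Fintype α] [DecidableEq α] {V : Type} [NormedAddCommGroup V]
    [InnerProductSpace ℝ V] (R : Perm α → V →ₗ[ℝ] V) : Prop where
  one : R 1 = 1
  mul : ∀ g h, sign g = 1 → sign h = 1 → R (g * h) = R g * R h
  inner : ∀ g, sign g = 1 → ∀ x y, ⟪R g x, R g y⟫_ℝ = ⟪x, y⟫_ℝ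

/-- Extension of a permutation of `α` along `f : α ↪ β` by the identity outside the range. -/
noncomputable def embHom {α β : Type} [Fintype α] [DecidableEq α] [Fintype β] [DecidableEq β]
    (f : α ↪ β) : Perm α →* Perm β where
  toFun g := g.viaFintypeEmbedding f
  map_one' := by simp [viaFintypeEmbedding]
  map_mul' g h := by simp [viaFintypeEmbedding]

section pull
variable {α β : Type} [Fintype α] [DecidableEq α] [Fintype β] [DecidableEq β] (f : α ↪ β)

lemma sign_embHom (g : Perm α) : sign (embHom f g) = sign g := viaFintypeEmbedding_sign g f

lemma embHom_apply (g : Perm α) (a : α) : embHom f g (f a) = f (g a) :=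
  viaFintypeEmbedding_apply_image g f a

lemma embHom_apply_not (g : Perm α) (b : β) (hb : b ∉ Set.range f) : embHom f g b = b :=
  viaFintypeEmbedding_apply_notMem_range g f hb

lemma embHom_swap (a b : α) : embHom f (swap a b) = swap (f a) (f b) := by
  ext x
  by_cases hx : x ∈ Set.range f
  · obtain ⟨y, rfl⟩ := hx
    rw [embHom_apply, f.injective.swap_apply]
  · rw [embHom_apply_not f _ _ hx, swap_apply_of_ne_of_ne]
    · rintro rfl; exact hx ⟨a, rfl⟩
    · rintro rfl; exact hx ⟨b, rfl⟩

variable {V : Type} [NormedAddCommGroup V] [InnerProductSpace ℝ V]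

lemma IsEvenRep.pull {R : Perm β → V →ₗ[ℝ] V} (hR : IsEvenRep R) :
    IsEvenRep (fun g : Perm α => R (embHom f g)) where
  one := by simp [hR.one]
  mul g h hg hh := by
    rw [map_mul]; exact hR.mul _ _ (by rw [sign_embHom, hg]) (by rw [sign_embHom, hh])
  inner g hg x y := hR.inner _ (by rw [sign_embHom, hg]) x y

open Classical in
/-- Restriction of the representation to a subspace `W`, with the junk value `1` at those `g` that do
not preserve `W`. -/
noncomputable def restr (R : Perm α → V →ₗ[ℝ] V) (W : Submodule ℝ V) (g : Perm α) : W →ₗ[ℝ] W :=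
  if h : ∀ x ∈ W, R g x ∈ W then (R g).restrict h else 1

lemma restr_coe (R : Perm α → V →ₗ[ℝ] V) (W : Submodule ℝ V) (g : Perm α)
    (h : ∀ x ∈ W, R g x ∈ W) (x : W) : (restr R W g x : V) = R g x := by
  simp [restr, dif_pos h]

lemma IsEvenRep.restr {R : Perm α → V →ₗ[ℝ] V} (hR : IsEvenRep R) (W : Submodule ℝ V)
    (hW : ∀ g, sign g = 1 → ∀ x ∈ W, R g x ∈ W) : IsEvenRep (restr R W) where
  one := by
    ext x
    rw [restr_coe _ _ _ (hW 1 (by simp)), hR.one]; rfl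
  mul g h hg hh := by
    ext x
    rw [restr_coe _ _ _ (hW _ (by simp [hg, hh])), hR.mul g h hg hh, Module.End.mul_apply,
      Module.End.mul_apply, restr_coe _ _ _ (hW g hg), restr_coe _ _ _ (hW h hh)]
  inner g hg x y := by
    simp only [Submodule.coe_inner]
    rw [restr_coe _ _ _ (hW g hg), restr_coe _ _ _ (hW g hg), hR.inner g hg]

/-- The key property: a 3-cycle `c` and a double transposition `v` with disjoint supports satisfy
`(1 - c) (1 - v) = 0`, that is, they are never both nontrivial on a common component. -/
def DisjointKill (R : Perm α → V →ₗ[ℝ] V) : Prop :=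
  ∀ p : Fin 7 ↪ α, (1 - R (swap (p 0) (p 1) * swap (p 1) (p 2))) *
    (1 - R (swap (p 3) (p 4) * swap (p 5) (p 6))) = 0

lemma DisjointKill.restr {R : Perm α → V →ₗ[ℝ] V} (H : DisjointKill R) (W : Submodule ℝ V)
    (hW : ∀ g, sign g = 1 → ∀ x ∈ W, R g x ∈ W) : DisjointKill (AltRep.restr R W) := by
  intro p
  have ne : ∀ i j : Fin 7, i ≠ j → p i ≠ p j := fun i j h => p.injective.ne h
  have s1 : sign (swap (p 0) (p 1) * swap (p 1) (p 2)) = 1 := by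
    simp [sign_swap (ne 0 1 (by decide)), sign_swap (ne 1 2 (by decide))]
  have s2 : sign (swap (p 3) (p 4) * swap (p 5) (p 6)) = 1 := by
    simp [sign_swap (ne 3 4 (by decide)), sign_swap (ne 5 6 (by decide))]
  ext x
  have := LinearMap.congr_fun (H p) x
  simp only [Module.End.mul_apply, LinearMap.sub_apply, Module.End.one_apply, map_sub,
    Submodule.coe_sub, restr_coe _ _ _ (hW _ s1), restr_coe _ _ _ (hW _ s2)] at this ⊢
  exact this

end pull
end AltRep

/-! ### Consequences of the vanishing of disjoint products -/

namespace AltRep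
section std
variable {α : Type} [Fintype α] [DecidableEq α]
  {V : Type} [NormedAddCommGroup V] [InnerProductSpace ℝ V] {R : Perm α → V →ₗ[ℝ] V}

lemma sign_two_swaps {a b c d : α} (h : a ≠ b) (h' : c ≠ d) : sign (swap a b * swap c d) = 1 := by
  simp [sign_swap h, sign_swap h']

lemma IsEvenRep.mul_apply (hR : IsEvenRep R) {g h : Perm α} (hg : sign g = 1) (hh : sign h = 1)
    (x : V) : R (g * h) x = R g (R h x) := by
  rw [hR.mul g h hg hh]; rfl

lemma DisjointKill.of_nodup (H : DisjointKill R) {a b c d e f g : α}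
    (h : [a, b, c, d, e, f, g].Nodup) :
    (1 - R (swap a b * swap b c)) * (1 - R (swap d e * swap f g)) = 0 :=
  H ⟨([a, b, c, d, e, f, g]).get, List.nodup_iff_injective_get.1 h⟩

/-- A vector negated by `(0 1)(a b)` is fixed by every 3-cycle disjoint from `0, 1, a, b`. -/
lemma fix_three (H : DisjointKill R) {o i a b c d e : α} (h : [o, i, a, b, c, d, e].Nodup) {y : V}
    (hy : R (swap o i * swap a b) y = -y) : R (swap c d * swap d e) y = y := by
  have h' : [c, d, e, o, i, a, b].Nodup := by
    simp only [List.nodup_cons, List.mem_cons, List.not_mem_nil] at h ⊢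
    grind
  have := LinearMap.congr_fun (H.of_nodup h') y
  simp only [Module.End.mul_apply, LinearMap.sub_apply, Module.End.one_apply, hy, map_sub, map_neg,
    LinearMap.zero_apply] at this
  have h2 : (2 : ℝ) • (y - R (swap c d * swap d e) y) = 0 := by
    rw [two_smul, ← this]; abel
  exact (sub_eq_zero.1 ((smul_eq_zero.1 h2).resolve_left two_ne_zero)).symm

/-- The 3-cycle `(c d e)` fixes `y` by `fix_three` and conjugates `(o i)(c d)` to `(o i)(d e)`. -/
lemma neg_rule (hR : IsEvenRep R) (H : DisjointKill R) {o i a b c d e : α}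
    (h : [o, i, a, b, c, d, e].Nodup) {y : V}
    (hy : R (swap o i * swap a b) y = -y) (hy' : R (swap o i * swap c d) y = -y) :
    R (swap o i * swap d e) y = -y := by
  have h3 := fix_three H h hy
  simp only [List.nodup_cons, List.mem_cons, List.not_mem_nil, not_or] at h
  obtain ⟨⟨hoi, hoa, hob, hoc, hod, hoe, -⟩, ⟨hia, hib, hic, hid, hie, -⟩, -, -,
    ⟨hcd, hce, -⟩, ⟨hde, -⟩, -⟩ := h
  have e1 : (swap o i * swap d e) * (swap c d * swap d e) =
      (swap c d * swap d e) * (swap o i * swap c d) := by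
    ext x
    simp only [Perm.mul_apply, swap_apply_def]
    grind
  have := congrArg (fun g => R g y) e1
  beta_reduce at this
  rw [hR.mul_apply (sign_two_swaps hoi hde) (sign_two_swaps hcd hde),
    hR.mul_apply (sign_two_swaps hcd hde) (sign_two_swaps hoi hcd), h3, hy', map_neg, h3] at this
  exact this

/-- If `(p₀ p₁)(p₂ p₃)` and `(p₀ p₁)(p₄ p₅)` negate `y`, then so does `(p₀ p₁)(a b)` for all further
points `a ≠ b`: repeated application of `neg_rule`. -/
lemma neg_all (hR : IsEvenRep R) (H : DisjointKill R) (p : Fin 7 ↪ α) {y : V}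
    (h1 : R (swap (p 0) (p 1) * swap (p 2) (p 3)) y = -y)
    (h2 : R (swap (p 0) (p 1) * swap (p 4) (p 5)) y = -y)
    {a b : α} (hab : a ≠ b) (ha0 : a ≠ p 0) (ha1 : a ≠ p 1) (hb0 : b ≠ p 0) (hb1 : b ≠ p 1) :
    R (swap (p 0) (p 1) * swap a b) y = -y := by
  have ne : ∀ i j : Fin 7, i ≠ j → p i ≠ p j := fun i j h => p.injective.ne h
  have n01 := ne 0 1 (by decide)
  have n02 := ne 0 2 (by decide)
  have n03 := ne 0 3 (by decide)
  have n04 := ne 0 4 (by decide)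
  have n05 := ne 0 5 (by decide)
  have n06 := ne 0 6 (by decide)
  have n12 := ne 1 2 (by decide)
  have n13 := ne 1 3 (by decide)
  have n14 := ne 1 4 (by decide)
  have n15 := ne 1 5 (by decide)
  have n16 := ne 1 6 (by decide)
  have n23 := ne 2 3 (by decide)
  have n24 := ne 2 4 (by decide)
  have n25 := ne 2 5 (by decide)
  have n26 := ne 2 6 (by decide)
  have n34 := ne 3 4 (by decide)
  have n35 := ne 3 5 (by decide)
  have n36 := ne 3 6 (by decide)
  have n45 := ne 4 5 (by decide)
  have n46 := ne 4 6 (by decide)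
  have n56 := ne 5 6 (by decide)
  clear ne
  generalize p 0 = q0 at *
  generalize p 1 = q1 at *
  generalize p 2 = q2 at *
  generalize p 3 = q3 at *
  generalize p 4 = q4 at *
  generalize p 5 = q5 at *
  generalize p 6 = q6 at *
  clear p
  let P : α → α → Prop := fun a b => R (swap q0 q1 * swap a b) y = -y
  have symm : ∀ a b, P a b → P b a := fun a b h => by
    simpa only [P, swap_comm a b] using h
  have rule : ∀ a b c d e, [q0, q1, a, b, c, d, e].Nodup → P a b → P c d → P d e :=
    fun a b c d e h h1 h2 => neg_rule hR H h h1 h2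
  simp only [List.nodup_cons, List.mem_cons, List.not_mem_nil] at rule
  change P q2 q3 at h1
  change P q4 q5 at h2
  change P a b
  clear_value P
  have out : ∀ e, e ≠ q0 → e ≠ q1 → e ≠ q2 → e ≠ q3 → e ≠ q4 → e ≠ q5 →
      P q2 e ∧ P q3 e ∧ P q4 e ∧ P q5 e := by
    intro e e0 e1 e2 e3 e4 e5
    refine ⟨rule q4 q5 q3 q2 e (by grind) h2 (symm _ _ h1), rule q4 q5 q2 q3 e (by grind) h2 h1,
      rule q2 q3 q5 q4 e (by grind) h1 (symm _ _ h2), rule q2 q3 q4 q5 e (by grind) h1 h2⟩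
  obtain ⟨g2, g3, g4, g5⟩ := out q6 n06.symm n16.symm n26.symm n36.symm n46.symm n56.symm
  have k25 : P q2 q5 := rule q4 q6 q3 q2 q5 (by grind) g4 (symm _ _ h1)
  have k35 : P q3 q5 := rule q4 q6 q2 q3 q5 (by grind) g4 h1
  have k24 : P q2 q4 := rule q5 q6 q3 q2 q4 (by grind) g5 (symm _ _ h1)
  have k34 : P q3 q4 := rule q5 q6 q2 q3 q4 (by grind) g5 h1
  have out2 : ∀ e e', e ≠ e' → e ≠ q0 → e ≠ q1 → e ≠ q2 → e ≠ q3 → e ≠ q4 → e ≠ q5 →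
      e' ≠ q0 → e' ≠ q1 → e' ≠ q2 → e' ≠ q3 → e' ≠ q4 → e' ≠ q5 → P e e' := by
    intro e e' hee e0 e1 e2 e3 e4 e5 f0 f1 f2 f3 f4 f5
    exact rule q4 q5 q2 e e' (by grind) h2 (out e e0 e1 e2 e3 e4 e5).1
  clear rule
  by_cases ha : a = q2 ∨ a = q3 ∨ a = q4 ∨ a = q5
  · by_cases hb : b = q2 ∨ b = q3 ∨ b = q4 ∨ b = q5
    · clear out out2
      rcases ha with rfl | rfl | rfl | rfl <;> rcases hb with rfl | rfl | rfl | rfl <;>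
        first | exact absurd rfl hab | assumption | (apply symm; assumption)
    · have := out b
      grind
  · by_cases hb : b = q2 ∨ b = q3 ∨ b = q4 ∨ b = q5
    · have := out a
      grind
    · grind
end std
end AltRep

/-! ### Moving points by even permutations -/

namespace AltRep
section std
variable {α : Type} [Fintype α] [DecidableEq α]
  {V : Type} [NormedAddCommGroup V] [InnerProductSpace ℝ V] {R : Perm α → V →ₗ[ℝ] V}

lemma sign_cases (g : Perm α) : sign g = 1 ∨ sign g = -1 := Int.units_eq_one_or _

/-- If every `(o i)(a b)` negates `y`, then even permutations of the remaining points fix `y`, and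
`(o i)` times an odd one negates it. -/
lemma fix_stab_aux (hR : IsEvenRep R) {o i : α} (hoi : o ≠ i) {y : V}
    (hy : ∀ a b, a ≠ b → a ≠ o → a ≠ i → b ≠ o → b ≠ i → R (swap o i * swap a b) y = -y)
    (σ : Perm {x // x ≠ o ∧ x ≠ i}) :
    (sign σ = 1 → R (ofSubtype σ) y = y) ∧ (sign σ = -1 → R (swap o i * ofSubtype σ) y = -y) := by
  induction σ using swap_induction_on with
  | one => simp [hR.one]
  | swap_mul f a b hab ih =>
    have hab' : (a : α) ≠ b := fun h => hab (Subtype.ext h)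
    have key := hy a b hab' a.2.1 a.2.2 b.2.1 b.2.2
    have hs : sign (swap o i * swap (a : α) b) = 1 := sign_two_swaps hoi hab'
    rw [map_mul sign, map_mul ofSubtype, ofSubtype_swap_eq, sign_swap hab]
    constructor
    · intro h
      have hf : sign f = -1 := by
        rcases sign_cases f with h' | h' <;> simp_all
      have e : swap (a : α) b * ofSubtype f =
          (swap o i * swap (a : α) b) * (swap o i * ofSubtype f) := by
        have : swap o i * swap (a : α) b * swap o i = swap (a : α) b := by
          have h1 := a.2
          have h2 := b.2
          ext x
          simp only [Perm.mul_apply, swap_apply_def]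
          grind
        rw [← mul_assoc, this]
      rw [e, hR.mul_apply hs (by simp [sign_swap hoi, sign_ofSubtype, hf]), ih.2 hf, map_neg, key,
        neg_neg]
    · intro h
      have hf : sign f = 1 := by
        rcases sign_cases f with h' | h' <;> simp_all
      rw [← mul_assoc, hR.mul_apply hs (by simp [sign_ofSubtype, hf]), ih.1 hf, key]

lemma fix_stab (hR : IsEvenRep R) {o i : α} (hoi : o ≠ i) {y : V}
    (hy : ∀ a b, a ≠ b → a ≠ o → a ≠ i → b ≠ o → b ≠ i → R (swap o i * swap a b) y = -y)
    {g : Perm α} (hg : sign g = 1) (ho : g o = o) (hi : g i = i) : R g y = y := by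
  have h1 : ∀ x, (x ≠ o ∧ x ≠ i) ↔ (g x ≠ o ∧ g x ≠ i) := fun x => by
    have a1 := g.injective.ne_iff (x := x) (y := o)
    have a2 := g.injective.ne_iff (x := x) (y := i)
    rw [ho] at a1
    rw [hi] at a2
    rw [a1, a2]
  have h2 : ofSubtype (g.subtypePerm (p := fun x => x ≠ o ∧ x ≠ i) fun x => (h1 x).symm) = g :=
    ofSubtype_subtypePerm _ (fun x hx => ⟨by rintro rfl; exact hx ho, by rintro rfl; exact hx hi⟩)
  rw [← h2]
  refine (fix_stab_aux hR hoi hy _).1 ?_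
  rw [← sign_ofSubtype, h2, hg]

lemma exists_even (hc : 5 ≤ Fintype.card α) (x z : Fin 3 → α) (hx : Function.Injective x)
    (hz : Function.Injective z) : ∃ g : Perm α, sign g = 1 ∧ ∀ i, g (x i) = z i := by
  obtain ⟨σ, hσ⟩ := Perm.exists_extending_pair x z hx hz
  rcases sign_cases σ with h | h
  · exact ⟨σ, h, hσ⟩
  have : 1 < (Finset.univ \ Finset.univ.image x).card := by
    rw [Finset.card_sdiff_of_subset (Finset.subset_univ _), Finset.card_image_of_injective _ hx]
    simp; omega
  obtain ⟨e, he, f, hf, hef⟩ := Finset.one_lt_card.1 this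
  simp only [Finset.mem_sdiff, Finset.mem_univ, Finset.mem_image, true_and, not_exists] at he hf
  refine ⟨σ * swap e f, by simp [h, sign_swap hef], fun i => ?_⟩
  rw [Perm.mul_apply, swap_apply_of_ne_of_ne (he i) (hf i), hσ]

lemma card_ge (p : Fin 7 ↪ α) : 7 ≤ Fintype.card α := by
  simpa using Fintype.card_le_of_embedding p

lemma exists_even_pair (p : Fin 7 ↪ α) {i j : α} (hij : i ≠ j) :
    ∃ g : Perm α, sign g = 1 ∧ g (p 0) = i ∧ g (p 1) = j := by
  obtain ⟨k, hk⟩ : ∃ k, k ∉ ({i, j} : Finset α) := by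
    by_contra! h
    have := Finset.card_le_card (fun x _ => h x : (Finset.univ : Finset α) ⊆ _)
    have h2 := Finset.card_le_two (a := i) (b := j)
    have h3 := card_ge p
    rw [Finset.card_univ] at this
    omega
  obtain ⟨g, hg, h⟩ := exists_even (by have := card_ge p; omega) ![p 0, p 1, p 2] ![i, j, k]
    (by
      have : ![p 0, p 1, p 2] = fun i : Fin 3 => p ⟨i, by omega⟩ := by
        ext i; fin_cases i <;> rfl
      rw [this]
      intro a b h
      have := p.injective h
      simp at this; omega)
    (by
      simp only [Finset.mem_insert, Finset.mem_singleton] at hk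
      intro a b h
      fin_cases a <;> fin_cases b <;> simp at h ⊢ <;> grind)
  exact ⟨g, hg, h 0, h 1⟩

/-- The vectors `Y (g p₀) (g p₁) = g y`, for `g` even, are well defined because `y` is fixed by the even
permutations fixing `p₀` and `p₁`. -/
lemma exists_family (hR : IsEvenRep R) (H : DisjointKill R) (p : Fin 7 ↪ α) {y : V}
    (h1 : R (swap (p 0) (p 1) * swap (p 2) (p 3)) y = -y)
    (h2 : R (swap (p 0) (p 1) * swap (p 4) (p 5)) y = -y) :
    ∃ Y : α → α → V, Y (p 0) (p 1) = y ∧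
      (∀ g, sign g = 1 → ∀ i j, R g (Y i j) = Y (g i) (g j)) ∧ (∀ i j, Y j i = - Y i j) := by
  classical
  have n01 : p 0 ≠ p 1 := p.injective.ne (by decide)
  have hneg := fun a b hab ha0 ha1 hb0 hb1 => neg_all hR H p h1 h2 (a := a) (b := b) hab ha0 ha1
    hb0 hb1
  let G : α → α → Perm α := fun i j =>
    if h : i ≠ j then (exists_even_pair p h).choose else 1
  have hG : ∀ i j, i ≠ j → sign (G i j) = 1 ∧ G i j (p 0) = i ∧ G i j (p 1) = j := by
    intro i j h
    simp only [G, dif_pos h]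
    exact (exists_even_pair p h).choose_spec
  let Y : α → α → V := fun i j => if i = j then 0 else R (G i j) y
  have hY : ∀ g, sign g = 1 → Y (g (p 0)) (g (p 1)) = R g y := by
    intro g hg
    have hne : g (p 0) ≠ g (p 1) := g.injective.ne n01
    obtain ⟨a1, a2, a3⟩ := hG _ _ hne
    simp only [Y, if_neg hne]
    set k := G (g (p 0)) (g (p 1))
    have hk : sign (g⁻¹ * k) = 1 := by simp [hg, a1]
    have : k = g * (g⁻¹ * k) := by group
    rw [this, hR.mul_apply hg hk, fix_stab hR n01 hneg hk]
    · simp [a2]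
    · simp [a3]
  have hY0 : ∀ i, Y i i = 0 := fun i => by simp [Y]
  have hE : ∀ g, sign g = 1 → ∀ i j, R g (Y i j) = Y (g i) (g j) := by
    intro g hg i j
    by_cases hij : i = j
    · subst hij; simp [hY0]
    · obtain ⟨k, hk, rfl, rfl⟩ := exists_even_pair p hij
      rw [hY k hk, ← Perm.mul_apply, ← Perm.mul_apply, hY (g * k) (by simp [hg, hk]),
        hR.mul_apply hg hk]
  refine ⟨Y, by simpa [hR.one] using hY 1 (by simp), hE, ?_⟩
  intro i j
  by_cases hij : i = j
  · subst hij; simp [hY0]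
  · obtain ⟨k, hk, rfl, rfl⟩ := exists_even_pair p hij
    have hs : sign (swap (p 0) (p 1) * swap (p 2) (p 3)) = 1 :=
      sign_two_swaps n01 (p.injective.ne (by decide))
    have := hY (k * (swap (p 0) (p 1) * swap (p 2) (p 3))) (by rw [map_mul, hk, hs]; rfl)
    rw [hR.mul_apply hk hs, h1, map_neg, ← hY k hk] at this
    simpa [swap_apply_def] using this

set_option maxRecDepth 10000 in
/-- A double transposition as a word in the 3-cycles `(0 1 2)` and `(2 3 4)`. -/
lemma word_aux : (swap 0 1 * swap 2 3 : Perm (Fin 7)) =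
    (swap 0 1 * swap 1 2) * ((swap 2 3 * swap 3 4) * ((swap 0 1 * swap 1 2) *
    ((swap 0 1 * swap 1 2) * ((swap 2 3 * swap 3 4) * ((swap 2 3 * swap 3 4) *
    (swap 0 1 * swap 1 2)))))) := by
  decide

/-- The family of `exists_family` satisfies the cocycle relation `Y i j + Y j k = Y i k`. -/
lemma exists_std (hR : IsEvenRep R) (H : DisjointKill R) (p : Fin 7 ↪ α) {y : V}
    (h1 : R (swap (p 0) (p 1) * swap (p 2) (p 3)) y = -y)
    (h2 : R (swap (p 0) (p 1) * swap (p 4) (p 5)) y = -y) :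
    ∃ Y : α → α → V, Y (p 0) (p 1) = y ∧
      (∀ g, sign g = 1 → ∀ i j, R g (Y i j) = Y (g i) (g j)) ∧
      (∀ i j k, Y i j + Y j k = Y i k) := by
  obtain ⟨Y, hy, hE, hA⟩ := exists_family hR H p h1 h2
  refine ⟨Y, hy, hE, ?_⟩
  have ne : ∀ i j : Fin 7, i ≠ j → p i ≠ p j := fun i j h => p.injective.ne h
  have hY0 : ∀ i, Y i i = 0 := fun i => by
    have := hA i i
    have h2 : (2 : ℝ) • Y i i = 0 := by rw [two_smul]; nth_rw 1 [this]; simp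
    exact (smul_eq_zero.1 h2).resolve_left two_ne_zero
  have s01_23 : sign (swap (p 0) (p 1) * swap (p 2) (p 3)) = 1 :=
    sign_two_swaps (ne 0 1 (by decide)) (ne 2 3 (by decide))
  have s01_45 : sign (swap (p 0) (p 1) * swap (p 4) (p 5)) = 1 :=
    sign_two_swaps (ne 0 1 (by decide)) (ne 4 5 (by decide))
  -- vectors satisfying the two negation relations are fixed by even permutations fixing `0, 1`
  have fixL : ∀ z : V, R (swap (p 0) (p 1) * swap (p 2) (p 3)) z = -z →
      R (swap (p 0) (p 1) * swap (p 4) (p 5)) z = -z →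
      ∀ g, sign g = 1 → g (p 0) = p 0 → g (p 1) = p 1 → R g z = z := fun z z1 z2 g hg g0 g1 =>
    fix_stab hR (ne 0 1 (by decide))
      (fun a b hab ha0 ha1 hb0 hb1 => neg_all hR H p z1 z2 hab ha0 ha1 hb0 hb1) hg g0 g1
  let s : α → V := fun k => Y (p 0) k - Y (p 1) k
  have q1 : R (swap (p 0) (p 1) * swap (p 2) (p 3)) (s (p 2) + s (p 3)) = -(s (p 2) + s (p 3)) := by
    simp [s, hE _ s01_23, swap_apply_def]
  have q2 : R (swap (p 0) (p 1) * swap (p 4) (p 5)) (s (p 2) + s (p 3)) = -(s (p 2) + s (p 3)) := by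
    simp [s, hE _ s01_45, swap_apply_def]
    abel
  have f1 := fixL _ q1 q2 (swap (p 2) (p 3) * swap (p 3) (p 4))
    (sign_two_swaps (ne 2 3 (by decide)) (ne 3 4 (by decide)))
    (by simp [swap_apply_def]) (by simp [swap_apply_def])
  have sgn1 := sign_two_swaps (ne 2 3 (by decide)) (ne 3 4 (by decide))
  have sgn2 := sign_two_swaps (ne 2 4 (by decide)) (ne 4 3 (by decide))
  have f2 := fixL _ q1 q2 (swap (p 2) (p 4) * swap (p 4) (p 3)) sgn2
    (by simp [swap_apply_def]) (by simp [swap_apply_def])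
  have f1' : s (p 3) + s (p 4) = s (p 2) + s (p 3) := by
    rw [← f1]; simp [s, hE _ sgn1, swap_apply_def]
  have f2' : s (p 4) + s (p 2) = s (p 2) + s (p 3) := by
    rw [← f2]; simp [s, hE _ sgn2, swap_apply_def]
  have s23 : s (p 3) = s (p 2) := by
    have a1 : s (p 4) = s (p 2) := by
      rw [add_comm] at f1'; exact add_right_cancel f1'
    have a2 : s (p 4) = s (p 3) := by
      rw [add_comm] at f2'; exact add_left_cancel f2'
    rw [← a2, a1]
  have half : ∀ f : V →ₗ[ℝ] V, f (s (p 2) + s (p 3)) = -(s (p 2) + s (p 3)) →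
      f (s (p 2)) = - s (p 2) := by
    intro f hf
    rw [s23, ← two_smul ℝ, map_smul, ← smul_neg] at hf
    exact smul_right_injective V (two_ne_zero (α := ℝ)) hf
  have z1 : R (swap (p 0) (p 1) * swap (p 2) (p 3)) (y - s (p 2)) = -(y - s (p 2)) := by
    rw [map_sub, h1, half _ q1]; abel
  have z2 : R (swap (p 0) (p 1) * swap (p 4) (p 5)) (y - s (p 2)) = -(y - s (p 2)) := by
    rw [map_sub, h2, half _ q2]; abel
  have sA := sign_two_swaps (ne 0 1 (by decide)) (ne 1 2 (by decide))
  have zB := fixL _ z1 z2 (swap (p 2) (p 3) * swap (p 3) (p 4)) sgn1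
    (by simp [swap_apply_def]) (by simp [swap_apply_def])
  have zA : R (swap (p 0) (p 1) * swap (p 1) (p 2)) (y - s (p 2)) = y - s (p 2) := by
    rw [← hy]
    simp [s, hE _ sA, swap_apply_def]
    rw [hA (p 0) (p 1), hA (p 0) (p 2)]
    abel
  -- `(0 1)(2 3)` is a word in `(0 1 2)` and `(2 3 4)`, so it fixes `y - s 2`
  have word : swap (p 0) (p 1) * swap (p 2) (p 3) =
      (swap (p 0) (p 1) * swap (p 1) (p 2)) * ((swap (p 2) (p 3) * swap (p 3) (p 4)) *
      ((swap (p 0) (p 1) * swap (p 1) (p 2)) * ((swap (p 0) (p 1) * swap (p 1) (p 2)) *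
      ((swap (p 2) (p 3) * swap (p 3) (p 4)) * ((swap (p 2) (p 3) * swap (p 3) (p 4)) *
      (swap (p 0) (p 1) * swap (p 1) (p 2))))))) := by
    simp only [← embHom_swap, ← map_mul]
    exact congrArg (embHom p) word_aux
  have zfix : R (swap (p 0) (p 1) * swap (p 2) (p 3)) (y - s (p 2)) = y - s (p 2) := by
    have mulf : ∀ g h, sign g = 1 → R g (y - s (p 2)) = y - s (p 2) →
        (sign h = 1 ∧ R h (y - s (p 2)) = y - s (p 2)) →
        (sign (g * h) = 1 ∧ R (g * h) (y - s (p 2)) = y - s (p 2)) := by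
      rintro g h hg hg' ⟨hh, hh'⟩
      exact ⟨by rw [map_mul, hg, hh]; rfl, by rw [hR.mul_apply hg hh, hh', hg']⟩
    rw [word]
    exact (mulf _ _ sA zA (mulf _ _ sgn1 zB (mulf _ _ sA zA (mulf _ _ sA zA (mulf _ _ sgn1 zB
      (mulf _ _ sgn1 zB ⟨sA, zA⟩)))))).2
  have z0 : y - s (p 2) = 0 := by
    rw [zfix, eq_neg_iff_add_eq_zero, ← two_smul ℝ] at z1
    exact (smul_eq_zero.1 z1).resolve_left two_ne_zero
  have base : Y (p 0) (p 1) + Y (p 1) (p 2) = Y (p 0) (p 2) := by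
    rw [hy, sub_eq_zero.1 z0]; simp [s]
  intro i j k
  by_cases hij : i = j
  · subst hij; simp [hY0]
  by_cases hjk : j = k
  · subst hjk; simp [hY0]
  by_cases hik : i = k
  · subst hik; rw [hA i j, hY0]; simp
  obtain ⟨g, hg, h⟩ := exists_even (by have := card_ge p; omega) ![p 0, p 1, p 2] ![i, j, k]
    (by
      intro a b h
      fin_cases a <;> fin_cases b <;> simp at h ⊢)
    (by
      intro a b h
      fin_cases a <;> fin_cases b <;> simp at h ⊢ <;> grind)
  have g0 : g (p 0) = i := h 0
  have g1 : g (p 1) = j := h 1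
  have g2 : g (p 2) = k := h 2
  have := congrArg (R g) base
  rwa [map_add, hE g hg, hE g hg, hE g hg, g0, g1, g2] at this
end std
end AltRep

/-! ### The standard family -/

namespace AltRep
section std
variable {α : Type} [Fintype α] [DecidableEq α]
  {V : Type} [NormedAddCommGroup V] [InnerProductSpace ℝ V] {R : Perm α → V →ₗ[ℝ] V}

/-- An equivariant family of nonzero vectors `Y i j` playing the role of `e_j - e_i`; it spans a copy
of the standard representation, of dimension `card α - 1`. -/
structure IsStdFamily (R : Perm α → V →ₗ[ℝ] V) (Y : α → α → V) : Prop where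
  equi : ∀ g, sign g = 1 → ∀ i j, R g (Y i j) = Y (g i) (g j)
  add : ∀ i j k, Y i j + Y j k = Y i k
  ne_zero : ∀ i j, i ≠ j → Y i j ≠ 0

lemma IsStdFamily.self {Y : α → α → V} (h : IsStdFamily R Y) (i : α) : Y i i = 0 := by
  simpa using h.add i i i

lemma IsStdFamily.neg {Y : α → α → V} (h : IsStdFamily R Y) (i j : α) : Y j i = -Y i j := by
  rw [eq_neg_iff_add_eq_zero, h.add, h.self]

lemma IsStdFamily.sub {Y : α → α → V} (h : IsStdFamily R Y) (o i j : α) :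
    Y o j - Y o i = Y i j := by
  rw [← h.add o i j]; abel

/-- If a double transposition acts nontrivially, there is a nonzero vector negated by both
`(p₀ p₁)(p₂ p₃)` and `(p₀ p₁)(p₄ p₅)`, and its orbit is a standard family. -/
lemma exists_stdFamily (hR : IsEvenRep R) (H : DisjointKill R) (p : Fin 7 ↪ α)
    (hv : R (swap (p 0) (p 1) * swap (p 2) (p 3)) ≠ 1) :
    ∃ Y : α → α → V, IsStdFamily R Y := by
  have ne : ∀ i j : Fin 7, i ≠ j → p i ≠ p j := fun i j h => p.injective.ne h
  have sv := sign_two_swaps (ne 0 1 (by decide)) (ne 2 3 (by decide))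
  have sw := sign_two_swaps (ne 0 1 (by decide)) (ne 4 5 (by decide))
  have su := sign_two_swaps (ne 2 3 (by decide)) (ne 4 5 (by decide))
  have sg := sign_two_swaps (ne 0 2 (by decide)) (ne 1 3 (by decide))
  obtain ⟨y, hy0, h1, h2⟩ : ∃ y, y ≠ 0 ∧ R (swap (p 0) (p 1) * swap (p 2) (p 3)) y = -y ∧
      R (swap (p 0) (p 1) * swap (p 4) (p 5)) y = -y := by
    have vv : (swap (p 0) (p 1) * swap (p 2) (p 3)) * (swap (p 0) (p 1) * swap (p 2) (p 3)) = 1 := by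
      simp only [← embHom_swap, ← map_mul]
      rw [← map_one (embHom p)]
      exact congrArg (embHom p) (by decide)
    have ww : (swap (p 0) (p 1) * swap (p 4) (p 5)) * (swap (p 0) (p 1) * swap (p 4) (p 5)) = 1 := by
      simp only [← embHom_swap, ← map_mul]
      rw [← map_one (embHom p)]
      exact congrArg (embHom p) (by decide)
    have vw : (swap (p 0) (p 1) * swap (p 2) (p 3)) * (swap (p 0) (p 1) * swap (p 4) (p 5)) =
        (swap (p 0) (p 1) * swap (p 4) (p 5)) * (swap (p 0) (p 1) * swap (p 2) (p 3)) := by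
      simp only [← embHom_swap, ← map_mul]
      exact congrArg (embHom p) (by decide)
    have wv : swap (p 2) (p 3) * swap (p 4) (p 5) =
        (swap (p 0) (p 1) * swap (p 4) (p 5)) * (swap (p 0) (p 1) * swap (p 2) (p 3)) := by
      simp only [← embHom_swap, ← map_mul]
      exact congrArg (embHom p) (by decide)
    have gv : (swap (p 0) (p 1) * swap (p 2) (p 3)) * (swap (p 0) (p 2) * swap (p 1) (p 3)) =
        (swap (p 0) (p 2) * swap (p 1) (p 3)) * (swap (p 0) (p 1) * swap (p 2) (p 3)) := by
      simp only [← embHom_swap, ← map_mul]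
      exact congrArg (embHom p) (by decide)
    have gw : (swap (p 0) (p 1) * swap (p 4) (p 5)) * (swap (p 0) (p 2) * swap (p 1) (p 3)) =
        (swap (p 0) (p 2) * swap (p 1) (p 3)) * (swap (p 2) (p 3) * swap (p 4) (p 5)) := by
      simp only [← embHom_swap, ← map_mul]
      exact congrArg (embHom p) (by decide)
    obtain ⟨x, hx⟩ : ∃ x, R (swap (p 0) (p 1) * swap (p 2) (p 3)) x ≠ x := by
      by_contra! h
      exact hv (LinearMap.ext h)
    generalize swap (p 0) (p 1) * swap (p 2) (p 3) = v at *
    generalize swap (p 0) (p 1) * swap (p 4) (p 5) = w at *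
    generalize swap (p 2) (p 3) * swap (p 4) (p 5) = u at *
    generalize swap (p 0) (p 2) * swap (p 1) (p 3) = g at *
    have hvx : R v (x - R v x) = -(x - R v x) := by
      rw [map_sub, ← hR.mul_apply sv sv, vv, hR.one]; simp
    have hx0 : x - R v x ≠ 0 := fun h => hx (sub_eq_zero.1 h).symm
    generalize x - R v x = x' at *
    by_cases hw : R w x' = x'
    · refine ⟨R g x', fun h => hx0 ?_, ?_, ?_⟩
      · have := hR.inner g sg x' x'
        rw [h, inner_zero_left] at this
        exact inner_self_eq_zero.1 this.symm
      · rw [← hR.mul_apply sv sg, gv, hR.mul_apply sg sv, hvx, map_neg]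
      · rw [← hR.mul_apply sw sg, gw, hR.mul_apply sg su, wv, hR.mul_apply sw sv, hvx, map_neg, hw,
          map_neg]
    · refine ⟨x' - R w x', fun h => hw (sub_eq_zero.1 h).symm, ?_, ?_⟩
      · rw [map_sub, ← hR.mul_apply sv sw, vw, hR.mul_apply sw sv, hvx, map_neg]; abel
      · rw [map_sub, ← hR.mul_apply sw sw, ww, hR.one]; simp
  obtain ⟨Y, hy, hE, hA⟩ := exists_std hR H p h1 h2
  refine ⟨Y, hE, hA, fun i j hij h => hy0 ?_⟩
  obtain ⟨g, hg, rfl, rfl⟩ := exists_even_pair p hij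
  rw [← hE g hg, hy] at h
  have := hR.inner g hg y y
  rw [h, inner_zero_left] at this
  exact inner_self_eq_zero.1 this.symm

/-- The Gram matrix of the vectors `Y o i` is, up to scaling, that of the vectors `e_i - e_o`. -/
lemma IsStdFamily.inner_eq (hR : IsEvenRep R) (p : Fin 7 ↪ α) {Y : α → α → V}
    (h : IsStdFamily R Y) {o i j : α} (hi : i ≠ o) (hj : j ≠ o) :
    ⟪Y o i, Y o j⟫_ℝ = ⟪Y (p 0) (p 1), Y (p 0) (p 1)⟫_ℝ * (if i = j then 1 else 1 / 2) := by
  have hn : ∀ i j, i ≠ j → ⟪Y i j, Y i j⟫_ℝ = ⟪Y (p 0) (p 1), Y (p 0) (p 1)⟫_ℝ := by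
    intro i j hij
    obtain ⟨g, hg, rfl, rfl⟩ := exists_even_pair p hij
    rw [← h.equi g hg, hR.inner g hg]
  by_cases hij : i = j
  · subst hij; rw [hn o i hi.symm, if_pos rfl, mul_one]
  · have h1 := hn i j hij
    rw [← h.sub o i j, inner_sub_sub_self, hn o i hi.symm, hn o j hj.symm,
      real_inner_comm (Y o i) (Y o j)] at h1
    rw [if_neg hij]
    linarith

lemma IsStdFamily.linearIndependent (hR : IsEvenRep R) (p : Fin 7 ↪ α) {Y : α → α → V}
    (h : IsStdFamily R Y) (o : α) :
    LinearIndependent ℝ (fun i : {i // i ≠ o} => Y o i) := by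
  rw [Fintype.linearIndependent_iff]
  intro c hc
  set N := ⟪Y (p 0) (p 1), Y (p 0) (p 1)⟫_ℝ with hN
  have hN0 : N ≠ 0 := fun h0 => h.ne_zero _ _ (p.injective.ne (by decide : (0 : Fin 7) ≠ 1))
    (inner_self_eq_zero.1 h0)
  have key : ∀ j, c j + ∑ i, c i = 0 := by
    intro j
    have h1 : ⟪∑ i, c i • Y o i, Y o j⟫_ℝ = 0 := by rw [hc, inner_zero_left]
    rw [sum_inner] at h1
    have h2 : ∀ i, ⟪c i • Y o i, Y o j⟫_ℝ = N / 2 * (c i + if i = j then c i else 0) := by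
      intro i
      rw [real_inner_smul_left, h.inner_eq hR p i.2 j.2, ← hN]
      by_cases hij : i = j
      · subst hij; simp; ring
      · have : (i : α) ≠ j := fun h => hij (Subtype.ext h)
        simp [hij, this]; ring
    simp only [h2, ← Finset.mul_sum, Finset.sum_add_distrib, Finset.sum_ite_eq', Finset.mem_univ,
      if_true] at h1
    have := (mul_eq_zero.1 h1).resolve_left (div_ne_zero hN0 two_ne_zero)
    linarith
  have hs : ∑ i, c i = 0 := by
    have h1 : ∑ j, (c j + ∑ i, c i) = 0 := Finset.sum_eq_zero fun j _ => key j
    rw [Finset.sum_add_distrib, Finset.sum_const, nsmul_eq_mul] at h1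
    have h2 : (1 + ((Finset.univ : Finset {i // i ≠ o}).card : ℝ)) * ∑ i, c i = 0 := by linarith
    exact (mul_eq_zero.1 h2).resolve_left (by positivity)
  intro i
  have := key i
  rw [hs] at this
  simpa using this

lemma IsStdFamily.span_eq {Y : α → α → V} (h : IsStdFamily R Y) (o : α) :
    Submodule.span ℝ (Set.range (Function.uncurry Y)) =
      Submodule.span ℝ (Set.range (fun i : {i // i ≠ o} => Y o i)) := by
  apply le_antisymm
  · rw [Submodule.span_le]
    rintro _ ⟨⟨i, j⟩, rfl⟩
    have : ∀ i, Y o i ∈ Submodule.span ℝ (Set.range (fun i : {i // i ≠ o} => Y o i)) := by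
      intro i
      by_cases hi : i = o
      · subst hi; rw [h.self]; exact Submodule.zero_mem _
      · exact Submodule.subset_span ⟨⟨i, hi⟩, rfl⟩
    change Y i j ∈ _
    rw [← h.sub o i j]
    exact Submodule.sub_mem _ (this j) (this i)
  · apply Submodule.span_mono
    rintro _ ⟨i, rfl⟩
    exact ⟨(o, i), rfl⟩

lemma IsStdFamily.finrank_span (hR : IsEvenRep R) (p : Fin 7 ↪ α) {Y : α → α → V}
    (h : IsStdFamily R Y) :
    finrank ℝ (Submodule.span ℝ (Set.range (Function.uncurry Y))) = Fintype.card α - 1 := by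
  rw [h.span_eq (p 0), finrank_span_eq_card (h.linearIndependent hR p (p 0))]
  simp [Fintype.card_subtype_compl]

lemma exists_emb_of_nodup (hc : 7 ≤ Fintype.card α) {a b c d : α} (h : [a, b, c, d].Nodup) :
    ∃ p : Fin 7 ↪ α, p 0 = a ∧ p 1 = b ∧ p 2 = c ∧ p 3 = d := by
  obtain ⟨q⟩ : Nonempty (Fin 7 ↪ α) := Function.Embedding.nonempty_of_card_le (by simpa using hc)
  obtain ⟨σ, hσ⟩ := Perm.exists_extending_pair (fun i : Fin 4 => q (Fin.castLE (by decide) i))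
    ([a, b, c, d]).get (fun i j h => by simpa using q.injective h)
    (List.nodup_iff_injective_get.1 h)
  exact ⟨q.trans σ.toEmbedding, hσ 0, hσ 1, hσ 2, hσ 3⟩

/-- A representation with property `DisjointKill` of dimension less than `card α - 1` is trivial,
because a double transposition acting nontrivially produces a standard family. -/
lemma trivial_of_finrank_lt [FiniteDimensional ℝ V] (hR : IsEvenRep R) (H : DisjointKill R)
    (hc : 7 ≤ Fintype.card α) (hd : finrank ℝ V + 1 < Fintype.card α) {g : Perm α}
    (hg : sign g = 1) : R g = 1 := by
  have h4 : ∀ a b c d, [a, b, c, d].Nodup → R (swap a b * swap c d) = 1 := by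
    intro a b c d hn
    obtain ⟨p, rfl, rfl, rfl, rfl⟩ := exists_emb_of_nodup hc hn
    by_contra hv
    obtain ⟨Y, hY⟩ := exists_stdFamily hR H p hv
    have := Submodule.finrank_le (Submodule.span ℝ (Set.range (Function.uncurry Y)))
    rw [hY.finrank_span hR p] at this
    omega
  -- an auxiliary transposition disjoint from both
  have h2 : ∀ a b c d, a ≠ b → c ≠ d → R (swap a b * swap c d) = 1 := by
    intro a b c d hab hcd
    have : 1 < (Finset.univ \ ({a, b, c, d} : Finset α)).card := by
      rw [Finset.card_sdiff_of_subset (Finset.subset_univ _), Finset.card_univ]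
      have := Finset.card_le_four (a := a) (b := b) (c := c) (d := d)
      omega
    obtain ⟨e, he, f, hf, hef⟩ := Finset.one_lt_card.1 this
    simp only [Finset.mem_sdiff, Finset.mem_univ, Finset.mem_insert, Finset.mem_singleton,
      true_and] at he hf
    have e1 : swap a b * swap c d = (swap a b * swap e f) * (swap e f * swap c d) := by
      rw [mul_assoc, ← mul_assoc (swap e f), swap_mul_self, one_mul]
    rw [e1, hR.mul _ _ (sign_two_swaps hab hef) (sign_two_swaps hef hcd), h4 a b e f (by
      simp only [List.nodup_cons, List.mem_cons, List.not_mem_nil]; grind), h4 e f c d (by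
      simp only [List.nodup_cons, List.mem_cons, List.not_mem_nil]; grind), one_mul]
  obtain ⟨o, i, hoi⟩ : ∃ o i : α, o ≠ i := Fintype.exists_pair_of_one_lt_card (by omega)
  have key : ∀ f : Perm α, (sign f = 1 → R f = 1) ∧ (sign f = -1 → R (swap o i * f) = 1) := by
    intro f
    induction f using swap_induction_on with
    | one => simp [hR.one]
    | swap_mul f a b hab ih =>
      rw [map_mul, sign_swap hab]
      constructor
      · intro h
        have hf : sign f = -1 := by
          rcases sign_cases f with h' | h' <;> simp_all
        have e : swap a b * f = (swap a b * swap o i) * (swap o i * f) := by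
          rw [mul_assoc, ← mul_assoc (swap o i), swap_mul_self, one_mul]
        rw [e, hR.mul _ _ (sign_two_swaps hab hoi) (by simp [sign_swap hoi, hf]), ih.2 hf,
          h2 a b o i hab hoi, one_mul]
      · intro h
        have hf : sign f = 1 := by
          rcases sign_cases f with h' | h' <;> simp_all
        rw [← mul_assoc, hR.mul _ _ (sign_two_swaps hoi hab) hf, ih.1 hf, h2 o i a b hoi hab,
          one_mul]
  exact (key g).1 hg
end std
end AltRep

/-! ### Idempotent matrices and the Klein four-group -/

namespace AltRep
section mat
variable {D : ℕ}

/-- Square complex matrices of size `D`. -/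
abbrev Mat (D : ℕ) : Type := Matrix (Fin D) (Fin D) ℂ

lemma idem_mul {a b : Mat D} (h : Commute a b) (ha : a * a = a) (hb : b * b = b) :
    a * b * (a * b) = a * b := IsIdempotentElem.mul_of_commute h ha hb

lemma toLin_idem {E : Mat D} (h : E * E = E) : IsIdempotentElem (Matrix.toLin' E) := by
  rw [IsIdempotentElem, Module.End.mul_eq_comp, ← Matrix.toLin'_mul, h]

/-- The trace of an idempotent matrix is its rank. -/
lemma trace_idem {E : Mat D} (h : E * E = E) : ∃ k : ℕ, E.trace = k := by
  have h1 := toLin_idem h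
  refine ⟨finrank ℂ (LinearMap.range (Matrix.toLin' E)), ?_⟩
  rw [← LinearMap.IsProj.trace (LinearMap.IsIdempotentElem.isProj_range _ h1),
    Matrix.trace_toLin'_eq]

lemma idem_eq_zero {E : Mat D} (h : E * E = E) (h0 : E.trace = 0) : E = 0 := by
  have h1 := toLin_idem h
  have := LinearMap.IsIdempotentElem.eq_zero_of_trace_eq_zero h1 (by
    rw [Matrix.trace_toLin'_eq]; exact h0)
  simpa using this

/-- The trace of a product of two orthogonal projections is nonnegative, commuting or not:
`tr (P Q) = tr ((Q P)ᴴ (Q P))`. -/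
lemma trace_nonneg_of_idem {P Q : Mat D} (hP : P * P = P) (hQ : Q * Q = Q)
    (hP' : P.conjTranspose = P) (hQ' : Q.conjTranspose = Q) : 0 ≤ (P * Q).trace.re := by
  have : (P * Q).trace = ((Q * P).conjTranspose * (Q * P)).trace := by
    rw [Matrix.conjTranspose_mul, hP', hQ', mul_assoc P, ← mul_assoc Q Q, hQ, ← mul_assoc,
      Matrix.trace_mul_comm (P * Q) P, ← mul_assoc, hP]
  rw [this]
  open ComplexOrder in
  exact (Complex.le_def.1 (Matrix.posSemidef_conjTranspose_mul_self (Q * P)).trace_nonneg).1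

/-- The average of `1, x, …, x ^ (p - 1)`. If `x ^ p = 1`, it is the projection onto the vectors fixed
by `x`; for `z ^ p = 1`, the matrix `avg p (z • x)` is the projection onto the `z⁻¹`-eigenspace
of `x`. -/
noncomputable def avg (p : ℕ) (x : Mat D) : Mat D := (p : ℂ)⁻¹ • ∑ i ∈ Finset.range p, x ^ i

lemma mul_avg {p : ℕ} {x : Mat D} (h : x ^ p = 1) : x * avg p x = avg p x := by
  have h1 := mul_geom_sum x p
  rw [h, sub_self, sub_mul, one_mul, sub_eq_zero] at h1
  rw [avg, mul_smul_comm, h1]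

lemma avg_idem {p : ℕ} (hp : p ≠ 0) {x : Mat D} (h : x ^ p = 1) : avg p x * avg p x = avg p x := by
  have h1 : ∀ i, x ^ i * avg p x = avg p x := by
    intro i
    induction i with
    | zero => simp
    | succ i ih => rw [pow_succ, mul_assoc, mul_avg h, ih]
  conv_lhs => enter [1]; rw [avg]
  rw [smul_mul_assoc, Finset.sum_mul, Finset.sum_congr rfl fun i _ => h1 i, Finset.sum_const,
    Finset.card_range, ← Nat.cast_smul_eq_nsmul ℂ, smul_smul,
    inv_mul_cancel₀ (Nat.cast_ne_zero.2 hp), one_smul]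

lemma smul_pow_eq {p : ℕ} {z : ℂ} (hz : z ^ p = 1) {x : Mat D} (h : x ^ p = 1) :
    (z • x) ^ p = 1 := by rw [smul_pow, hz, h, one_smul]

lemma sum_avg {p : ℕ} {ζ : ℂ} (hζ : IsPrimitiveRoot ζ p) (hp : 1 < p) (x : Mat D) :
    ∑ k ∈ Finset.range p, avg p (ζ ^ k • x) = 1 := by
  simp only [avg, smul_pow, ← Finset.smul_sum]
  rw [Finset.sum_comm]
  have : ∀ i ∈ Finset.range p, ∑ k ∈ Finset.range p, (ζ ^ k) ^ i • x ^ i =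
      if i = 0 then (p : ℂ) • (1 : Mat D) else 0 := by
    intro i hi
    rw [← Finset.sum_smul]
    by_cases h0 : i = 0
    · subst h0; simp
    · have h1 : ζ ^ i ≠ 1 := hζ.pow_ne_one_of_pos_of_lt h0 (Finset.mem_range.1 hi)
      have h2 : ∑ k ∈ Finset.range p, (ζ ^ k) ^ i = 0 := by
        have h3 := mul_geom_sum (ζ ^ i) p
        rw [← pow_mul, mul_comm i p, pow_mul, hζ.pow_eq_one, one_pow, sub_self] at h3
        rw [← (mul_eq_zero.1 h3).resolve_left (sub_ne_zero.2 h1)]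
        exact Finset.sum_congr rfl fun k _ => by rw [← pow_mul, ← pow_mul, mul_comm]
      rw [h2, if_neg h0, zero_smul]
  rw [Finset.sum_congr rfl this, Finset.sum_ite_eq', if_pos (by simp; omega), smul_smul,
    inv_mul_cancel₀ (by norm_cast; omega), one_smul]

lemma semiconj_smul {G X Y : Mat D} (h : SemiconjBy G X Y) (z : ℂ) :
    SemiconjBy G (z • X) (z • Y) := by
  rw [SemiconjBy, mul_smul_comm, smul_mul_assoc, h.eq]

lemma semiconj_avg {p : ℕ} {G X Y : Mat D} (h : SemiconjBy G X Y) :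
    SemiconjBy G (avg p X) (avg p Y) := by
  apply semiconj_smul
  rw [SemiconjBy, Finset.mul_sum, Finset.sum_mul]
  exact Finset.sum_congr rfl fun i _ => (h.pow_right i).eq

lemma trace_semiconj {G G' X Y : Mat D} (hG : G * G' = 1) (h : SemiconjBy G X Y) :
    X.trace = Y.trace := by
  have : Y = G * (X * G') := by rw [← mul_assoc, h.eq, mul_assoc, hG, mul_one]
  rw [this, Matrix.trace_mul_comm, mul_assoc, mul_eq_one_comm.1 hG, mul_one]

/-- The matrices `1, v₁, v₂, v₃` form a (possibly degenerate) Klein four-group. -/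
structure IsKlein (v₁ v₂ v₃ : Mat D) : Prop where
  s1 : v₁ * v₁ = 1
  s2 : v₂ * v₂ = 1
  s3 : v₃ * v₃ = 1
  m12 : v₁ * v₂ = v₃
  m21 : v₂ * v₁ = v₃
  m13 : v₁ * v₃ = v₂
  m31 : v₃ * v₁ = v₂
  m23 : v₂ * v₃ = v₁
  m32 : v₃ * v₂ = v₁

lemma IsKlein.rot {v₁ v₂ v₃ : Mat D} (h : IsKlein v₁ v₂ v₃) : IsKlein v₂ v₃ v₁ :=
  ⟨h.s2, h.s3, h.s1, h.m23, h.m32, h.m21, h.m12, h.m31, h.m13⟩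

lemma IsKlein.twist {v₁ v₂ v₃ : Mat D} (h : IsKlein v₁ v₂ v₃) : IsKlein v₁ (-v₂) (-v₃) := by
  constructor <;> simp [h.s1, h.s2, h.s3, h.m12, h.m21, h.m13, h.m31, h.m23, h.m32]

/-- The projection onto the invariants of the Klein four-group `1, v₁, v₂, v₃`. With two signs changed,
`kp v₁ (-v₂) (-v₃)` is the projection onto the component of the character trivial at `v₁` and `-1` at
`v₂, v₃`. -/
noncomputable def kp (v₁ v₂ v₃ : Mat D) : Mat D := (4 : ℂ)⁻¹ • (1 + v₁ + v₂ + v₃)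

lemma kp_idem {v₁ v₂ v₃ : Mat D} (h : IsKlein v₁ v₂ v₃) :
    kp v₁ v₂ v₃ * kp v₁ v₂ v₃ = kp v₁ v₂ v₃ := by
  simp only [kp, smul_mul_assoc, mul_smul_comm, mul_add, add_mul, h.s1, h.s2, h.s3, h.m12, h.m21,
    h.m13, h.m31, h.m23, h.m32, one_mul, mul_one]
  module

lemma kp_orth {v₁ v₂ v₃ : Mat D} (h : IsKlein v₁ v₂ v₃) :
    kp v₁ (-v₂) (-v₃) * kp v₂ (-v₃) (-v₁) = 0 := by
  simp only [kp, smul_mul_assoc, mul_smul_comm, mul_add, add_mul, mul_neg, neg_mul, h.s1, h.s2,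
    h.s3, h.m12, h.m21, h.m13, h.m31, h.m23, h.m32, one_mul, mul_one]
  module

lemma kp_orth' {v₁ v₂ v₃ : Mat D} (h : IsKlein v₁ v₂ v₃) :
    kp v₂ (-v₃) (-v₁) * kp v₁ (-v₂) (-v₃) = 0 := by
  simp only [kp, smul_mul_assoc, mul_smul_comm, mul_add, add_mul, mul_neg, neg_mul, h.s1, h.s2,
    h.s3, h.m12, h.m21, h.m13, h.m31, h.m23, h.m32, one_mul, mul_one]
  module

lemma kp_sum (v₁ v₂ v₃ : Mat D) : kp v₁ v₂ v₃ + kp v₁ (-v₂) (-v₃) + kp v₂ (-v₃) (-v₁) +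
    kp v₃ (-v₁) (-v₂) = 1 := by
  simp only [kp]
  module

lemma semiconj_kp {G v₁ v₂ v₃ w₁ w₂ w₃ : Mat D} (h1 : SemiconjBy G v₁ w₁) (h2 : SemiconjBy G v₂ w₂)
    (h3 : SemiconjBy G v₃ w₃) : SemiconjBy G (kp v₁ v₂ v₃) (kp w₁ w₂ w₃) :=
  semiconj_smul ((((SemiconjBy.one_right G).add_right h1).add_right h2).add_right h3) _

/-- A Klein four-group with an operator `d`, `d ^ 3 = 1`, permuting `v₁, v₂, v₃` cyclically by
conjugation; equivalently an action of `A₄`. -/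
structure IsTetra (v₁ v₂ v₃ d : Mat D) : Prop extends IsKlein v₁ v₂ v₃ where
  c1 : SemiconjBy d v₁ v₂
  c2 : SemiconjBy d v₂ v₃
  c3 : SemiconjBy d v₃ v₁
  d3 : d ^ 3 = 1

lemma IsTetra.rot {v₁ v₂ v₃ d : Mat D} (h : IsTetra v₁ v₂ v₃ d) : IsTetra v₂ v₃ v₁ d :=
  { h.toIsKlein.rot with c1 := h.c2, c2 := h.c3, c3 := h.c1, d3 := h.d3 }

lemma IsTetra.k1 {v₁ v₂ v₃ d : Mat D} (h : IsTetra v₁ v₂ v₃ d) :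
    SemiconjBy d (kp v₁ (-v₂) (-v₃)) (kp v₂ (-v₃) (-v₁)) :=
  semiconj_kp h.c1 h.c2.neg_right h.c3.neg_right

/-- The operators `d` and `d ^ 2` move the component of a nontrivial Klein character to a different
one, so their traces on it vanish. -/
lemma IsTetra.trace_mul_k1 {v₁ v₂ v₃ d f : Mat D} (h : IsTetra v₁ v₂ v₃ d)
    (f1 : Commute f v₁) (f2 : Commute f v₂) (f3 : Commute f v₃) :
    (f * d * kp v₁ (-v₂) (-v₃)).trace = 0 ∧ (f * d ^ 2 * kp v₁ (-v₂) (-v₃)).trace = 0 := by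
  have hf : Commute f (kp v₁ (-v₂) (-v₃)) := semiconj_kp f1 f2.neg_right f3.neg_right
  set k₁ := kp v₁ (-v₂) (-v₃) with hk1
  have ki : k₁ * k₁ = k₁ := kp_idem h.toIsKlein.twist
  have h12 := h.k1
  have h23 := h.rot.k1
  have h31 := h.rot.rot.k1
  have o12 := kp_orth h.toIsKlein
  have o31 := kp_orth h.rot.rot.toIsKlein
  rw [← hk1] at h12 h31 o12 o31
  set k₂ := kp v₂ (-v₃) (-v₁)
  set k₃ := kp v₃ (-v₁) (-v₂)
  have h13 : d ^ 2 * k₁ = k₃ * d ^ 2 := by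
    rw [pow_two, mul_assoc, h12.eq, ← mul_assoc, h23.eq, mul_assoc]
  have o13 : k₁ * k₃ = 0 := by
    have := kp_orth' h.rot.rot.toIsKlein
    exact this
  constructor
  · rw [← ki, ← mul_assoc, Matrix.trace_mul_comm, mul_assoc f, h12.eq, ← mul_assoc f, ← mul_assoc,
      ← mul_assoc, ← hf.eq, mul_assoc f, o12]
    simp
  · rw [← ki, ← mul_assoc, Matrix.trace_mul_comm, mul_assoc f, h13, ← mul_assoc f, ← mul_assoc,
      ← mul_assoc, ← hf.eq, mul_assoc f, o13]
    simp

lemma IsTetra.trace_k_eq {v₁ v₂ v₃ d f : Mat D} (h : IsTetra v₁ v₂ v₃ d) (fd : Commute f d) :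
    (f * kp v₂ (-v₃) (-v₁)).trace = (f * kp v₁ (-v₂) (-v₃)).trace := by
  have h3 : d * d ^ 2 = 1 := by rw [← pow_succ', h.d3]
  exact (trace_semiconj h3 (SemiconjBy.mul_right fd.symm h.k1)).symm

/-- Each eigenvalue of `d` occurs at least as often as each nontrivial Klein character, also inside the
range of an idempotent `f` commuting with everything. -/
lemma IsTetra.trace_avg {v₁ v₂ v₃ d f : Mat D} (h : IsTetra v₁ v₂ v₃ d) (hf : f * f = f)
    (f1 : Commute f v₁) (f2 : Commute f v₂) (f3 : Commute f v₃) (fd : Commute f d)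
    {z : ℂ} (hz : z ^ 3 = 1) :
    ∃ N : ℕ, (f * avg 3 (z • d)).trace = (f * kp v₁ (-v₂) (-v₃)).trace + N := by
  have hk0 : Commute d (kp v₁ v₂ v₃) := by
    have := semiconj_kp h.c1 h.c2 h.c3
    have e : kp v₂ v₃ v₁ = kp v₁ v₂ v₃ := by simp only [kp]; module
    rwa [e] at this
  have hfk : Commute f (kp v₁ v₂ v₃) := semiconj_kp f1 f2 f3
  have hka : Commute (kp v₁ v₂ v₃) (avg 3 (z • d)) := semiconj_avg (semiconj_smul hk0.symm z)
  have hfa : Commute f (avg 3 (z • d)) := semiconj_avg (semiconj_smul fd z)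
  obtain ⟨N, hN⟩ := trace_idem (E := f * avg 3 (z • d) * kp v₁ v₂ v₃) (by
    have hm : Commute (kp v₁ v₂ v₃) (f * avg 3 (z • d)) := hfk.symm.mul_right hka
    exact idem_mul hm.symm (idem_mul hfa hf (avg_idem (by norm_num) (smul_pow_eq hz h.d3)))
      (kp_idem h.toIsKlein))
  have key : ∀ w₁ w₂ w₃ : Mat D, IsTetra w₁ w₂ w₃ d → Commute f w₁ → Commute f w₂ → Commute f w₃ →
      (f * avg 3 (z • d) * kp w₁ (-w₂) (-w₃)).trace = 3⁻¹ * (f * kp w₁ (-w₂) (-w₃)).trace := by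
    intro w₁ w₂ w₃ hw g1 g2 g3
    obtain ⟨a1, a2⟩ := hw.trace_mul_k1 g1 g2 g3
    simp only [avg, Finset.sum_range_succ, Finset.sum_range_zero, zero_add, pow_zero, pow_one,
      smul_pow, mul_smul_comm, smul_mul_assoc, mul_add, add_mul, mul_one, Matrix.trace_add,
      Matrix.trace_smul, a1, a2]
    simp
  refine ⟨N, ?_⟩
  have hs := kp_sum v₁ v₂ v₃
  have e : f * avg 3 (z • d) = f * avg 3 (z • d) * kp v₁ v₂ v₃ +
      f * avg 3 (z • d) * kp v₁ (-v₂) (-v₃) + f * avg 3 (z • d) * kp v₂ (-v₃) (-v₁) +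
      f * avg 3 (z • d) * kp v₃ (-v₁) (-v₂) := by
    rw [← mul_add, ← mul_add, ← mul_add, hs, mul_one]
  rw [e, Matrix.trace_add, Matrix.trace_add, Matrix.trace_add, hN, key _ _ _ h f1 f2 f3,
    key _ _ _ h.rot f2 f3 f1, key _ _ _ h.rot.rot f3 f1 f2, h.rot.trace_k_eq fd, h.trace_k_eq fd]
  ring

end mat
end AltRep

/-! ### Complexified representations; seven points -/

namespace AltRep
section crep
variable {m D : ℕ}

/-- A representation of the even permutations of `m` points by real orthogonal matrices, with entries
regarded as complex numbers: both the transpose and the conjugate transpose give the inverse.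
Nothing is required at odd permutations. -/
structure IsCRep (C : Perm (Fin m) → Mat D) : Prop where
  one : C 1 = 1
  mul : ∀ g h, sign g = 1 → sign h = 1 → C (g * h) = C g * C h
  transpose : ∀ g, sign g = 1 → (C g).transpose = C g⁻¹
  conjTranspose : ∀ g, sign g = 1 → (C g).conjTranspose = C g⁻¹

variable {C : Perm (Fin m) → Mat D}

lemma IsCRep.pull {k : ℕ} (hC : IsCRep C) (f : Fin k ↪ Fin m) :
    IsCRep (fun g => C (embHom f g)) where
  one := by simp [hC.one]
  mul g h hg hh := by
    rw [map_mul]; exact hC.mul _ _ (by rw [sign_embHom, hg]) (by rw [sign_embHom, hh])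
  transpose g hg := by rw [map_inv]; exact hC.transpose _ (by rw [sign_embHom, hg])
  conjTranspose g hg := by rw [map_inv]; exact hC.conjTranspose _ (by rw [sign_embHom, hg])

lemma IsCRep.pow (hC : IsCRep C) {g : Perm (Fin m)} (hg : sign g = 1) (k : ℕ) :
    C (g ^ k) = C g ^ k := by
  induction k with
  | zero => simp [hC.one]
  | succ k ih => rw [pow_succ, hC.mul _ _ (by simp [hg]) hg, ih, pow_succ]

lemma IsCRep.pow_eq_one (hC : IsCRep C) {g : Perm (Fin m)} (hg : sign g = 1) {k : ℕ}
    (h : g ^ k = 1) : C g ^ k = 1 := by rw [← hC.pow hg, h, hC.one]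

lemma IsCRep.semiconj (hC : IsCRep C) {g a b : Perm (Fin m)} (hg : sign g = 1) (ha : sign a = 1)
    (h : g * a = b * g) : SemiconjBy (C g) (C a) (C b) := by
  have hb : sign b = 1 := by
    have := congrArg sign h
    simpa [hg, ha] using this.symm
  rw [SemiconjBy, ← hC.mul _ _ hg ha, h, hC.mul _ _ hb hg]

lemma IsCRep.mul_inv (hC : IsCRep C) {g : Perm (Fin m)} (hg : sign g = 1) : C g * C g⁻¹ = 1 := by
  rw [← hC.mul _ _ hg (by simp [hg]), mul_inv_cancel, hC.one]

lemma IsCRep.trace_eq (hC : IsCRep C) {g : Perm (Fin m)} (hg : sign g = 1) {X Y : Mat D}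
    (h : SemiconjBy (C g) X Y) : X.trace = Y.trace := trace_semiconj (hC.mul_inv hg) h

lemma IsCRep.trace_conj (hC : IsCRep C) {a b : Perm (Fin m)} (g : Perm (Fin m)) (hg : sign g = 1)
    (ha : sign a = 1) (h : g * a = b * g) : (C b).trace = (C a).trace :=
  (hC.trace_eq hg (hC.semiconj hg ha h)).symm

lemma IsCRep.trace_inv (hC : IsCRep C) {a : Perm (Fin m)} (ha : sign a = 1) :
    (C a⁻¹).trace = (C a).trace := by
  rw [← hC.transpose a ha, Matrix.trace_transpose]

lemma IsCRep.klein (hC : IsCRep C) {a b c : Perm (Fin m)} (ha : sign a = 1) (hb : sign b = 1)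
    (s1 : a * a = 1) (s2 : b * b = 1) (m12 : a * b = c) (m21 : b * a = c) :
    IsKlein (C a) (C b) (C c) := by
  have e1 : C a * C a = 1 := by rw [← hC.mul _ _ ha ha, s1, hC.one]
  have e2 : C b * C b = 1 := by rw [← hC.mul _ _ hb hb, s2, hC.one]
  have e3 : C a * C b = C c := by rw [← hC.mul _ _ ha hb, m12]
  have e4 : C b * C a = C c := by rw [← hC.mul _ _ hb ha, m21]
  refine ⟨e1, e2, ?_, e3, e4, ?_, ?_, ?_, ?_⟩
  · rw [← e3, mul_assoc, ← mul_assoc (C b), e4, ← e3, mul_assoc, e2, mul_one, e1]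
  · rw [← e3, ← mul_assoc, e1, one_mul]
  · rw [← e4, mul_assoc, e1, mul_one]
  · rw [← e4, ← mul_assoc, e2, one_mul]
  · rw [← e3, mul_assoc, e2, mul_one]
end crep

section seven

/-- The 3-cycle `(0 1 2)` in `A₇`. -/
abbrev c7 : Perm (Fin 7) := swap 0 1 * swap 1 2
/-- The 3-cycle `(3 4 5)` in `A₇`. -/
abbrev d7 : Perm (Fin 7) := swap 3 4 * swap 4 5
/-- The involution `(3 4)(5 6)` in `A₇`. -/
abbrev v7 : Perm (Fin 7) := swap 3 4 * swap 5 6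
/-- The involution `(3 6)(4 5)` in `A₇`. -/
abbrev v7' : Perm (Fin 7) := swap 3 6 * swap 4 5
/-- The involution `(3 5)(4 6)` in `A₇`. -/
abbrev v7'' : Perm (Fin 7) := swap 3 5 * swap 4 6

variable {D : ℕ} {C : Perm (Fin 7) → Mat D}

lemma three_sum {ω : ℂ} (hω : IsPrimitiveRoot ω 3) (x : Mat D) :
    avg 3 x + avg 3 (ω • x) + avg 3 (ω ^ 2 • x) = 1 := by
  have := sum_avg hω (by norm_num) x
  simpa [Finset.sum_range_succ] using this

lemma avg_three_sq {ω : ℂ} (hω : ω ^ 3 = 1) {x : Mat D} (hx : x ^ 3 = 1) :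
    avg 3 (ω • x ^ 2) = avg 3 (ω ^ 2 • x) ∧ avg 3 (ω ^ 2 • x ^ 2) = avg 3 (ω • x) ∧
    avg 3 (x ^ 2) = avg 3 x := by
  have h4 : ω ^ 4 = ω := by rw [show (4 : ℕ) = 3 + 1 by rfl, pow_succ, hω, one_mul]
  have x4 : x ^ 4 = x := by rw [show (4 : ℕ) = 3 + 1 by rfl, pow_succ, hx, one_mul]
  refine ⟨?_, ?_, ?_⟩ <;>
  · simp only [avg, Finset.sum_range_succ, Finset.sum_range_zero, zero_add, pow_zero, pow_one,
      smul_pow, ← pow_mul]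
    norm_num [h4, x4]
    abel

/-- Multiplicities in a representation of `A₇`. Let `c = (0 1 2)`, `d = (3 4 5)`, and let `V₄` be the
Klein four-group on `{3, 4, 5, 6}`. By conjugation, the multiplicity of a pair of eigenvalues of
`(c, d)` depends only on how many of the two equal `1`: it is `a` if both do, `b` if exactly one
does and `e` if none does. Each nontrivial character of `V₄` occurs `u0` times in the `1`-eigenspace
of `c` and `u` times in each of its other two eigenspaces; restriction to the `A₄` generated by `V₄`
and `d` bounds `u0` and `u` by `b` and `e`. -/
lemma seven_basic (hC : IsCRep C) {ω : ℂ} (hω : IsPrimitiveRoot ω 3) :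
    ∃ u u0 a b e : ℕ,
      (avg 3 (C c7) * kp (C v7) (-C v7') (-C v7'')).trace = u0 ∧
      (avg 3 (ω • C c7) * kp (C v7) (-C v7') (-C v7'')).trace = u ∧
      (avg 3 (C c7)).trace = a + 2 * b ∧
      (u = 0 → (1 - C c7) * (1 - C v7) = 0) ∧
      (D : ℂ) = a + 4 * b + 4 * e ∧ u ≤ b ∧ u ≤ e ∧ u0 ≤ b ∧
      (avg 3 (ω • C c7)).trace = b + 2 * e ∧ (C c7).trace = a - 2 * e + b ∧
      (C (c7 * d7)).trace = a - 2 * b + e ∧ (C v7).trace = D - 4 * (u0 + 2 * u) := by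
  have sc : sign c7 = 1 := by decide
  have sd : sign d7 = 1 := by decide
  have sv : sign v7 = 1 := by decide
  have sv' : sign v7' = 1 := by decide
  have sv'' : sign v7'' = 1 := by decide
  have hT : IsTetra (C v7) (C v7') (C v7'') (C d7) :=
    { hC.klein sv sv' (by decide) (by decide) (by decide) (by decide) with
      c1 := hC.semiconj sd sv (by decide)
      c2 := hC.semiconj sd sv' (by decide)
      c3 := hC.semiconj sd sv'' (by decide)
      d3 := hC.pow_eq_one sd (by decide) }
  have cv : Commute (C c7) (C v7) := hC.semiconj sc sv (by decide)
  have cv' : Commute (C c7) (C v7') := hC.semiconj sc sv' (by decide)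
  have cv'' : Commute (C c7) (C v7'') := hC.semiconj sc sv'' (by decide)
  have cd : Commute (C c7) (C d7) := hC.semiconj sc sd (by decide)
  have c3 : C c7 ^ 3 = 1 := hC.pow_eq_one sc (by decide)
  have w3 : ω ^ 3 = 1 := hω.pow_eq_one
  have w23 : (ω ^ 2) ^ 3 = 1 := by rw [← pow_mul, mul_comm, pow_mul, w3, one_pow]
  have sg : sign (swap 0 1 * swap 3 4 : Perm (Fin 7)) = 1 := by decide
  -- `(0 1)(3 4)` inverts both 3-cycles
  have gc : SemiconjBy (C (swap 0 1 * swap 3 4)) (C c7) (C c7 ^ 2) := by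
    rw [← hC.pow sc]; exact hC.semiconj sg sc (by decide)
  have gd : SemiconjBy (C (swap 0 1 * swap 3 4)) (C d7) (C d7 ^ 2) := by
    rw [← hC.pow sd]; exact hC.semiconj sg sd (by decide)
  have gv : SemiconjBy (C (swap 0 1 * swap 3 4)) (C v7) (C v7) := hC.semiconj sg sv (by decide)
  have gv' : SemiconjBy (C (swap 0 1 * swap 3 4)) (C v7') (C v7'') := hC.semiconj sg sv' (by decide)
  have gv'' : SemiconjBy (C (swap 0 1 * swap 3 4)) (C v7'') (C v7') :=
    hC.semiconj sg sv'' (by decide)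
  have sh : sign (swap 0 3 * (swap 1 4 * swap 4 2 * swap 2 5) : Perm (Fin 7)) = 1 := by decide
  -- `(0 3)(1 4 2 5)` sends `c` to `d` and `d` to `c⁻¹`
  have hc : SemiconjBy (C (swap 0 3 * (swap 1 4 * swap 4 2 * swap 2 5))) (C c7) (C d7) :=
    hC.semiconj sh sc (by decide)
  have hd : SemiconjBy (C (swap 0 3 * (swap 1 4 * swap 4 2 * swap 2 5))) (C d7) (C c7 ^ 2) := by
    rw [← hC.pow sc]; exact hC.semiconj sh sd (by decide)
  have trg := fun {X Y : Mat D} => hC.trace_eq (X := X) (Y := Y) sg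
  have trh := fun {X Y : Mat D} => hC.trace_eq (X := X) (Y := Y) sh
  obtain ⟨q1, q2, q0⟩ := avg_three_sq w3 c3
  obtain ⟨r1, r2, r0⟩ := avg_three_sq w3 hT.d3
  have csum := three_sum hω (C c7)
  have dsum := three_sum hω (C d7)
  have g1c := semiconj_avg (p := 3) (semiconj_smul gc ω)
  have g2c := semiconj_avg (p := 3) (semiconj_smul gc (ω ^ 2))
  have g0c := semiconj_avg (p := 3) gc
  have g1d := semiconj_avg (p := 3) (semiconj_smul gd ω)
  have g2d := semiconj_avg (p := 3) (semiconj_smul gd (ω ^ 2))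
  have g0d := semiconj_avg (p := 3) gd
  have h1c := semiconj_avg (p := 3) (semiconj_smul hc ω)
  have h2c := semiconj_avg (p := 3) (semiconj_smul hc (ω ^ 2))
  have h0c := semiconj_avg (p := 3) hc
  have h1d := semiconj_avg (p := 3) (semiconj_smul hd ω)
  have h2d := semiconj_avg (p := 3) (semiconj_smul hd (ω ^ 2))
  have h0d := semiconj_avg (p := 3) hd
  rw [q1] at g1c h1d
  rw [q2] at g2c h2d
  rw [q0] at g0c h0d
  rw [r1] at g1d
  rw [r2] at g2d
  rw [r0] at g0d
  have comm : ∀ (X : Mat D), Commute (C c7) X → Commute (avg 3 (C c7)) X ∧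
      Commute (avg 3 (ω • C c7)) X ∧ Commute (avg 3 (ω ^ 2 • C c7)) X := by
    intro X hX
    exact ⟨Commute.symm (semiconj_avg hX.symm),
      Commute.symm (semiconj_avg (semiconj_smul hX.symm _)),
      Commute.symm (semiconj_avg (semiconj_smul hX.symm _))⟩
  have gk : SemiconjBy (C (swap 0 1 * swap 3 4)) (kp (C v7) (-C v7') (-C v7''))
      (kp (C v7) (-C v7') (-C v7'')) := by
    have := semiconj_kp gv gv'.neg_right gv''.neg_right
    rwa [show kp (C v7) (-C v7'') (-C v7') = kp (C v7) (-C v7') (-C v7'') by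
      simp only [kp]; module] at this
  have i0 := avg_idem (p := 3) (by norm_num) c3
  have i1 := avg_idem (p := 3) (by norm_num) (smul_pow_eq w3 c3)
  have i2 := avg_idem (p := 3) (by norm_num) (smul_pow_eq w23 c3)
  have j0 := avg_idem (p := 3) (by norm_num) hT.d3
  have j1 := avg_idem (p := 3) (by norm_num) (smul_pow_eq w3 hT.d3)
  have k1 := kp_idem hT.toIsKlein.twist
  have k2 := kp_idem hT.rot.toIsKlein.twist
  have k3 := kp_idem hT.rot.rot.toIsKlein.twist
  have ck1 : Commute (C c7) (kp (C v7) (-C v7') (-C v7'')) :=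
    semiconj_kp cv cv'.neg_right cv''.neg_right
  have ck2 : Commute (C c7) (kp (C v7') (-C v7'') (-C v7)) :=
    semiconj_kp cv' cv''.neg_right cv.neg_right
  have ck3 : Commute (C c7) (kp (C v7'') (-C v7) (-C v7')) :=
    semiconj_kp cv'' cv.neg_right cv'.neg_right
  have cd0 : Commute (C c7) (avg 3 (C d7)) := semiconj_avg cd
  have cd1 : Commute (C c7) (avg 3 (ω • C d7)) := semiconj_avg (semiconj_smul cd ω)
  obtain ⟨u0, hu0⟩ := trace_idem (idem_mul (comm _ ck1).1 i0 k1)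
  obtain ⟨u, hu⟩ := trace_idem (idem_mul (comm _ ck1).2.1 i1 k1)
  obtain ⟨a, ha⟩ := trace_idem (idem_mul (comm _ cd0).1 i0 j0)
  obtain ⟨b, hb⟩ := trace_idem (idem_mul (comm _ cd0).2.1 i1 j0)
  obtain ⟨e, he⟩ := trace_idem (idem_mul (comm _ cd1).2.1 i1 j1)
  -- the joint multiplicities of the pair `(c, d)`
  have b1 : (avg 3 (ω ^ 2 • C c7) * avg 3 (C d7)).trace = b := by
    rw [← hb, trg (g1c.mul_right g0d)]
  have b2 : (avg 3 (C c7) * avg 3 (ω • C d7)).trace = b := by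
    rw [← b1, trh (h0c.mul_right h1d), Matrix.trace_mul_comm]
  have b3 : (avg 3 (C c7) * avg 3 (ω ^ 2 • C d7)).trace = b := by
    rw [← hb, trh (h0c.mul_right h2d), Matrix.trace_mul_comm]
  have e1 : (avg 3 (ω ^ 2 • C c7) * avg 3 (ω ^ 2 • C d7)).trace = e := by
    rw [← he, trg (g1c.mul_right g1d)]
  have e2 : (avg 3 (ω ^ 2 • C c7) * avg 3 (ω • C d7)).trace = e := by
    rw [← he, trh (h1c.mul_right h1d), Matrix.trace_mul_comm]
  have e3 : (avg 3 (ω • C c7) * avg 3 (ω ^ 2 • C d7)).trace = e := by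
    rw [← he, trh (h1c.mul_right h2d), Matrix.trace_mul_comm]
  obtain ⟨n1, hn1⟩ := hT.trace_avg i1 (comm _ cv).2.1 (comm _ cv').2.1 (comm _ cv'').2.1
    (comm _ cd).2.1 (one_pow 3)
  obtain ⟨n2, hn2⟩ := hT.trace_avg i1 (comm _ cv).2.1 (comm _ cv').2.1 (comm _ cv'').2.1
    (comm _ cd).2.1 w3
  obtain ⟨n3, hn3⟩ := hT.trace_avg i0 (comm _ cv).1 (comm _ cv').1 (comm _ cv'').1
    (comm _ cd).1 w3
  rw [one_smul, hb, hu] at hn1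
  rw [he, hu] at hn2
  rw [b2, hu0] at hn3
  have t0 : (avg 3 (C c7)).trace = a + 2 * b := by
    rw [← mul_one (avg 3 (C c7)), ← dsum, mul_add, mul_add, Matrix.trace_add, Matrix.trace_add,
      ha, b2, b3]; ring
  have t1 : (avg 3 (ω • C c7)).trace = b + 2 * e := by
    rw [← mul_one (avg 3 (ω • C c7)), ← dsum, mul_add, mul_add, Matrix.trace_add,
      Matrix.trace_add, hb, he, e3]; ring
  have t2 : (avg 3 (ω ^ 2 • C c7)).trace = b + 2 * e := by
    rw [← t1, trg g1c]
  have hD : (D : ℂ) = a + 4 * b + 4 * e := by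
    have := congrArg Matrix.trace csum
    rw [Matrix.trace_add, Matrix.trace_add, t0, t1, t2, Matrix.trace_one, Fintype.card_fin] at this
    rw [← this]; ring
  have hc2 : (C c7 ^ 2).trace = (C c7).trace := (trg gc).symm
  have hchi : (C c7).trace = a - 2 * e + b := by
    have h := t0
    simp only [avg, Finset.sum_range_succ, Finset.sum_range_zero, zero_add, pow_zero, pow_one,
      Matrix.trace_smul, Matrix.trace_add, Matrix.trace_one, Fintype.card_fin, hc2, hD,
      smul_eq_mul] at h
    push_cast at h
    linear_combination (3 / 2 : ℂ) * h
  have hd1 : (C d7).trace = (C c7).trace := (trh hc).symm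
  have hd2 : (C d7 ^ 2).trace = (C c7).trace := by rw [← trg gd, hd1]
  have f22 : (C c7 ^ 2 * C d7 ^ 2).trace = (C c7 * C d7).trace := (trg (gc.mul_right gd)).symm
  have f21 : (C c7 ^ 2 * C d7).trace = (C c7 * C d7).trace := by
    rw [trh (hc.mul_right hd), Matrix.trace_mul_comm]
  have f12 : (C c7 * C d7 ^ 2).trace = (C c7 * C d7).trace := by
    have h := trg ((gc.pow_right 2).mul_right gd)
    rw [← pow_mul, show 2 * 2 = 3 + 1 by rfl, pow_succ (C c7) 3, c3, one_mul] at h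
    rw [← h, f21]
  have hchi33 : (C (c7 * d7)).trace = a - 2 * b + e := by
    have h := ha
    simp only [avg, Finset.sum_range_succ, Finset.sum_range_zero, zero_add, pow_zero, pow_one,
      Matrix.trace_smul, Matrix.trace_add, Matrix.trace_one, Fintype.card_fin, hc2, hD,
      smul_eq_mul, mul_smul_comm, smul_mul_assoc, mul_add, add_mul, mul_one, one_mul, f22, f21,
      f12, hd1, hd2, hchi] at h
    rw [hC.mul _ _ sc sd]
    push_cast at h
    linear_combination (9 / 4 : ℂ) * h
  have hu2 : (avg 3 (ω ^ 2 • C c7) * kp (C v7) (-C v7') (-C v7'')).trace = u := by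
    rw [← hu, trg (g1c.mul_right gk)]
  have hv' : (C v7').trace = (C v7).trace := hC.trace_conj d7 sd sv (by decide)
  have hv'' : (C v7'').trace = (C v7').trace := hC.trace_conj d7 sd sv' (by decide)
  have hchi2 : (C v7).trace = D - 4 * (u0 + 2 * u) := by
    have h1 : (kp (C v7) (-C v7') (-C v7'')).trace = u0 + 2 * u := by
      rw [← one_mul (kp (C v7) (-C v7') (-C v7'')), ← csum, add_mul, add_mul, Matrix.trace_add,
        Matrix.trace_add, hu0, hu, hu2]; ring
    simp only [kp, Matrix.trace_smul, Matrix.trace_add, Matrix.trace_neg, Matrix.trace_one,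
      Fintype.card_fin, smul_eq_mul, hv'', hv'] at h1
    linear_combination -4 * h1
  have hH : u = 0 → (1 - C c7) * (1 - C v7) = 0 := by
    intro h0
    rw [h0, Nat.cast_zero] at hu hu2
    have z11 := idem_eq_zero (idem_mul (comm _ ck1).2.1 i1 k1) hu
    have z21 := idem_eq_zero (idem_mul (comm _ ck1).2.2 i2 k1) hu2
    have z12 := idem_eq_zero (idem_mul (comm _ ck2).2.1 i1 k2)
      (by rw [hT.trace_k_eq (comm _ cd).2.1, hu])
    have z22 := idem_eq_zero (idem_mul (comm _ ck2).2.2 i2 k2)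
      (by rw [hT.trace_k_eq (comm _ cd).2.2, hu2])
    have z13 := idem_eq_zero (idem_mul (comm _ ck3).2.1 i1 k3)
      (by rw [hT.rot.trace_k_eq (comm _ cd).2.1, z12, Matrix.trace_zero])
    have z23 := idem_eq_zero (idem_mul (comm _ ck3).2.2 i2 k3)
      (by rw [hT.rot.trace_k_eq (comm _ cd).2.2, z22, Matrix.trace_zero])
    have hc' : 1 - C c7 = (1 - C c7) * (avg 3 (ω • C c7) + avg 3 (ω ^ 2 • C c7)) := by
      have h1 : (1 - C c7) * avg 3 (C c7) = 0 := by rw [sub_mul, mul_avg c3, one_mul, sub_self]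
      have h2 := congrArg ((1 - C c7) * ·) csum
      simp only [mul_add, h1, zero_add, mul_one] at h2
      rw [mul_add, h2]
    have hv1 : 1 - C v7 = (kp (C v7) (-C v7') (-C v7'') + kp (C v7') (-C v7'') (-C v7) +
        kp (C v7'') (-C v7) (-C v7')) * (1 - C v7) := by
      have h1 : kp (C v7) (C v7') (C v7'') * (1 - C v7) = 0 := by
        simp only [kp, smul_mul_assoc, mul_sub, mul_one, add_mul, one_mul, hT.s1, hT.m21, hT.m31]
        module
      have h2 := congrArg (· * (1 - C v7)) (kp_sum (C v7) (C v7') (C v7''))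
      simp only [add_mul, h1, zero_add, one_mul] at h2
      rw [add_mul, add_mul, h2]
    rw [hc', hv1, mul_assoc, ← mul_assoc (avg 3 (ω • C c7) + avg 3 (ω ^ 2 • C c7))]
    simp only [add_mul, mul_add, z11, z12, z13, z21, z22, z23, add_zero, zero_mul, mul_zero]
  have nb : u ≤ b := by
    have : b = u + n1 := by exact_mod_cast hn1
    omega
  have ne : u ≤ e := by
    have : e = u + n2 := by exact_mod_cast hn2
    omega
  have n0 : u0 ≤ b := by
    have : b = u0 + n3 := by exact_mod_cast hn3
    omega
  exact ⟨u, u0, a, b, e, hu0, hu, t0, hH, hD, nb, ne, n0, t1, hchi, hchi33, hchi2⟩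
end seven
end AltRep

/-! ### Seven points, dimension at most ten -/

namespace AltRep
section seven
variable {D : ℕ} {C : Perm (Fin 7) → Mat D}

/-- The 3-cycle `(1 2 3)`. -/
abbrev t7 : Perm (Fin 7) := swap 1 2 * swap 2 3
/-- The permutation `(0 1)(3 4 5 6)`. -/
abbrev h7 : Perm (Fin 7) := swap 0 1 * (swap 3 4 * swap 4 5 * swap 5 6)
/-- The 7-cycle `(0 1 3 2 4 5 6)`. -/
abbrev s7 : Perm (Fin 7) := swap 0 1 * swap 1 3 * swap 3 2 * swap 2 4 * swap 4 5 * swap 5 6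

lemma trace_klein_conj (hC : IsCRep C) :
    (C v7').trace = (C v7).trace ∧ (C v7'').trace = (C v7).trace := by
  have h1 : (C v7').trace = (C v7).trace :=
    hC.trace_conj d7 (by decide) (by decide) (by decide)
  have h2 : (C v7'').trace = (C v7').trace :=
    hC.trace_conj d7 (by decide) (by decide) (by decide)
  exact ⟨h1, h2.trans h1⟩

lemma IsCRep.trace_sq (hC : IsCRep C) : (C c7 ^ 2).trace = (C c7).trace := by
  rw [← hC.pow (by decide)]
  exact hC.trace_conj (swap 0 1 * swap 3 4) (by decide) (by decide) (by decide)

set_option maxRecDepth 10000 in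
lemma trace_c_t (hC : IsCRep C) : (avg 3 (C c7) * avg 3 (C t7)).trace =
    9⁻¹ * (D + 6 * (C c7).trace + 2 * (C v7).trace) := by
  have sc : sign c7 = 1 := by decide
  have st : sign t7 = 1 := by decide
  have h0 : (C t7).trace = (C c7).trace :=
    hC.trace_conj (swap 0 3 * swap 5 6) (by decide) (by decide) (by decide)
  have h0' : (C t7 ^ 2).trace = (C c7).trace := by
    rw [← hC.pow st]
    exact hC.trace_conj (swap 0 3 * swap 1 2) (by decide) (by decide) (by decide)
  have h1 : (C c7 * C t7).trace = (C v7).trace := by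
    rw [← hC.mul _ _ sc st]
    exact hC.trace_conj (swap 0 4 * swap 1 5 * swap 5 3 * swap 2 6)
      (by decide) (by decide) (by decide)
  have h2 : (C c7 * C t7 ^ 2).trace = (C c7).trace := by
    rw [← hC.pow st, ← hC.mul _ _ sc (by decide)]
    exact hC.trace_conj (swap 2 3 * swap 5 6) (by decide) (by decide) (by decide)
  have h3 : (C c7 ^ 2 * C t7).trace = (C c7).trace := by
    rw [← hC.pow sc, ← hC.mul _ _ (by decide) st]
    exact hC.trace_conj (swap 1 2 * swap 2 3) (by decide) (by decide) (by decide)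
  have h4 : (C c7 ^ 2 * C t7 ^ 2).trace = (C v7).trace := by
    rw [← hC.pow sc, ← hC.pow st, ← hC.mul _ _ (by decide) (by decide)]
    exact hC.trace_conj (swap 0 4 * swap 1 5 * swap 2 6 * swap 6 3)
      (by decide) (by decide) (by decide)
  simp only [avg, Finset.sum_range_succ, Finset.sum_range_zero, zero_add, pow_zero, pow_one,
    Matrix.trace_smul, Matrix.trace_add, Matrix.trace_one, Fintype.card_fin, hC.trace_sq,
    smul_eq_mul, mul_smul_comm, smul_mul_assoc, mul_add, add_mul, mul_one, one_mul,
    h0, h0', h1, h2, h3, h4]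
  push_cast
  ring

set_option maxRecDepth 10000 in
lemma trace_k_t (hC : IsCRep C) : (kp (C v7) (C v7') (C v7'') * avg 3 (C t7)).trace =
    12⁻¹ * (D + 2 * (C c7).trace + 3 * (C v7).trace + 6 * (C h7).trace) := by
  have sv : sign v7 = 1 := by decide
  have sv' : sign v7' = 1 := by decide
  have sv'' : sign v7'' = 1 := by decide
  have st : sign t7 = 1 := by decide
  have st2 : sign (t7 ^ 2) = 1 := by decide
  have h0 : (C t7).trace = (C c7).trace :=
    hC.trace_conj (swap 0 3 * swap 5 6) (by decide) (by decide) (by decide)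
  have h0' : (C (t7 ^ 2)).trace = (C c7).trace :=
    hC.trace_conj (swap 0 3 * swap 1 2) (by decide) (by decide) (by decide)
  have h1 : (C v7 * C t7).trace = (C h7).trace := by
    rw [← hC.mul _ _ sv st]
    exact hC.trace_conj (swap 0 5 * swap 5 3 * swap 3 2 * swap 1 6)
      (by decide) (by decide) (by decide)
  have h2 : (C v7 * C (t7 ^ 2)).trace = (C h7).trace := by
    rw [← hC.mul _ _ sv st2]
    exact hC.trace_conj (swap 0 5 * swap 5 2 * swap 1 6 * swap 3 4)
      (by decide) (by decide) (by decide)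
  have h3 : (C v7' * C t7).trace = (C h7).trace := by
    rw [← hC.mul _ _ sv' st]
    exact hC.trace_conj (swap 0 4 * swap 4 1 * swap 1 5 * swap 5 2)
      (by decide) (by decide) (by decide)
  have h4 : (C v7' * C (t7 ^ 2)).trace = (C h7).trace := by
    rw [← hC.mul _ _ sv' st2]
    exact hC.trace_conj (swap 0 5 * swap 5 1 * swap 1 4 * swap 4 2)
      (by decide) (by decide) (by decide)
  have h5 : (C v7'' * C t7).trace = (C h7).trace := by
    rw [← hC.mul _ _ sv'' st]
    exact hC.trace_conj (swap 0 4 * swap 4 2 * swap 1 6 * swap 6 3)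
      (by decide) (by decide) (by decide)
  have h6 : (C v7'' * C (t7 ^ 2)).trace = (C h7).trace := by
    rw [← hC.mul _ _ sv'' st2]
    exact hC.trace_conj (swap 0 4 * swap 4 2 * swap 1 6 * swap 6 5)
      (by decide) (by decide) (by decide)
  obtain ⟨k1, k2⟩ := trace_klein_conj hC
  simp only [avg, kp, Finset.sum_range_succ, Finset.sum_range_zero, zero_add, pow_zero, pow_one,
    Matrix.trace_smul, Matrix.trace_add, Matrix.trace_one, Fintype.card_fin, ← hC.pow st, hC.one,
    smul_eq_mul, mul_smul_comm, smul_mul_assoc, mul_add, add_mul, mul_one, one_mul,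
    h0, h0', h1, h2, h3, h4, h5, h6, k1, k2]
  push_cast
  ring

lemma trace_h (hC : IsCRep C) : (avg 4 (C h7)).trace =
    4⁻¹ * (D + (C v7).trace + 2 * (C h7).trace) := by
  have sh : sign h7 = 1 := by decide
  have h2 : (C (h7 ^ 2)).trace = (C v7).trace :=
    hC.trace_conj (swap 4 5 * swap 5 6) (by decide) (by decide) (by decide)
  have h3 : (C (h7 ^ 3)).trace = (C h7).trace :=
    hC.trace_conj (swap 3 4 * swap 5 6) (by decide) (by decide) (by decide)
  simp only [avg, Finset.sum_range_succ, Finset.sum_range_zero, zero_add, pow_zero, pow_one,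
    Matrix.trace_smul, Matrix.trace_add, Matrix.trace_one, Fintype.card_fin, ← hC.pow sh, hC.one,
    smul_eq_mul, h2, h3]
  push_cast
  ring

/-- The dihedral group generated by the Klein group and `(0 1)(3 4 5 6)` has an integral
nonnegative number of invariants. -/
lemma trace_dihedral (hC : IsCRep C) :
    ∃ N : ℕ, (D : ℂ) + 5 * (C v7).trace + 2 * (C h7).trace = 8 * N := by
  have sv : sign v7 = 1 := by decide
  have sv' : sign v7' = 1 := by decide
  have sv'' : sign v7'' = 1 := by decide
  have sh : sign h7 = 1 := by decide
  have hK : IsKlein (C v7) (C v7') (C v7'') :=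
    hC.klein sv sv' (by decide) (by decide) (by decide) (by decide)
  have hk : Commute (C h7) (kp (C v7) (C v7') (C v7'')) := by
    have h := semiconj_kp (hC.semiconj sh sv (b := v7') (by decide))
      (hC.semiconj sh sv' (b := v7) (by decide)) (hC.semiconj sh sv'' (b := v7'') (by decide))
    rwa [show kp (C v7') (C v7) (C v7'') = kp (C v7) (C v7') (C v7'') by
      simp only [kp]; module] at h
  have hsq : C h7 * C h7 = C v7'' := by
    rw [← hC.mul _ _ sh sh]; exact congrArg C (by decide)
  have hkv : kp (C v7) (C v7') (C v7'') * C v7'' = kp (C v7) (C v7') (C v7'') := by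
    simp only [kp, smul_mul_assoc, add_mul, one_mul, hK.m13, hK.m23, hK.s3]
    module
  have ki := kp_idem hK
  obtain ⟨k1, k2⟩ := trace_klein_conj hC
  have h1 : (C v7 * C h7).trace = (C v7).trace := by
    rw [← hC.mul _ _ sv sh]
    exact hC.trace_conj (swap 0 2 * swap 2 5 * swap 5 4 * swap 1 3)
      (by decide) (by decide) (by decide)
  have h2 : (C v7' * C h7).trace = (C v7).trace := by
    rw [← hC.mul _ _ sv' sh]
    exact hC.trace_conj (swap 0 2 * swap 2 6 * swap 6 3 * swap 1 4)
      (by decide) (by decide) (by decide)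
  have h3 : (C v7'' * C h7).trace = (C h7).trace := by
    rw [← hC.mul _ _ sv'' sh]
    exact hC.trace_conj (swap 3 4 * swap 5 6) (by decide) (by decide) (by decide)
  obtain ⟨N, hN⟩ := trace_idem
      (E := (2 : ℂ)⁻¹ • (kp (C v7) (C v7') (C v7'') + kp (C v7) (C v7') (C v7'') * C h7)) (by
    set K := kp (C v7) (C v7') (C v7'')
    have e1 : K * (K * C h7) = K * C h7 := by rw [← mul_assoc, ki]
    have e2 : K * C h7 * K = K * C h7 := by rw [mul_assoc, hk.eq, e1]
    have e3 : K * C h7 * (K * C h7) = K := by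
      rw [← mul_assoc, e2, mul_assoc, hsq, hkv]
    simp only [smul_mul_assoc, mul_smul_comm, mul_add, add_mul, ki, e1, e2, e3]
    module)
  refine ⟨N, ?_⟩
  rw [← hN]
  simp only [kp, Matrix.trace_smul, Matrix.trace_add, Matrix.trace_one, Fintype.card_fin,
    smul_eq_mul, smul_mul_assoc, add_mul, one_mul, h1, h2, h3, k1, k2]
  ring

set_option maxRecDepth 10000 in
lemma trace_s_pow (hC : IsCRep C) : (C (s7 ^ 2)).trace = (C s7).trace ∧
    (C (s7 ^ 3)).trace = (C s7).trace ∧ (C (s7 ^ 4)).trace = (C s7).trace ∧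
    (C (s7 ^ 5)).trace = (C s7).trace ∧ (C (s7 ^ 6)).trace = (C s7).trace := by
  have ss : sign s7 = 1 := by decide
  have hi := hC.trace_inv ss
  refine ⟨?_, ?_, ?_, ?_, ?_⟩
  · exact hC.trace_conj (swap 1 3 * swap 3 4 * swap 2 6 * swap 6 5)
      (by decide) (by decide) (by decide)
  · rw [← hi]
    exact hC.trace_conj (swap 1 4 * swap 4 3 * swap 2 5 * swap 5 6)
      (by decide) (by decide) (by decide)
  · exact hC.trace_conj (swap 1 4 * swap 4 3 * swap 2 5 * swap 5 6)
      (by decide) (by decide) (by decide)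
  · rw [← hi]
    exact hC.trace_conj (swap 1 3 * swap 3 4 * swap 2 6 * swap 6 5)
      (by decide) (by decide) (by decide)
  · rw [← hi]
    exact hC.trace_conj 1 (by decide) (by decide) (by decide)

set_option maxRecDepth 10000 in
/-- All nontrivial eigenvalues of the 7-cycle occur equally often, since its powers are pairwise
conjugate up to inversion. -/
lemma trace_s (hC : IsCRep C) : ∃ j k : ℕ, (D : ℂ) = (C s7).trace + 7 * j ∧
    (D : ℂ) + 6 * (C s7).trace = 7 * k := by
  have ss : sign s7 = 1 := by decide
  have hs_pow : C s7 ^ 7 = 1 := hC.pow_eq_one ss (by decide)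
  have hζ := Complex.isPrimitiveRoot_exp 7 (by norm_num)
  set ζ := Complex.exp (2 * Real.pi * Complex.I / (7 : ℕ))
  obtain ⟨h2, h3, h4, h5, h6⟩ := trace_s_pow hC
  obtain ⟨k, hk⟩ := trace_idem (avg_idem (by norm_num) hs_pow)
  obtain ⟨j, hj⟩ := trace_idem (avg_idem (by norm_num) (smul_pow_eq hζ.pow_eq_one hs_pow))
  have hg := hζ.geom_sum_eq_zero (by norm_num)
  refine ⟨j, k, ?_, ?_⟩
  · rw [← hj]
    simp only [avg, Finset.sum_range_succ, Finset.sum_range_zero, zero_add, pow_zero, pow_one,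
      Matrix.trace_smul, Matrix.trace_add, Matrix.trace_one, Fintype.card_fin, smul_pow,
      ← hC.pow ss, hC.one, smul_eq_mul, h2, h3, h4, h5, h6] at hg ⊢
    push_cast
    linear_combination -(C s7).trace * hg
  · rw [← hk]
    simp only [avg, Finset.sum_range_succ, Finset.sum_range_zero, zero_add, pow_zero, pow_one,
      Matrix.trace_smul, Matrix.trace_add, Matrix.trace_one, Fintype.card_fin,
      ← hC.pow ss, hC.one, smul_eq_mul, h2, h3, h4, h5, h6]
    push_cast
    ring

set_option maxRecDepth 10000 in
lemma trace_v_s (hC : IsCRep C) : (C v7 * avg 7 (C s7)).trace =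
    7⁻¹ * ((C v7).trace + 2 * (C h7).trace + 2 * (C (c7 * d7)).trace + 2 * (C s7).trace) := by
  have ss : sign s7 = 1 := by decide
  have sv : sign v7 = 1 := by decide
  have h1 : (C (v7 * s7 ^ 1)).trace = (C h7).trace :=
    hC.trace_conj (swap 0 2 * swap 2 5 * swap 5 6 * swap 1 3)
      (by decide) (by decide) (by decide)
  have h2 : (C (v7 * s7 ^ 2)).trace = (C (c7 * d7)).trace :=
    hC.trace_conj (swap 0 6 * swap 6 3) (by decide) (by decide) (by decide)
  have h3 : (C (v7 * s7 ^ 3)).trace = (C s7).trace :=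
    hC.trace_conj (swap 0 5 * swap 2 6) (by decide) (by decide) (by decide)
  have h4 : (C (v7 * s7 ^ 4)).trace = (C s7).trace := by
    rw [← hC.trace_inv ss]
    exact hC.trace_conj (swap 1 2 * swap 3 6) (by decide) (by decide) (by decide)
  have h5 : (C (v7 * s7 ^ 5)).trace = (C (c7 * d7)).trace :=
    hC.trace_conj (swap 0 1 * swap 1 5 * swap 5 3 * swap 4 6)
      (by decide) (by decide) (by decide)
  have h6 : (C (v7 * s7 ^ 6)).trace = (C h7).trace :=
    hC.trace_conj (swap 0 2 * swap 2 6 * swap 6 5 * swap 1 4)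
      (by decide) (by decide) (by decide)
  have hm : ∀ i : ℕ, C v7 * C s7 ^ i = C (v7 * s7 ^ i) := fun i => by
    rw [← hC.pow ss, ← hC.mul _ _ sv (by rw [map_pow, ss, one_pow])]
  have h0 : C (v7 * s7 ^ 0) = C v7 := by rw [pow_zero, mul_one]
  simp only [avg, Finset.sum_range_succ, Finset.sum_range_zero, zero_add, mul_smul_comm, mul_add,
    hm, Matrix.trace_smul, Matrix.trace_add, smul_eq_mul, h0, h1, h2, h3, h4, h5, h6]
  push_cast
  ring

lemma avg_seven_sq {x : Mat D} (h : x ^ 7 = 1) : avg 7 (x ^ 2) = avg 7 x := by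
  have hx : ∀ i, x ^ (7 + i) = x ^ i := fun i => by rw [pow_add, h, one_mul]
  have h4 := hx 1
  have h5 := hx 3
  have h6 := hx 5
  norm_num at h4 h5 h6
  simp only [avg, Finset.sum_range_succ, Finset.sum_range_zero, zero_add, ← pow_mul]
  norm_num [h4, h5, h6]
  abel

lemma conjTranspose_avg_seven {x : Mat D} (h : x ^ 7 = 1) (h' : x.conjTranspose = x ^ 6) :
    (avg 7 x).conjTranspose = avg 7 x := by
  have hx : ∀ k i, x ^ (7 * k + i) = x ^ i := fun k i => by
    rw [pow_add, pow_mul, h, one_pow, one_mul]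
  have h2 := hx 1 5
  have h3 := hx 2 4
  have h4 := hx 3 3
  have h5 := hx 4 2
  have h6 := hx 5 1
  norm_num at h2 h3 h4 h5 h6
  simp only [avg, Finset.sum_range_succ, Finset.sum_range_zero, zero_add,
    Matrix.conjTranspose_smul, Matrix.conjTranspose_add, Matrix.conjTranspose_pow, h', ← pow_mul]
  norm_num [h2, h3, h4, h5, h6]
  abel

set_option maxRecDepth 10000 in
lemma conjTranspose_avg_s (hC : IsCRep C) : (avg 7 (C s7)).conjTranspose = avg 7 (C s7) := by
  have ss : sign s7 = 1 := by decide
  refine conjTranspose_avg_seven (hC.pow_eq_one ss (by decide)) ?_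
  rw [hC.conjTranspose _ ss, ← hC.pow ss]
  exact congrArg C (by decide)

set_option maxRecDepth 10000 in
/-- The inequality `tr (K P) ≤ tr K`, scaled by `28`, for the orthogonal projections `K` onto the
Klein invariants and `P` onto the vectors fixed by the 7-cycle. -/
lemma trace_k_s (hC : IsCRep C) : D + 6 * (C s7).trace.re + 3 * ((C v7).trace.re +
    2 * (C h7).trace.re + 2 * (C (c7 * d7)).trace.re + 2 * (C s7).trace.re) ≤
    7 * (D + 3 * (C v7).trace.re) := by
  have ss : sign s7 = 1 := by decide
  have sv : sign v7 = 1 := by decide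
  have sv' : sign v7' = 1 := by decide
  have sv'' : sign v7'' = 1 := by decide
  have sr : sign (swap 0 1 * swap 1 2 * swap 3 5 * swap 5 4 : Perm (Fin 7)) = 1 := by decide
  have hs_pow : C s7 ^ 7 = 1 := hC.pow_eq_one ss (by decide)
  have hK : IsKlein (C v7) (C v7') (C v7'') :=
    hC.klein sv sv' (by decide) (by decide) (by decide) (by decide)
  have hp := avg_idem (by norm_num) hs_pow
  -- conjugation by `(0 1 2)(3 5 4)` squares the 7-cycle and rotates the Klein group
  have hs : SemiconjBy (C (swap 0 1 * swap 1 2 * swap 3 5 * swap 5 4)) (avg 7 (C s7))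
      (avg 7 (C s7)) := by
    have h := semiconj_avg (p := 7) (hC.semiconj sr ss (b := s7 ^ 2) (by decide))
    have e : avg 7 (C (s7 ^ 2)) = avg 7 (C s7) := by rw [hC.pow ss, avg_seven_sq hs_pow]
    rwa [e] at h
  have r1 : (C v7'' * avg 7 (C s7)).trace = (C v7 * avg 7 (C s7)).trace :=
    (hC.trace_eq sr ((hC.semiconj sr sv (b := v7'') (by decide)).mul_right hs)).symm
  have r2 : (C v7' * avg 7 (C s7)).trace = (C v7 * avg 7 (C s7)).trace :=
    hC.trace_eq sr ((hC.semiconj sr sv' (b := v7) (by decide)).mul_right hs)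
  obtain ⟨k1, k2⟩ := trace_klein_conj hC
  obtain ⟨h2, h3, h4, h5, h6⟩ := trace_s_pow hC
  have hts : (avg 7 (C s7)).trace = 7⁻¹ * (D + 6 * (C s7).trace) := by
    simp only [avg, Finset.sum_range_succ, Finset.sum_range_zero, zero_add, pow_zero, pow_one,
      Matrix.trace_smul, Matrix.trace_add, Matrix.trace_one, Fintype.card_fin,
      ← hC.pow ss, hC.one, smul_eq_mul, h2, h3, h4, h5, h6]
    push_cast
    ring
  have hkt : (kp (C v7) (C v7') (C v7'')).conjTranspose = kp (C v7) (C v7') (C v7'') := by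
    have i1 : v7⁻¹ = v7 := by decide
    have i2 : v7'⁻¹ = v7' := by decide
    have i3 : v7''⁻¹ = v7'' := by decide
    simp only [kp, Matrix.conjTranspose_smul, Matrix.conjTranspose_add, Matrix.conjTranspose_one,
      hC.conjTranspose _ sv, hC.conjTranspose _ sv', hC.conjTranspose _ sv'', i1, i2, i3]
    simp
  have key := trace_nonneg_of_idem (kp_idem hK) (Q := 1 - avg 7 (C s7))
    (by rw [mul_sub, sub_mul, sub_mul, hp]; simp) hkt
    (by rw [Matrix.conjTranspose_sub, Matrix.conjTranspose_one, conjTranspose_avg_s hC])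
  have e : (kp (C v7) (C v7') (C v7'') * (1 - avg 7 (C s7))).trace =
      ((28⁻¹ : ℝ) : ℂ) * ((7 : ℝ) * (D + (3 : ℝ) * (C v7).trace) - (D + (6 : ℝ) * (C s7).trace +
        (3 : ℝ) * ((C v7).trace + (2 : ℝ) * (C h7).trace + (2 : ℝ) * (C (c7 * d7)).trace +
          (2 : ℝ) * (C s7).trace))) := by
    simp only [mul_sub, mul_one, Matrix.trace_sub]
    simp only [kp, smul_mul_assoc, add_mul, one_mul, Matrix.trace_smul, Matrix.trace_add, r1, r2,
      k1, k2, trace_v_s hC, hts, Matrix.trace_one, Fintype.card_fin, smul_eq_mul]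
    push_cast
    ring
  rw [e, Complex.re_ofReal_mul] at key
  simp only [Complex.sub_re, Complex.re_ofReal_mul, Complex.add_re, Complex.natCast_re] at key
  linarith

/-- If the product does not vanish, the multiplicities of `seven_basic` are forced to be
`b = e = u = 1` and `u0 ≤ 1`. For `u0 = 0` the fixed spaces of the 3-cycle `c` and of the Klein group
coincide, and a comparison of traces with the 3-cycle `(1 2 3)` makes the multiplicity of the
eigenvalue `1` of `(0 1)(3 4 5 6)` non-integral. For `u0 = 1` the bound `trace_k_s` is violated. -/
theorem seven_le_ten (hC : IsCRep C) (hD10 : D ≤ 10) : (1 - C c7) * (1 - C v7) = 0 := by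
  have hω := Complex.isPrimitiveRoot_exp 3 (by norm_num)
  obtain ⟨u, u0, a, b, e, hu0, -, t0, hH, hD, hb, he, hub, -, x3, x33, x2⟩ := seven_basic hC hω
  by_contra hne
  have hu : u ≠ 0 := fun h => hne (hH h)
  have hDn : D = a + 4 * b + 4 * e := by exact_mod_cast hD
  have hb1 : b = 1 := by omega
  have he1 : e = 1 := by omega
  have hu1 : u = 1 := by omega
  subst hb1 he1 hu1
  have hDa : D = a + 8 := by omega
  have hDC : (D : ℂ) = a + 8 := by rw [hDa]; push_cast; ring
  have hDR : (D : ℝ) = a + 8 := by rw [hDa]; push_cast; ring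
  rw [hDa] at hD10
  obtain rfl | rfl : u0 = 0 ∨ u0 = 1 := by omega
  · -- every vector fixed by `c` is fixed by the Klein group, and the dimensions agree
    have sc : sign c7 = 1 := by decide
    have sv : sign v7 = 1 := by decide
    have sv' : sign v7' = 1 := by decide
    have sv'' : sign v7'' = 1 := by decide
    have sd : sign d7 = 1 := by decide
    have hT : IsTetra (C v7) (C v7') (C v7'') (C d7) :=
      { hC.klein sv sv' (by decide) (by decide) (by decide) (by decide) with
        c1 := hC.semiconj sd sv (by decide)
        c2 := hC.semiconj sd sv' (by decide)
        c3 := hC.semiconj sd sv'' (by decide)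
        d3 := hC.pow_eq_one sd (by decide) }
    have cd : Commute (avg 3 (C c7)) (C d7) :=
      Commute.symm (semiconj_avg (hC.semiconj sd sc (by decide)))
    have i0 := avg_idem (by norm_num) (hC.pow_eq_one sc (k := 3) (by decide))
    have ki := kp_idem hT.toIsKlein
    have comm : Commute (avg 3 (C c7)) (kp (C v7) (C v7') (C v7'')) :=
      (Commute.symm (semiconj_avg (Commute.symm (semiconj_kp (hC.semiconj sc sv (by decide))
        (hC.semiconj sc sv' (by decide)) (hC.semiconj sc sv'' (by decide))))))
    obtain ⟨k1, k2⟩ := trace_klein_conj hC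
    have hk2 := hT.trace_k_eq cd
    have hk3 := hT.rot.trace_k_eq cd
    rw [hk2] at hk3
    rw [hu0] at hk2 hk3
    have tPK : (avg 3 (C c7) * kp (C v7) (C v7') (C v7'')).trace = a + 2 := by
      have h := congrArg (fun X => (avg 3 (C c7) * X).trace) (kp_sum (C v7) (C v7') (C v7''))
      simp only [mul_add, Matrix.trace_add, hk2, hk3, hu0, mul_one, t0] at h
      push_cast at h
      linear_combination h
    have tK : (kp (C v7) (C v7') (C v7'')).trace = a + 2 := by
      simp only [kp, Matrix.trace_smul, Matrix.trace_add, Matrix.trace_one, Fintype.card_fin,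
        k1, k2, x2, smul_eq_mul, hDC]
      push_cast
      ring
    have tP : (avg 3 (C c7)).trace = a + 2 := by rw [t0]; push_cast; ring
    set P := avg 3 (C c7)
    set K := kp (C v7) (C v7') (C v7'') with hKdef
    have hc1 : Commute P (1 - K) := (Commute.one_right P).sub_right comm
    have hc2 : Commute K (1 - P) := (Commute.one_right K).sub_right comm.symm
    have z1 := idem_eq_zero (idem_mul hc1 i0 (IsIdempotentElem.one_sub ki))
      (by rw [mul_sub, mul_one, Matrix.trace_sub, tP, tPK, sub_self])
    have z2 := idem_eq_zero (idem_mul hc2 ki (IsIdempotentElem.one_sub i0))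
      (by rw [mul_sub, mul_one, Matrix.trace_sub, tK, ← comm.eq, tPK, sub_self])
    rw [mul_sub, mul_one, sub_eq_zero] at z1 z2
    have hPK : P = K := z1.trans (comm.eq.trans z2.symm)
    have e1 := trace_c_t hC
    have e2 := trace_k_t hC
    rw [← hKdef, ← hPK, show (P : Mat D) = avg 3 (C c7) from rfl, e1] at e2
    obtain ⟨N, hN⟩ := trace_idem (avg_idem (p := 4) (by norm_num)
      (hC.pow_eq_one (show sign h7 = 1 by decide) (by decide)))
    rw [trace_h hC] at hN
    rw [x3, x2, hDC] at e2
    rw [x2, hDC] at hN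
    push_cast at e2 hN
    have : (36 * N : ℂ) = 36 * a + 62 := by
      linear_combination -36 * e2 - 36 * hN
    have : 36 * N = 36 * a + 62 := by exact_mod_cast this
    omega
  · obtain ⟨j, k, hj, hk⟩ := trace_s hC
    obtain ⟨N, hN⟩ := trace_dihedral hC
    have key := trace_k_s hC
    have x2' : (C v7).trace = (((a : ℝ) - 4 : ℝ) : ℂ) := by
      rw [x2, hDC]; push_cast; ring
    have x33' : (C (c7 * d7)).trace = (((a : ℝ) - 1 : ℝ) : ℂ) := by
      rw [x33]; push_cast; ring
    have x7 : (C s7).trace = (((a : ℝ) + 8 - 7 * j : ℝ) : ℂ) := by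
      rw [eq_sub_of_add_eq hj.symm, hDC]; push_cast; ring
    have x4 : (C h7).trace = ((4 * N - 3 * a + 6 : ℝ) : ℂ) := by
      rw [x2', hDC] at hN
      push_cast at hN ⊢
      linear_combination 2⁻¹ * hN
    rw [x7, hDC] at hk
    have hk' : (a : ℝ) + 8 = 6 * j + k := by
      have : (((a : ℝ) + 8 : ℝ) : ℂ) = ((6 * j + k : ℝ) : ℂ) := by
        push_cast at hk ⊢
        linear_combination 7⁻¹ * hk
      exact_mod_cast this
    have hk'' : a + 8 = 6 * j + k := by exact_mod_cast hk'
    have hj1 : (j : ℝ) ≤ 1 := by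
      have : j ≤ 1 := by omega
      exact_mod_cast this
    have ha2 : (a : ℝ) ≤ 2 := by
      have : a ≤ 2 := by omega
      exact_mod_cast this
    rw [x2', x33', x7, x4, hDR] at key
    simp only [Complex.ofReal_re] at key
    have hN0 : (0 : ℝ) ≤ N := N.cast_nonneg
    linarith

end seven
end AltRep

/-! ### Eight points, dimension at most eleven -/

namespace AltRep
section eight
variable {D : ℕ}

lemma avg_five_cube {x : Mat D} (h : x ^ 5 = 1) : avg 5 (x ^ 3) = avg 5 x := by
  have hx : ∀ k i, x ^ (5 * k + i) = x ^ i := fun k i => by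
    rw [pow_add, pow_mul, h, one_pow, one_mul]
  have h2 := hx 1 1
  have h3 := hx 1 4
  have h4 := hx 2 2
  norm_num at h2 h3 h4
  simp only [avg, Finset.sum_range_succ, Finset.sum_range_zero, zero_add, ← pow_mul]
  norm_num [h2, h3, h4]
  abel

lemma transpose_avg (p : ℕ) (x : Mat D) : (avg p x).transpose = avg p x.transpose := by
  simp only [avg, Matrix.transpose_smul, Matrix.transpose_sum, Matrix.transpose_pow]

lemma avg_mul_self {p : ℕ} {x : Mat D} (h : x ^ p = 1) : avg p x * x = avg p x := by
  have : Commute x (avg p x) := semiconj_avg (Commute.refl x)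
  rw [← this.eq, mul_avg h]

lemma fixed_of_conj {E F V W W' : Mat D} (hW : W * W' = 1) (f5 : F ^ 5 = 1) (hE : E * F = E)
    (hc : Commute E W) (hw : V * F ^ 2 * W = W * F) : E * V = E := by
  have h1 : V = W * F * W' * F ^ 3 := by
    rw [← hw, mul_assoc _ W, hW, mul_one, mul_assoc, ← pow_add, f5, mul_one]
  have h3 : E * F ^ 3 = E := by
    rw [pow_succ, pow_two, ← mul_assoc, ← mul_assoc, hE, hE, hE]
  rw [h1, ← mul_assoc, ← mul_assoc, ← mul_assoc, hc.eq, mul_assoc W, hE, ← hc.eq, mul_assoc E, hW,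
    mul_one, h3]

variable {C : Perm (Fin 8) → Mat D}

/-- The 3-cycle `(0 1 2)` in `A₈`. -/
abbrev c8 : Perm (Fin 8) := swap 0 1 * swap 1 2
/-- The 5-cycle `(3 4 5 6 7)` in `A₈`. -/
abbrev f8 : Perm (Fin 8) := swap 3 4 * swap 4 5 * swap 5 6 * swap 6 7
/-- The involution `(3 4)(5 6)` in `A₈`. -/
abbrev v8 : Perm (Fin 8) := swap 3 4 * swap 5 6
/-- The involution `(3 6)(4 5)` in `A₈`. -/
abbrev v8' : Perm (Fin 8) := swap 3 6 * swap 4 5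
/-- The involution `(3 5)(4 6)` in `A₈`. -/
abbrev v8'' : Perm (Fin 8) := swap 3 5 * swap 4 6

set_option maxRecDepth 10000 in
/-- On the `ω`-eigenspace of `(0 1 2)` the primitive eigenvalues of the 5-cycle `(3 4 5 6 7)` all
have the same multiplicity. -/
lemma five_mult (hC : IsCRep C) {ω z : ℂ} (hz : z ^ 5 = 1) :
    (avg 3 (ω • C c8) * avg 5 (z • C f8)).trace =
      (avg 3 (ω • C c8) * avg 5 (z ^ 2 • C f8)).trace := by
  have sc : sign c8 = 1 := by decide
  have sf : sign f8 = 1 := by decide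
  have c3 : C c8 ^ 3 = 1 := hC.pow_eq_one sc (by decide)
  have f5 : C f8 ^ 5 = 1 := hC.pow_eq_one sf (by decide)
  have sg : sign (swap 0 1 * swap 4 5 * swap 5 7 * swap 7 6 : Perm (Fin 8)) = 1 := by decide
  have gc := hC.semiconj sg sc (b := c8 ^ 2) (by decide)
  have gf := hC.semiconj sg sf (b := f8 ^ 2) (by decide)
  have h1 := hC.trace_eq sg ((semiconj_avg (p := 3) (semiconj_smul gc ω)).mul_right
    (semiconj_avg (p := 5) (semiconj_smul gf z)))
  have i1 : (c8 ^ 2)⁻¹ = c8 := by decide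
  have i2 : (f8 ^ 2)⁻¹ = f8 ^ 3 := by decide
  have cf : Commute (C c8) (C f8) := hC.semiconj sc sf (by decide)
  have hcomm : Commute (avg 3 (ω • C c8)) (avg 5 (z • C f8 ^ 3)) :=
    semiconj_avg (semiconj_smul (SemiconjBy.pow_right (Commute.symm
      (semiconj_avg (semiconj_smul cf.symm ω))) 3) z)
  rw [h1, ← Matrix.trace_transpose, Matrix.transpose_mul, transpose_avg, transpose_avg,
    Matrix.transpose_smul, Matrix.transpose_smul, hC.transpose _ (by decide),
    hC.transpose _ (by decide), i1, i2, hC.pow sf, ← hcomm.eq]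
  have e : z • C f8 ^ 3 = (z ^ 2 • C f8) ^ 3 := by
    rw [smul_pow, ← pow_mul, show 2 * 3 = 5 + 1 by rfl, pow_succ z 5, hz, one_mul]
  rw [e, avg_five_cube (smul_pow_eq (by rw [← pow_mul, mul_comm, pow_mul, hz, one_pow]) f5)]

set_option maxRecDepth 10000 in
/-- The multiplicity of a primitive eigenvalue of a 3-cycle in a representation of `A₈` is at least
four, unless the disjoint `A₅` acts trivially on the corresponding eigenspace. -/
lemma eight_mult (hC : IsCRep C) {ω : ℂ} (hω : ω ^ 3 = 1) :
    ∃ β δ : ℕ, (avg 3 (ω • C c8)).trace = β + 4 * δ ∧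
      (δ = 0 → avg 3 (ω • C c8) * kp (C v8) (-C v8') (-C v8'') = 0) := by
  have sc : sign c8 = 1 := by decide
  have sf : sign f8 = 1 := by decide
  have c3 : C c8 ^ 3 = 1 := hC.pow_eq_one sc (by decide)
  have f5 : C f8 ^ 5 = 1 := hC.pow_eq_one sf (by decide)
  have hζ := Complex.isPrimitiveRoot_exp 5 (by norm_num)
  set ζ := Complex.exp (2 * Real.pi * Complex.I / (5 : ℕ))
  have z1 := hζ.pow_eq_one
  have zp : ∀ k : ℕ, (ζ ^ k) ^ 5 = 1 := fun k => by rw [← pow_mul, mul_comm, pow_mul, z1, one_pow]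
  have comm : ∀ {g : Perm (Fin 8)}, sign g = 1 → c8 * g = g * c8 →
      Commute (avg 3 (ω • C c8)) (C g) := fun {g} hg h =>
    Commute.symm (semiconj_avg (semiconj_smul (hC.semiconj hg sc h.symm) ω))
  have cf := comm sf (by decide)
  have i1 := avg_idem (p := 3) (by norm_num) (smul_pow_eq hω c3)
  have hcf : ∀ k, Commute (avg 3 (ω • C c8)) (avg 5 (ζ ^ k • C f8)) := fun k =>
    semiconj_avg (semiconj_smul cf _)
  have hid := fun k => idem_mul (hcf k) i1
    (avg_idem (p := 5) (by norm_num) (smul_pow_eq (zp k) f5))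
  have hs := sum_avg hζ (by norm_num) (C f8)
  obtain ⟨β, hβ⟩ := trace_idem (hid 0)
  obtain ⟨δ, hδ⟩ := trace_idem (hid 1)
  have h2 : (avg 3 (ω • C c8) * avg 5 (ζ ^ 2 • C f8)).trace = δ := by
    rw [← hδ, five_mult hC (zp 1), pow_one]
  have h4 : (avg 3 (ω • C c8) * avg 5 (ζ ^ 4 • C f8)).trace = δ := by
    rw [← h2, five_mult hC (zp 2), ← pow_mul]
  have h3 : (avg 3 (ω • C c8) * avg 5 (ζ ^ 3 • C f8)).trace = δ := by
    rw [← h4, five_mult hC (zp 4), ← pow_mul, show 4 * 2 = 5 + 3 by rfl, pow_add ζ 5 3, z1,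
      one_mul]
  have hs' := congrArg (avg 3 (ω • C c8) * ·) hs
  simp only [Finset.sum_range_succ, Finset.sum_range_zero, zero_add, mul_add, mul_one] at hs'
  refine ⟨β, δ, ?_, fun h0 => ?_⟩
  · rw [← hs']
    simp only [Matrix.trace_add, hβ, hδ, h2, h3, h4]
    ring
  rw [h0, Nat.cast_zero] at hδ h2 h3 h4
  rw [idem_eq_zero (hid 1) hδ, idem_eq_zero (hid 2) h2, idem_eq_zero (hid 3) h3,
    idem_eq_zero (hid 4) h4, add_zero, add_zero, add_zero, add_zero, pow_zero, one_smul] at hs'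
  set E := avg 3 (ω • C c8)
  have hE1 : E * C f8 = E := by rw [← hs', mul_assoc, avg_mul_self f5]
  -- `(3 4)(5 6) = (w f w⁻¹) f⁻²` with `w = (4 6)(6 5)`
  have hEv : E * C v8 = E := by
    have sw : sign (swap 4 6 * swap 6 5 : Perm (Fin 8)) = 1 := by decide
    have hw : C v8 * C f8 ^ 2 * C (swap 4 6 * swap 6 5) = C (swap 4 6 * swap 6 5) * C f8 := by
      rw [← hC.pow sf, ← hC.mul _ _ (by decide) (by decide), ← hC.mul _ _ (by decide) sw,
        ← hC.mul _ _ sw sf]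
      exact congrArg C (by decide)
    have cw := comm sw (by decide)
    exact fixed_of_conj (hC.mul_inv sw) f5 hE1 cw hw
  have hEv' : E * C v8' = E := by
    have sd : sign (swap 3 4 * swap 4 5 : Perm (Fin 8)) = 1 := by decide
    have hd := hC.semiconj sd (show sign v8 = 1 by decide) (b := v8') (by decide)
    have cd := comm sd (by decide)
    have h := congrArg (fun X => E * X * C (swap 3 4 * swap 4 5)⁻¹) hd.eq
    simp only [← mul_assoc] at h
    rw [cd.eq, mul_assoc _ E, hEv, ← cd.eq, mul_assoc, mul_assoc (E * _), hC.mul_inv sd, mul_one,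
      mul_one] at h
    exact h.symm
  have hEv'' : E * C v8'' = E := by
    rw [show v8'' = v8 * v8' by decide, hC.mul _ _ (by decide) (by decide), ← mul_assoc, hEv, hEv']
  simp only [kp, mul_smul_comm, mul_add, mul_neg, mul_one, hEv, hEv', hEv'']
  module

/-- If the product `(1 - c)(1 - v)` does not vanish, a primitive eigenvalue of a 3-cycle has
multiplicity at least four; `b` and `e` are the joint multiplicities of two disjoint 3-cycles. -/
theorem eight_basic (hC : IsCRep C) (hne : (1 - C c8) * (1 - C v8) ≠ 0) :
    ∃ a b e : ℕ, D = a + 4 * b + 4 * e ∧ 1 ≤ b ∧ 1 ≤ e ∧ 4 ≤ b + 2 * e ∧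
      (C c8).trace = a - 2 * e + b := by
  have hω := Complex.isPrimitiveRoot_exp 3 (by norm_num)
  obtain ⟨u, u0, a, b, e, -, hu, t0, hH, hD, hb, he, -, ht, x3, -, -⟩ :=
    seven_basic (hC.pull Fin.castSuccEmb) hω
  obtain ⟨β, δ, h1, h2⟩ := eight_mult hC hω.pow_eq_one
  have ec : embHom Fin.castSuccEmb c7 = c8 := by decide
  have ev : embHom Fin.castSuccEmb v7 = v8 := by decide
  have ev' : embHom Fin.castSuccEmb v7' = v8' := by decide
  have ev'' : embHom Fin.castSuccEmb v7'' = v8'' := by decide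
  simp only [ec, ev, ev', ev''] at hu hH ht x3
  have hu0 : u ≠ 0 := fun h => hne (hH h)
  have hδ : δ ≠ 0 := fun h => hu0 (by rw [h2 h, Matrix.trace_zero] at hu; exact_mod_cast hu.symm)
  have hm : b + 2 * e = β + 4 * δ := by exact_mod_cast ht.symm.trans h1
  exact ⟨a, b, e, by exact_mod_cast hD, by omega, by omega, by omega, x3⟩

/-- By `eight_basic`, non-vanishing needs `b, e ≥ 1` and `b + 2 e ≥ 4`, so `4 b + 4 e ≥ 12`. -/
theorem eight_le_eleven (hC : IsCRep C) (hD : D ≤ 11) : (1 - C c8) * (1 - C v8) = 0 := by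
  by_contra hne
  obtain ⟨a, b, e, h1, h2, h3, h4, -⟩ := eight_basic hC hne
  omega

end eight
end AltRep

/-! ### Nine points, dimension at most fourteen -/

namespace AltRep
section nine
variable {D : ℕ}

lemma fixed_of_semiconj {G V X Y Y' : Mat D} (hY : Y * Y' = 1) (hc : Commute G Y) (hG : G * V = G)
    (h : SemiconjBy Y V X) : G * X = G := by
  have e : X = Y * V * Y' := by rw [h.eq, mul_assoc, hY, mul_one]
  rw [e, ← mul_assoc, ← mul_assoc, hc.eq, mul_assoc Y, hG, ← hc.eq, mul_assoc, hY, mul_one]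

variable {C : Perm (Fin 9) → Mat D}

/-- The 3-cycle `(0 1 2)` in `A₉`. -/
abbrev c9 : Perm (Fin 9) := swap 0 1 * swap 1 2
/-- The 3-cycle `(3 4 5)` in `A₉`. -/
abbrev d9 : Perm (Fin 9) := swap 3 4 * swap 4 5
/-- The involution `(3 4)(5 6)` in `A₉`. -/
abbrev v9 : Perm (Fin 9) := swap 3 4 * swap 5 6
/-- The involution `(3 6)(4 5)` in `A₉`. -/
abbrev v9' : Perm (Fin 9) := swap 3 6 * swap 4 5
/-- The involution `(3 5)(4 6)` in `A₉`. -/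
abbrev v9'' : Perm (Fin 9) := swap 3 5 * swap 4 6
/-- The involution `(0 1)(2 7)` in `A₉`. -/
abbrev w9 : Perm (Fin 9) := swap 0 1 * swap 2 7
/-- The involution `(0 7)(1 2)` in `A₉`. -/
abbrev w9' : Perm (Fin 9) := swap 0 7 * swap 1 2
/-- The involution `(0 2)(1 7)` in `A₉`. -/
abbrev w9'' : Perm (Fin 9) := swap 0 2 * swap 1 7

set_option maxRecDepth 10000 in
/-- A matrix commuting with the action of the alternating group on `{0, 1, 2, 7, 8}` and absorbing
one double transposition absorbs the 3-cycle `(0 1 2) = (0 1)(7 8) · (1 2)(7 8)`. -/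
lemma absorb_three (hC : IsCRep C) {G : Mat D}
    (hc : ∀ g : Perm (Fin 9), sign g = 1 → v9 * g = g * v9 → v9' * g = g * v9' →
      v9'' * g = g * v9'' → Commute G (C g)) (hG : G * C w9 = G) : G * C c9 = G := by
  have sw : sign w9 = 1 := by decide
  have s1 : sign (swap 0 1 * swap 2 8 : Perm (Fin 9)) = 1 := by decide
  have s2 : sign (swap 0 1 * swap 1 2 * swap 2 7 * swap 7 8 : Perm (Fin 9)) = 1 := by decide
  have h1 := fixed_of_semiconj (hC.mul_inv s1)
    (hc _ s1 (by decide) (by decide) (by decide)) hG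
    (hC.semiconj s1 sw (b := swap 0 1 * swap 7 8) (by decide))
  have h2 := fixed_of_semiconj (hC.mul_inv s2)
    (hc _ s2 (by decide) (by decide) (by decide)) hG
    (hC.semiconj s2 sw (b := swap 1 2 * swap 7 8) (by decide))
  rw [show c9 = (swap 0 1 * swap 7 8) * (swap 1 2 * swap 7 8) by decide,
    hC.mul _ _ (by decide) (by decide), ← mul_assoc, h1, h2]

set_option maxRecDepth 10000 in
/-- Consider the commuting Klein four-groups on `{3, 4, 5, 6}` and `{0, 1, 2, 7}`. Let `q`, `p` and `k`
be the multiplicities of a pair of characters of which both, exactly one, or none is trivial; then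
`D = q + 6 p + 9 k`. If `k = 0`, the second group acts trivially where the first one acts
nontrivially, and `absorb_three` applies. Otherwise `k = 1` and `p = 0`, so the 3-cycle `(0 1 2)` has
trace `q = D - 9`, which contradicts `eight_basic`. -/
theorem nine_le_fourteen (hC : IsCRep C) (hD : D ≤ 14) : (1 - C c9) * (1 - C v9) = 0 := by
  have sc : sign c9 = 1 := by decide
  have sd : sign d9 = 1 := by decide
  have sv : sign v9 = 1 := by decide
  have sv' : sign v9' = 1 := by decide
  have sv'' : sign v9'' = 1 := by decide
  have sw : sign w9 = 1 := by decide
  have sw' : sign w9' = 1 := by decide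
  have sw'' : sign w9'' = 1 := by decide
  have hV : IsTetra (C v9) (C v9') (C v9'') (C d9) :=
    { hC.klein sv sv' (by decide) (by decide) (by decide) (by decide) with
      c1 := hC.semiconj sd sv (by decide)
      c2 := hC.semiconj sd sv' (by decide)
      c3 := hC.semiconj sd sv'' (by decide)
      d3 := hC.pow_eq_one sd (by decide) }
  have hW : IsTetra (C w9) (C w9') (C w9'') (C c9) :=
    { hC.klein sw sw' (by decide) (by decide) (by decide) (by decide) with
      c1 := hC.semiconj sc sw (by decide)
      c2 := hC.semiconj sc sw' (by decide)
      c3 := hC.semiconj sc sw'' (by decide)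
      d3 := hC.pow_eq_one sc (by decide) }
  have kcomm : ∀ g : Perm (Fin 9), sign g = 1 → v9 * g = g * v9 → v9' * g = g * v9' →
      v9'' * g = g * v9'' → Commute (kp (C v9) (C v9') (C v9'')) (C g) := fun g hg h1 h2 h3 =>
    Commute.symm (semiconj_kp (hC.semiconj hg sv h1.symm) (hC.semiconj hg sv' h2.symm)
      (hC.semiconj hg sv'' h3.symm))
  have k1comm : ∀ g : Perm (Fin 9), sign g = 1 → v9 * g = g * v9 → v9' * g = g * v9' →
      v9'' * g = g * v9'' → Commute (kp (C v9) (-C v9') (-C v9'')) (C g) ∧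
        Commute (kp (C v9') (-C v9'') (-C v9)) (C g) ∧
        Commute (kp (C v9'') (-C v9) (-C v9')) (C g) := fun g hg h1 h2 h3 => by
    have e1 := hC.semiconj hg sv h1.symm
    have e2 := hC.semiconj hg sv' h2.symm
    have e3 := hC.semiconj hg sv'' h3.symm
    exact ⟨Commute.symm (semiconj_kp e1 e2.neg_right e3.neg_right),
      Commute.symm (semiconj_kp e2 e3.neg_right e1.neg_right),
      Commute.symm (semiconj_kp e3 e1.neg_right e2.neg_right)⟩
  have kw := kcomm w9 sw (by decide) (by decide) (by decide)
  have kw' := kcomm w9' sw' (by decide) (by decide) (by decide)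
  have kw'' := kcomm w9'' sw'' (by decide) (by decide) (by decide)
  have kc := kcomm c9 sc (by decide) (by decide) (by decide)
  obtain ⟨k1w, k2w, k3w⟩ := k1comm w9 sw (by decide) (by decide) (by decide)
  obtain ⟨k1w', k2w', k3w'⟩ := k1comm w9' sw' (by decide) (by decide) (by decide)
  obtain ⟨k1w'', k2w'', k3w''⟩ := k1comm w9'' sw'' (by decide) (by decide) (by decide)
  obtain ⟨k1c, k2c, k3c⟩ := k1comm c9 sc (by decide) (by decide) (by decide)
  -- the swap of the two Klein groups
  have sσ : sign (swap 0 3 * swap 1 4 * swap 2 5 * swap 7 6 : Perm (Fin 9)) = 1 := by decide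
  have σv := hC.semiconj sσ sv (b := w9) (by decide)
  have σv' := hC.semiconj sσ sv' (b := w9') (by decide)
  have σv'' := hC.semiconj sσ sv'' (b := w9'') (by decide)
  have σw := hC.semiconj sσ sw (b := v9) (by decide)
  have σw' := hC.semiconj sσ sw' (b := v9') (by decide)
  have σw'' := hC.semiconj sσ sw'' (b := v9'') (by decide)
  have dw : Commute (C d9) (C w9) := hC.semiconj sd sw (by decide)
  have dw' : Commute (C d9) (C w9') := hC.semiconj sd sw' (by decide)
  have dw'' : Commute (C d9) (C w9'') := hC.semiconj sd sw'' (by decide)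
  have tr1 : (kp (C v9) (-C v9') (-C v9'') * kp (C w9) (C w9') (C w9'')).trace =
      (kp (C v9) (C v9') (C v9'') * kp (C w9) (-C w9') (-C w9'')).trace := by
    rw [hC.trace_eq sσ ((semiconj_kp σv σv'.neg_right σv''.neg_right).mul_right
      (semiconj_kp σw σw' σw'')), Matrix.trace_mul_comm]
  have i0 := kp_idem hV.toIsKlein
  have i1 := kp_idem hV.toIsKlein.twist
  have i2 := kp_idem hV.rot.toIsKlein.twist
  have i3 := kp_idem hV.rot.rot.toIsKlein.twist
  have j0 := kp_idem hW.toIsKlein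
  have j1 := kp_idem hW.toIsKlein.twist
  have j2 := kp_idem hW.rot.toIsKlein.twist
  have j3 := kp_idem hW.rot.rot.toIsKlein.twist
  have sV := kp_sum (C v9) (C v9') (C v9'')
  have sW := kp_sum (C w9) (C w9') (C w9'')
  have l0d : Commute (kp (C w9) (C w9') (C w9'')) (C d9) :=
    Commute.symm (semiconj_kp dw dw' dw'')
  have l1d : Commute (kp (C w9) (-C w9') (-C w9'')) (C d9) :=
    Commute.symm (semiconj_kp dw dw'.neg_right dw''.neg_right)
  have l2d : Commute (kp (C w9') (-C w9'') (-C w9)) (C d9) :=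
    Commute.symm (semiconj_kp dw' dw''.neg_right dw.neg_right)
  have l3d : Commute (kp (C w9'') (-C w9) (-C w9')) (C d9) :=
    Commute.symm (semiconj_kp dw'' dw.neg_right dw'.neg_right)
  -- rotation traces, in both factors
  have wk0 := hW.trace_k_eq kc
  have wk0' := hW.rot.trace_k_eq kc
  have wk1 := hW.trace_k_eq k1c
  have wk1' := hW.rot.trace_k_eq k1c
  have wk2 := hW.trace_k_eq k2c
  have wk2' := hW.rot.trace_k_eq k2c
  have wk3 := hW.trace_k_eq k3c
  have wk3' := hW.rot.trace_k_eq k3c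
  have vk0 := hV.trace_k_eq l0d
  have vk0' := hV.rot.trace_k_eq l0d
  have vk1 := hV.trace_k_eq l1d
  have vk1' := hV.rot.trace_k_eq l1d
  have z1 := (hW.trace_mul_k1 k1w k1w' k1w'').1
  have z2 := (hW.rot.trace_mul_k1 k1w' k1w'' k1w).1
  have z3 := (hW.rot.rot.trace_mul_k1 k1w'' k1w k1w').1
  have y1 := (hW.trace_mul_k1 k2w k2w' k2w'').1
  have y2 := (hW.rot.trace_mul_k1 k2w' k2w'' k2w).1
  have y3 := (hW.rot.rot.trace_mul_k1 k2w'' k2w k2w').1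
  have x1 := (hW.trace_mul_k1 k3w k3w' k3w'').1
  have x2 := (hW.rot.trace_mul_k1 k3w' k3w'' k3w).1
  have x3 := (hW.rot.rot.trace_mul_k1 k3w'' k3w k3w').1
  have L0w : (1 - kp (C w9) (C w9') (C w9'')) * (1 - C w9) = 1 - C w9 := by
    have : kp (C w9) (C w9') (C w9'') * (1 - C w9) = 0 := by
      simp only [kp, smul_mul_assoc, mul_sub, mul_one, add_mul, one_mul, hW.s1, hW.m21, hW.m31]
      module
    rw [sub_mul, one_mul, this, sub_zero]
  have K0v : (1 - kp (C v9) (C v9') (C v9'')) * (1 - C v9) = 1 - C v9 := by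
    have : kp (C v9) (C v9') (C v9'') * (1 - C v9) = 0 := by
      simp only [kp, smul_mul_assoc, mul_sub, mul_one, add_mul, one_mul, hV.s1, hV.m21, hV.m31]
      module
    rw [sub_mul, one_mul, this, sub_zero]
  have a00 := semiconj_kp kw kw' kw''
  have a01 := semiconj_kp kw kw'.neg_right kw''.neg_right
  have a02 := semiconj_kp kw' kw''.neg_right kw.neg_right
  have a03 := semiconj_kp kw'' kw.neg_right kw'.neg_right
  have a10 := semiconj_kp k1w k1w' k1w''
  have a11 := semiconj_kp k1w k1w'.neg_right k1w''.neg_right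
  have a12 := semiconj_kp k1w' k1w''.neg_right k1w.neg_right
  have a13 := semiconj_kp k1w'' k1w.neg_right k1w'.neg_right
  have a20 := semiconj_kp k2w k2w' k2w''
  have a21 := semiconj_kp k2w k2w'.neg_right k2w''.neg_right
  have a22 := semiconj_kp k2w' k2w''.neg_right k2w.neg_right
  have a23 := semiconj_kp k2w'' k2w.neg_right k2w'.neg_right
  have a30 := semiconj_kp k3w k3w' k3w''
  have a31 := semiconj_kp k3w k3w'.neg_right k3w''.neg_right
  have a32 := semiconj_kp k3w' k3w''.neg_right k3w.neg_right
  have a33 := semiconj_kp k3w'' k3w.neg_right k3w'.neg_right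
  set K0 := kp (C v9) (C v9') (C v9'')
  set K1 := kp (C v9) (-C v9') (-C v9'')
  set K2 := kp (C v9') (-C v9'') (-C v9)
  set K3 := kp (C v9'') (-C v9) (-C v9')
  set L0 := kp (C w9) (C w9') (C w9'')
  set L1 := kp (C w9) (-C w9') (-C w9'')
  set L2 := kp (C w9') (-C w9'') (-C w9)
  set L3 := kp (C w9'') (-C w9) (-C w9')
  obtain ⟨q, hq⟩ := trace_idem (idem_mul a00 i0 j0)
  obtain ⟨p, hp⟩ := trace_idem (idem_mul a01 i0 j1)
  obtain ⟨k, hk⟩ := trace_idem (idem_mul a11 i1 j1)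
  have tp2 : (K0 * L2).trace = p := by rw [wk0, hp]
  have tp3 : (K0 * L3).trace = p := by rw [wk0', tp2]
  have tp1' : (K1 * L0).trace = p := by rw [tr1, hp]
  have tp2' : (K2 * L0).trace = p := by
    rw [Matrix.trace_mul_comm, vk0, Matrix.trace_mul_comm, tp1']
  have tp3' : (K3 * L0).trace = p := by
    rw [Matrix.trace_mul_comm, vk0', Matrix.trace_mul_comm, tp2']
  have t12 : (K1 * L2).trace = k := by rw [wk1, hk]
  have t13 : (K1 * L3).trace = k := by rw [wk1', t12]
  have t21 : (K2 * L1).trace = k := by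
    rw [Matrix.trace_mul_comm, vk1, Matrix.trace_mul_comm, hk]
  have t22 : (K2 * L2).trace = k := by rw [wk2, t21]
  have t23 : (K2 * L3).trace = k := by rw [wk2', t22]
  have t31 : (K3 * L1).trace = k := by
    rw [Matrix.trace_mul_comm, vk1', Matrix.trace_mul_comm, t21]
  have t32 : (K3 * L2).trace = k := by rw [wk3, t31]
  have t33 : (K3 * L3).trace = k := by rw [wk3', t32]
  have hDn : D = q + 6 * p + 9 * k := by
    have h : ((K0 + K1 + K2 + K3) * (L0 + L1 + L2 + L3)).trace = (D : ℂ) := by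
      rw [sV, sW, one_mul, Matrix.trace_one, Fintype.card_fin]
    simp only [add_mul, mul_add, Matrix.trace_add, hq, hp, hk, tp2, tp3, tp1', tp2', tp3', t12,
      t13, t21, t22, t23, t31, t32, t33] at h
    have h' : (D : ℂ) = q + 6 * p + 9 * k := by rw [← h]; ring
    exact_mod_cast h'
  have K0' : 1 - K0 = K1 + K2 + K3 := by rw [← sV]; abel
  have L0' : 1 - L0 = L1 + L2 + L3 := by rw [← sW]; abel
  by_cases hk0 : k = 0
  · rw [hk0, Nat.cast_zero] at hk t12 t13 t21 t22 t23 t31 t32 t33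
    have hKL : (1 - K0) * (1 - L0) = 0 := by
      rw [K0', L0']
      simp only [add_mul, mul_add, idem_eq_zero (idem_mul a11 i1 j1) hk,
        idem_eq_zero (idem_mul a12 i1 j2) t12, idem_eq_zero (idem_mul a13 i1 j3) t13,
        idem_eq_zero (idem_mul a21 i2 j1) t21, idem_eq_zero (idem_mul a22 i2 j2) t22,
        idem_eq_zero (idem_mul a23 i2 j3) t23, idem_eq_zero (idem_mul a31 i3 j1) t31,
        idem_eq_zero (idem_mul a32 i3 j2) t32, idem_eq_zero (idem_mul a33 i3 j3) t33, add_zero]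
    have hG : (1 - K0) * C w9 = 1 - K0 := by
      have h : (1 - K0) * (1 - C w9) = 0 := by rw [← L0w, ← mul_assoc, hKL, zero_mul]
      rw [mul_sub, mul_one, sub_eq_zero] at h
      exact h.symm
    have hcG := fun g hg h1 h2 h3 => (Commute.one_left (C g)).sub_left (kcomm g hg h1 h2 h3)
    have hGc := absorb_three hC hcG hG
    have := hcG c9 sc (by decide) (by decide) (by decide)
    rw [← K0v, ← mul_assoc, sub_mul, one_mul, ← this.eq, hGc, sub_self, zero_mul]
  · by_contra hne
    have hp0 : p = 0 := by omega
    have hk1 : k = 1 := by omega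
    rw [hp0, Nat.cast_zero] at hp tp2 tp3 tp1' tp2' tp3'
    have hKL : K0 * (1 - L0) = 0 := by
      rw [L0']
      simp only [mul_add, idem_eq_zero (idem_mul a01 i0 j1) hp,
        idem_eq_zero (idem_mul a02 i0 j2) tp2, idem_eq_zero (idem_mul a03 i0 j3) tp3, add_zero]
    have hG : K0 * C w9 = K0 := by
      have h : K0 * (1 - C w9) = 0 := by rw [← L0w, ← mul_assoc, hKL, zero_mul]
      rw [mul_sub, mul_one, sub_eq_zero] at h
      exact h.symm
    have hGc := absorb_three hC kcomm hG
    have n1 := idem_eq_zero (idem_mul a10 i1 j0) tp1'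
    have n2 := idem_eq_zero (idem_mul a20 i2 j0) tp2'
    have n3 := idem_eq_zero (idem_mul a30 i3 j0) tp3'
    have part : ∀ X : Mat D, X * L0 = 0 → Commute X (C c9) → (X * C c9 * L1).trace = 0 →
        (X * C c9 * L2).trace = 0 → (X * C c9 * L3).trace = 0 → (X * C c9).trace = 0 := by
      intro X h0 hX h1 h2 h3
      rw [← mul_one (X * C c9), ← sW, mul_add, mul_add, mul_add, Matrix.trace_add,
        Matrix.trace_add, Matrix.trace_add, h1, h2, h3, hX.eq, mul_assoc, h0, mul_zero,
        Matrix.trace_zero]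
      ring
    have tc : (C c9).trace = q := by
      have tK0 : K0.trace = q := by
        rw [← mul_one K0, ← sW]
        simp only [mul_add, Matrix.trace_add, hq, hp, tp2, tp3, add_zero]
      rw [← one_mul (C c9), ← sV, add_mul, add_mul, add_mul, Matrix.trace_add, Matrix.trace_add,
        Matrix.trace_add, hGc, part _ n1 k1c z1 z2 z3, part _ n2 k2c y1 y2 y3,
        part _ n3 k3c x1 x2 x3, tK0]
      ring
    have ec : embHom Fin.castSuccEmb c8 = c9 := by decide
    have ev : embHom Fin.castSuccEmb v8 = v9 := by decide
    obtain ⟨a, b, e, h1, h2, h3, h4, h5⟩ := eight_basic (hC.pull Fin.castSuccEmb)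
      (by simpa only [ec, ev] using hne)
    simp only [ec] at h5
    rw [tc] at h5
    have h6 : (q : ℤ) = a - 2 * e + b := by exact_mod_cast h5
    omega
end nine
end AltRep

/-! ### From complex matrices back to real representations -/

namespace AltRep
section transfer
variable {V : Type} [NormedAddCommGroup V] [InnerProductSpace ℝ V] [FiniteDimensional ℝ V]

/-- The matrix, with entries regarded as complex numbers, of a real endomorphism in the standard
orthonormal basis. -/
noncomputable def cmat (V : Type) [NormedAddCommGroup V] [InnerProductSpace ℝ V]
    [FiniteDimensional ℝ V] : (V →ₗ[ℝ] V) →+* Mat (finrank ℝ V) :=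
  (Complex.ofRealHom.mapMatrix).comp
    ((LinearMap.toMatrixAlgEquiv (stdOrthonormalBasis ℝ V).toBasis : (V →ₗ[ℝ] V) ≃ₐ[ℝ] _) :
      (V →ₗ[ℝ] V) →+* Matrix (Fin (finrank ℝ V)) (Fin (finrank ℝ V)) ℝ)

lemma cmat_injective : Function.Injective (cmat V) := by
  intro f g h
  refine (LinearMap.toMatrixAlgEquiv (stdOrthonormalBasis ℝ V).toBasis).injective ?_
  exact Matrix.map_injective Complex.ofReal_injective h

lemma cmat_apply (f : V →ₗ[ℝ] V) (i j : Fin (finrank ℝ V)) :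
    cmat V f i j = ((⟪stdOrthonormalBasis ℝ V i, f (stdOrthonormalBasis ℝ V j)⟫_ℝ : ℝ) : ℂ) := by
  simp [cmat, LinearMap.toMatrixAlgEquiv_apply, OrthonormalBasis.repr_apply_apply]

lemma IsEvenRep.inner_inv {α : Type} [Fintype α] [DecidableEq α] {R : Perm α → V →ₗ[ℝ] V}
    (hR : IsEvenRep R) {g : Perm α} (hg : sign g = 1) (x y : V) :
    ⟪x, R g⁻¹ y⟫_ℝ = ⟪R g x, y⟫_ℝ := by
  rw [← hR.inner g hg x, ← Module.End.mul_apply, ← hR.mul _ _ hg (by simp [hg]), mul_inv_cancel,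
    hR.one, Module.End.one_apply]

lemma IsEvenRep.isCRep {m : ℕ} {R : Perm (Fin m) → V →ₗ[ℝ] V} (hR : IsEvenRep R) :
    IsCRep (fun g => cmat V (R g)) where
  one := by rw [hR.one, map_one]
  mul g h hg hh := by rw [hR.mul g h hg hh, map_mul]
  transpose g hg := by
    ext i j
    rw [Matrix.transpose_apply, cmat_apply, cmat_apply, hR.inner_inv hg, real_inner_comm]
  conjTranspose g hg := by
    ext i j
    rw [Matrix.conjTranspose_apply, cmat_apply, cmat_apply, hR.inner_inv hg, real_inner_comm]
    simp

lemma exists_extend {n k : ℕ} (h7 : 7 ≤ k) (hk : k ≤ n) (p : Fin 7 ↪ Fin n) :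
    ∃ q : Fin k ↪ Fin n, ∀ i : Fin 7, q (Fin.castLE h7 i) = p i := by
  obtain ⟨σ, hσ⟩ := Perm.exists_extending_pair (fun i : Fin 7 => Fin.castLEEmb hk (Fin.castLE h7 i))
    p (fun i j h => by simpa using h) p.injective
  exact ⟨(Fin.castLEEmb hk).trans σ.toEmbedding, hσ⟩

/-- A vanishing statement for complexified representations of the even permutations of `k` points
gives property `DisjointKill` on `n ≥ k` points. -/
lemma disjointKill_of_complex {n k : ℕ} (h7 : 7 ≤ k) (hk : k ≤ n) {R : Perm (Fin n) → V →ₗ[ℝ] V}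
    (hR : IsEvenRep R)
    (h : ∀ C : Perm (Fin k) → Mat (finrank ℝ V), IsCRep C →
      (1 - C (swap (Fin.castLE h7 0) (Fin.castLE h7 1) * swap (Fin.castLE h7 1) (Fin.castLE h7 2))) *
      (1 - C (swap (Fin.castLE h7 3) (Fin.castLE h7 4) *
        swap (Fin.castLE h7 5) (Fin.castLE h7 6))) = 0) :
    DisjointKill R := by
  intro p
  obtain ⟨q, hq⟩ := exists_extend h7 hk p
  have := h _ (hR.pull q).isCRep
  simp only [map_mul (embHom q), embHom_swap, hq] at this
  apply cmat_injective
  rw [(cmat V).map_zero, (cmat V).map_mul, (cmat V).map_sub, (cmat V).map_sub, (cmat V).map_one]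
  exact this

/-- Up to eleven points, the dimension bound `n + 3` is covered by the cases of seven, eight and nine
points, after restriction to fewer points if necessary. -/
lemma disjointKill_small {n : ℕ} (hn : 7 ≤ n) (hn' : n ≤ 11) {R : Perm (Fin n) → V →ₗ[ℝ] V}
    (hR : IsEvenRep R) (hd : finrank ℝ V ≤ n + 3) : DisjointKill R := by
  rcases (by omega : finrank ℝ V ≤ 10 ∨ (8 ≤ n ∧ finrank ℝ V ≤ 11) ∨ (9 ≤ n ∧ finrank ℝ V ≤ 14))
    with h | ⟨h8, h⟩ | ⟨h9, h⟩
  · exact disjointKill_of_complex (k := 7) (by decide) hn hR fun C hC => seven_le_ten hC h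
  · exact disjointKill_of_complex (k := 8) (by decide) h8 hR fun C hC => eight_le_eleven hC h
  · exact disjointKill_of_complex (k := 9) (by decide) h9 hR fun C hC => nine_le_fourteen hC h
end transfer
end AltRep

/-! ### Induction on the number of points -/

namespace AltRep
section klein
variable {V : Type} [AddCommGroup V] [Module ℝ V]

/-- The isotypic component of a character of the Klein four-group `{1, v₁, v₂, v₃}`: the space on
which `v₁` acts as `1` and `v₂` as `-1`. -/
def kleinPart (v₁ v₂ : V →ₗ[ℝ] V) : Submodule ℝ V :=
  LinearMap.ker (v₁ - 1) ⊓ LinearMap.ker (v₂ + 1)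

lemma mem_kleinPart {v₁ v₂ : V →ₗ[ℝ] V} {x : V} :
    x ∈ kleinPart v₁ v₂ ↔ v₁ x = x ∧ v₂ x = -x := by
  simp [kleinPart, sub_eq_zero, add_eq_zero_iff_eq_neg]

/-- The Klein four-group `{1, v₁, v₂, v₃}` together with an operator `d` of order three permuting
`v₁, v₂, v₃` cyclically under conjugation, acting on a real space. -/
structure IsRealTetra (v₁ v₂ v₃ d : V →ₗ[ℝ] V) : Prop where
  s1 : v₁ * v₁ = 1
  s2 : v₂ * v₂ = 1
  m12 : v₁ * v₂ = v₃
  m21 : v₂ * v₁ = v₃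
  d1 : d * v₁ = v₂ * d
  d2 : d * v₂ = v₃ * d
  d3 : d * v₃ = v₁ * d
  cube : d * (d * d) = 1

variable {v₁ v₂ v₃ d : V →ₗ[ℝ] V}

/-- The three nontrivial isotypic components are permuted by `d`, hence equidimensional. -/
lemma IsRealTetra.finrank_le [FiniteDimensional ℝ V] (h : IsRealTetra v₁ v₂ v₃ d) :
    3 * finrank ℝ (kleinPart v₁ v₂) ≤ finrank ℝ V := by
  have d1 : ∀ x, d (v₁ x) = v₂ (d x) := LinearMap.congr_fun h.d1
  have d2 : ∀ x, d (v₂ x) = v₃ (d x) := LinearMap.congr_fun h.d2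
  have d3 : ∀ x, d (v₃ x) = v₁ (d x) := LinearMap.congr_fun h.d3
  have m12 : ∀ x, v₁ (v₂ x) = v₃ x := LinearMap.congr_fun h.m12
  have hd : Function.Injective d := by
    intro x y hxy
    have e : ∀ x, d (d (d x)) = x := LinearMap.congr_fun h.cube
    rw [← e x, hxy, e]
  let X := kleinPart v₁ v₂
  let f : (X × X × X) →ₗ[ℝ] V := X.subtype.coprod ((d ∘ₗ X.subtype).coprod (d ∘ₗ d ∘ₗ X.subtype))
  have hf : Function.Injective f := by
    rw [injective_iff_map_eq_zero]
    rintro ⟨⟨x, hx⟩, ⟨y, hy⟩, ⟨z, hz⟩⟩ hxyz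
    rw [mem_kleinPart] at hx hy hz
    have e : x + (d y + d (d z)) = 0 := hxyz
    have v3 : ∀ y, v₁ y = y ∧ v₂ y = -y → v₃ y = -y := fun y hy => by
      rw [← m12, hy.2, map_neg, hy.1]
    have y1 : v₁ (d y) = -d y := by rw [← d3, v3 y hy, map_neg]
    have y2 : v₂ (d y) = d y := by rw [← d1, hy.1]
    have y1' : v₁ (d z) = -d z := by rw [← d3, v3 z hz, map_neg]
    have y3' : v₃ (d z) = -d z := by rw [← d2, hz.2, map_neg]
    have z1 : v₁ (d (d z)) = -d (d z) := by rw [← d3, y3', map_neg]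
    have z2 : v₂ (d (d z)) = -d (d z) := by rw [← d1, y1', map_neg]
    have e1 : x + (-d y + -d (d z)) = 0 := by
      have := congrArg v₁ e
      rwa [map_add, map_add, hx.1, y1, z1, map_zero] at this
    have e2 : -x + (d y + -d (d z)) = 0 := by
      have := congrArg v₂ e
      rwa [map_add, map_add, hx.2, y2, z2, map_zero] at this
    have hx0 : x = 0 := by
      have : (2 : ℝ) • x = 0 := by linear_combination (norm := module) e + e1
      simpa using this
    have hy0 : d y = 0 := by
      have : (2 : ℝ) • d y = 0 := by linear_combination (norm := module) e + e2
      simpa using this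
    have hz0 : d (d z) = 0 := by
      rwa [hx0, hy0, zero_add, zero_add] at e
    have hy0 : y = 0 := hd (by rw [hy0, map_zero])
    have hz0 : z = 0 := hd (hd (by rw [hz0, map_zero, map_zero]))
    subst hx0 hy0 hz0
    rfl
  have := LinearMap.finrank_le_finrank_of_injective hf
  rw [finrank_prod, finrank_prod] at this
  change 3 * finrank ℝ X ≤ _
  omega

/-- An operator commuting with `d` and trivial on one nontrivial isotypic component is trivial on
all three, so it is killed against `1 - v₁`. -/
lemma IsRealTetra.kill (h : IsRealTetra v₁ v₂ v₃ d) {c : V →ₗ[ℝ] V} (hc : c * d = d * c)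
    (hX : ∀ x ∈ kleinPart v₁ v₂, c x = x) : (1 - c) * (1 - v₁) = 0 := by
  have d1 : ∀ x, d (v₁ x) = v₂ (d x) := LinearMap.congr_fun h.d1
  have d2 : ∀ x, d (v₂ x) = v₃ (d x) := LinearMap.congr_fun h.d2
  have d3 : ∀ x, d (v₃ x) = v₁ (d x) := LinearMap.congr_fun h.d3
  have m12 : ∀ x, v₁ (v₂ x) = v₃ x := LinearMap.congr_fun h.m12
  have m21 : ∀ x, v₂ (v₁ x) = v₃ x := LinearMap.congr_fun h.m21
  have s1 : ∀ x, v₁ (v₁ x) = x := LinearMap.congr_fun h.s1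
  have s2 : ∀ x, v₂ (v₂ x) = x := LinearMap.congr_fun h.s2
  have dd : ∀ x, d (d (d x)) = x := LinearMap.congr_fun h.cube
  have cd : ∀ x, c (d x) = d (c x) := LinearMap.congr_fun hc
  -- the component with signs `(-1, -1, 1)`
  have k3 : ∀ x, v₁ x = -x → v₂ x = -x → c x = x := by
    intro x h1 h2
    have h3 : v₃ x = x := by rw [← m12, h2, map_neg, h1, neg_neg]
    have := hX (d x) (mem_kleinPart.2 ⟨by rw [← d3, h3], by rw [← d1, h1, map_neg]⟩)
    rw [cd] at this
    rw [← dd (c x), this, dd]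
  -- the component with signs `(-1, 1, -1)`
  have k2 : ∀ x, v₁ x = -x → v₂ x = x → c x = x := by
    intro x h1 h2
    have h3 : v₃ x = -x := by rw [← m12, h2, h1]
    have := k3 (d x) (by rw [← d3, h3, map_neg]) (by rw [← d1, h1, map_neg])
    rw [cd] at this
    rw [← dd (c x), this, dd]
  ext w
  set u := w - v₁ w with hu
  have hu1 : v₁ u = -u := by rw [hu, map_sub, s1]; abel
  have a := k2 (u + v₂ u) (by rw [map_add, m12, ← m21, hu1, map_neg]; abel)
    (by rw [map_add, s2]; abel)
  have b := k3 (u - v₂ u) (by rw [map_sub, m12, ← m21, hu1, map_neg]; abel)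
    (by rw [map_sub, s2]; abel)
  rw [map_add] at a
  rw [map_sub] at b
  have : u - c u = 0 := by
    have : (2 : ℝ) • (u - c u) = 0 := by linear_combination (norm := module) (-1 : ℝ) • a + (-1 : ℝ) • b
    simpa using this
  simpa [hu] using this
end klein

section induction
/-- An enumeration of the points other than `p 3, p 4, p 5, p 6` that begins with `p 0, p 1, p 2`. -/
lemma exists_complement_emb {m : ℕ} (hm : 3 ≤ m) (p : Fin 7 ↪ Fin (m + 4)) :
    ∃ E : Fin m ↪ Fin (m + 4), E ⟨0, by omega⟩ = p 0 ∧ E ⟨1, by omega⟩ = p 1 ∧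
      E ⟨2, by omega⟩ = p 2 ∧ ∀ i : Fin 7, 3 ≤ i → ∀ k, E k ≠ p i := by
  obtain ⟨σ, hσ⟩ := Perm.exists_extending_pair
    (fun i : Fin 7 => (⟨(i + 4) % 7, by omega⟩ : Fin (m + 4))) p
    (fun i j h => by simp only [Fin.mk.injEq] at h; omega) p.injective
  refine ⟨⟨fun k => σ ⟨k + 4, by omega⟩, fun i j h => ?_⟩, hσ 0, hσ 1, hσ 2, ?_⟩
  · have := σ.injective h
    simp only [Fin.mk.injEq] at this; omega
  · intro i hi k h
    have := σ.injective (h.trans (hσ i).symm)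
    simp only [Fin.mk.injEq] at this
    have : 3 ≤ (i : ℕ) := hi
    omega

/-- For `n ≥ 12`, a nontrivial component of the Klein group on four points has dimension at most
`(n + 3) / 3 < n - 5`. The even permutations of the other `n - 4` points act on it, and trivially so
by induction and `trivial_of_finrank_lt`. -/
theorem disjointKill : ∀ (n : ℕ), 7 ≤ n → ∀ (V : Type) [NormedAddCommGroup V]
    [InnerProductSpace ℝ V] [FiniteDimensional ℝ V] (R : Perm (Fin n) → V →ₗ[ℝ] V),
    IsEvenRep R → finrank ℝ V ≤ n + 3 → DisjointKill R := by
  intro n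
  induction n using Nat.strong_induction_on with
  | _ n ih =>
  intro hn V _ _ _ R hR hd
  by_cases hn' : n ≤ 11
  · exact disjointKill_small hn hn' hR hd
  obtain ⟨m, rfl⟩ : ∃ m, n = m + 4 := ⟨n - 4, by omega⟩
  intro p
  obtain ⟨E, E0, E1, E2, hE⟩ := exists_complement_emb (by omega) p
  have hP := hR.pull p
  have rel : ∀ g h k : Perm (Fin 7), sign g = 1 → sign h = 1 → g * h = k →
      R (embHom p g) * R (embHom p h) = R (embHom p k) := fun g h k hg hh e => by
    rw [← e]; exact (hP.mul g h hg hh).symm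
  have rel2 : ∀ g h g' h' : Perm (Fin 7), sign g = 1 → sign h = 1 → sign g' = 1 → sign h' = 1 →
      g * h = g' * h' → R (embHom p g) * R (embHom p h) = R (embHom p g') * R (embHom p h') :=
    fun g h g' h' hg hh hg' hh' e => by
      rw [rel g h _ hg hh e, rel g' h' _ hg' hh' rfl]
  have e1 : R (embHom p 1) = 1 := hP.one
  have hT : IsRealTetra (R (embHom p v7)) (R (embHom p v7')) (R (embHom p v7''))
      (R (embHom p d7)) :=
    { s1 := by rw [rel v7 v7 1 (by decide) (by decide) (by decide), e1]
      s2 := by rw [rel v7' v7' 1 (by decide) (by decide) (by decide), e1]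
      m12 := rel v7 v7' v7'' (by decide) (by decide) (by decide)
      m21 := rel v7' v7 v7'' (by decide) (by decide) (by decide)
      d1 := rel2 _ _ _ _ (by decide) (by decide) (by decide) (by decide) (by decide)
      d2 := rel2 _ _ _ _ (by decide) (by decide) (by decide) (by decide) (by decide)
      d3 := rel2 _ _ _ _ (by decide) (by decide) (by decide) (by decide) (by decide)
      cube := by
        rw [rel d7 d7 _ (by decide) (by decide) rfl, rel d7 _ 1 (by decide) (by decide) (by decide),
          e1] }
  have ec : embHom p c7 = swap (p 0) (p 1) * swap (p 1) (p 2) := by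
    rw [map_mul, embHom_swap, embHom_swap]
  have ev : embHom p v7 = swap (p 3) (p 4) * swap (p 5) (p 6) := by
    rw [map_mul, embHom_swap, embHom_swap]
  rw [← ec, ← ev]
  refine hT.kill (rel2 _ _ _ _ (by decide) (by decide) (by decide) (by decide) (by decide)) ?_
  set X := kleinPart (R (embHom p v7)) (R (embHom p v7')) with hXdef
  have hXd : 3 * finrank ℝ X ≤ finrank ℝ V := hT.finrank_le
  have comm : ∀ (a b c d : Fin 7), 3 ≤ a → 3 ≤ b → 3 ≤ c → 3 ≤ d → ∀ g : Perm (Fin m),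
      embHom p (swap a b * swap c d) * embHom E g = embHom E g * embHom p (swap a b * swap c d) := by
    intro a b c d ha hb hc hd g
    refine (Disjoint.commute fun x => ?_).eq
    by_cases hx : x ∈ Set.range E
    · obtain ⟨k, rfl⟩ := hx
      left
      rw [map_mul, embHom_swap, embHom_swap, Perm.mul_apply,
        swap_apply_of_ne_of_ne (hE c hc k) (hE d hd k),
        swap_apply_of_ne_of_ne (hE a ha k) (hE b hb k)]
    · right
      exact embHom_apply_not E g x hx
  have hX : ∀ g : Perm (Fin m), sign g = 1 → ∀ x ∈ X, R (embHom E g) x ∈ X := by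
    intro g hg x hx
    have sg : sign (embHom E g) = 1 := by rw [sign_embHom, hg]
    have key : ∀ (a b c d : Fin 7), 3 ≤ a → 3 ≤ b → 3 ≤ c → 3 ≤ d →
        sign (swap a b * swap c d) = 1 → R (embHom p (swap a b * swap c d)) (R (embHom E g) x) =
          R (embHom E g) (R (embHom p (swap a b * swap c d)) x) := by
      intro a b c d ha hb hc hd hs
      have hs' : sign (embHom p (swap a b * swap c d)) = 1 := by rw [sign_embHom, hs]
      rw [← Module.End.mul_apply, ← Module.End.mul_apply, ← hR.mul _ _ sg hs',
        ← hR.mul _ _ hs' sg, comm a b c d ha hb hc hd]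
    rw [hXdef, mem_kleinPart] at hx ⊢
    constructor
    · rw [key _ _ _ _ (by decide) (by decide) (by decide) (by decide) (by decide), hx.1]
    · rw [key _ _ _ _ (by decide) (by decide) (by decide) (by decide) (by decide), hx.2, map_neg]
  have hRX := (hR.pull E).restr X hX
  have hXH := ih m (by omega) (by omega) X _ hRX (by omega)
  have ecE : embHom E (swap ⟨0, by omega⟩ ⟨1, by omega⟩ * swap ⟨1, by omega⟩ ⟨2, by omega⟩) =
      embHom p c7 := by
    rw [map_mul, embHom_swap, embHom_swap, E0, E1, E2, ec]
  have sc := sign_embHom E (swap ⟨0, by omega⟩ ⟨1, by omega⟩ * swap ⟨1, by omega⟩ ⟨2, by omega⟩)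
  rw [ecE, sign_embHom, (by decide : sign c7 = 1)] at sc
  have htriv := trivial_of_finrank_lt hRX hXH (by simp; omega) (by simp; omega) sc.symm
  intro x hx
  have := congrArg Subtype.val (LinearMap.congr_fun htriv ⟨x, hx⟩)
  rw [restr_coe (fun g => R (embHom E g)) _ _ (hX _ sc.symm)] at this
  simpa only [ecE, Module.End.one_apply] using this
end induction
end AltRep

/-! ### The commutant and the fixed space -/

open scoped commutatorElement

namespace AltRep
section final
variable {α : Type} [Fintype α] [DecidableEq α] {V : Type} [NormedAddCommGroup V]
  [InnerProductSpace ℝ V] {R : Perm α → V →ₗ[ℝ] V} {Y : α → α → V}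

/-- Fixed vectors are orthogonal to a standard family, since `(p₀ p₁)(p₂ p₃)` negates
`Y p₀ p₁`. -/
lemma IsStdFamily.inner_fixed (h : IsStdFamily R Y) (hR : IsEvenRep R) (p : Fin 7 ↪ α) {x : V}
    (hx : ∀ g, sign g = 1 → R g x = x) (i j : α) : ⟪Y i j, x⟫_ℝ = 0 := by
  by_cases hij : i = j
  · rw [hij, h.self, inner_zero_left]
  have ne : ∀ i j : Fin 7, i ≠ j → p i ≠ p j := fun i j h => p.injective.ne h
  have sg := sign_two_swaps (ne 0 1 (by decide)) (ne 2 3 (by decide))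
  have h01 : ⟪Y (p 0) (p 1), x⟫_ℝ = 0 := by
    have e := hR.inner _ sg (Y (p 0) (p 1)) x
    rw [hx _ sg, h.equi _ sg] at e
    have e0 : (swap (p 0) (p 1) * swap (p 2) (p 3)) (p 0) = p 1 := by simp [swap_apply_def]
    have e1 : (swap (p 0) (p 1) * swap (p 2) (p 3)) (p 1) = p 0 := by simp [swap_apply_def]
    rw [e0, e1, h.neg (p 0) (p 1), inner_neg_left] at e
    linarith
  obtain ⟨g, hg, rfl, rfl⟩ := exists_even_pair p hij
  rw [← h.equi g hg, ← hx g hg, hR.inner g hg, h01]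

/-- The span of a standard family. -/
abbrev stdSpan (Y : α → α → V) : Submodule ℝ V := Submodule.span ℝ (Set.range (Function.uncurry Y))

lemma IsStdFamily.map_stdSpan (h : IsStdFamily R Y) {g : Perm α} (hg : sign g = 1) {x : V}
    (hx : x ∈ stdSpan Y) : R g x ∈ stdSpan Y := by
  induction hx using Submodule.span_induction with
  | mem x hx =>
    obtain ⟨⟨i, j⟩, rfl⟩ := hx
    exact Submodule.subset_span ⟨(g i, g j), (h.equi g hg i j).symm⟩
  | zero => rw [map_zero]; exact Submodule.zero_mem _
  | add x y _ _ hx hy => rw [map_add]; exact Submodule.add_mem _ hx hy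
  | smul a x _ hx => rw [map_smul]; exact Submodule.smul_mem _ _ hx

lemma IsStdFamily.map_orthogonal (h : IsStdFamily R Y) (hR : IsEvenRep R) {g : Perm α}
    (hg : sign g = 1) {x : V} (hx : x ∈ (stdSpan Y)ᗮ) : R g x ∈ (stdSpan Y)ᗮ := by
  rw [Submodule.mem_orthogonal] at hx ⊢
  intro u hu
  have hg' : sign g⁻¹ = 1 := by simp [hg]
  have e := hR.inner _ hg' u (R g x)
  rw [← Module.End.mul_apply, ← hR.mul _ _ hg' hg, inv_mul_cancel, hR.one,
    Module.End.one_apply] at e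
  rw [← e]
  exact hx _ (h.map_stdSpan hg' hu)

/-- If the standard family leaves too little room for a second one, its orthogonal complement is
exactly the space of fixed vectors. -/
lemma IsStdFamily.mem_orthogonal_iff [FiniteDimensional ℝ V] (h : IsStdFamily R Y)
    (hR : IsEvenRep R) (H : DisjointKill R) (p : Fin 7 ↪ α)
    (hd : finrank ℝ (stdSpan Y)ᗮ + 1 < Fintype.card α) (x : V) :
    x ∈ (stdSpan Y)ᗮ ↔ ∀ g, sign g = 1 → R g x = x := by
  constructor
  · intro hx g hg
    have hW : ∀ g, sign g = 1 → ∀ x ∈ (stdSpan Y)ᗮ, R g x ∈ (stdSpan Y)ᗮ :=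
      fun g hg x hx => h.map_orthogonal hR hg hx
    have := trivial_of_finrank_lt (hR.restr _ hW) (H.restr _ hW)
      (by simpa using Fintype.card_le_of_embedding p) hd hg
    have := congrArg Subtype.val (LinearMap.congr_fun this ⟨x, hx⟩)
    rwa [restr_coe _ _ _ (hW g hg)] at this
  · intro hx
    rw [Submodule.mem_orthogonal]
    intro u hu
    induction hu using Submodule.span_induction with
    | mem u hu =>
      obtain ⟨⟨i, j⟩, rfl⟩ := hu
      exact h.inner_fixed hR p hx i j
    | zero => exact inner_zero_left _
    | add u v _ _ hu hv => rw [inner_add_left, hu, hv, add_zero]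
    | smul a u _ hu => rw [inner_smul_left, hu, mul_zero]

/-- The operator `(1 - (p₀ p₁)(p₄ p₅)) (1 - (p₀ p₁)(p₂ p₃))` maps the standard representation to
the line spanned by `Y p₀ p₁`. -/
lemma IsStdFamily.project (h : IsStdFamily R Y) (p : Fin 7 ↪ α) {x : V}
    (hx : x ∈ stdSpan Y) :
    ((1 - R (swap (p 0) (p 1) * swap (p 4) (p 5))) *
      (1 - R (swap (p 0) (p 1) * swap (p 2) (p 3)))) x ∈ Submodule.span ℝ {Y (p 0) (p 1)} := by
  have ne : ∀ i j : Fin 7, i ≠ j → p i ≠ p j := fun i j h => p.injective.ne h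
  have sg := sign_two_swaps (ne 0 1 (by decide)) (ne 2 3 (by decide))
  have sh := sign_two_swaps (ne 0 1 (by decide)) (ne 4 5 (by decide))
  set g := swap (p 0) (p 1) * swap (p 2) (p 3) with hgdef
  set k := swap (p 0) (p 1) * swap (p 4) (p 5) with hkdef
  have gk : ∀ i, i ≠ p 0 → i ≠ p 1 → g i = i ∨ (k i = i ∧ k (g i) = g i) := by
    intro i h0 h1
    by_cases h2 : i = p 2
    · right; subst h2; simp [hgdef, hkdef, swap_apply_def]
    by_cases h3 : i = p 3
    · right; subst h3; simp [hgdef, hkdef, swap_apply_def]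
    left
    simp [hgdef, swap_apply_def, h0, h1, h2, h3]
  have g0 : g (p 0) = p 1 := by simp [hgdef, swap_apply_def]
  have g1 : g (p 1) = p 0 := by simp [hgdef, swap_apply_def]
  have k0 : k (p 0) = p 1 := by simp [hkdef, swap_apply_def]
  have k1 : k (p 1) = p 0 := by simp [hkdef, swap_apply_def]
  have g6 : g (p 6) = p 6 := by simp [hgdef, swap_apply_def]
  have k6 : k (p 6) = p 6 := by simp [hkdef, swap_apply_def]
  rw [stdSpan, h.span_eq (p 6)] at hx
  induction hx using Submodule.span_induction with
  | mem x hx =>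
    obtain ⟨⟨i, hi⟩, rfl⟩ := hx
    have e : ((1 - R k) * (1 - R g)) (Y (p 6) i) =
        Y (p 6) i - Y (p 6) (g i) - (Y (p 6) (k i) - Y (p 6) (k (g i))) := by
      simp only [Module.End.mul_apply, LinearMap.sub_apply, Module.End.one_apply, map_sub,
        h.equi _ sg, h.equi _ sh, g6, k6]
      abel
    change ((1 - R k) * (1 - R g)) (Y (p 6) i) ∈ _
    rw [e]
    by_cases h0 : i = p 0
    · rw [h0, g0, k0, k1, h.sub, h.sub, h.neg (p 0) (p 1)]
      exact Submodule.sub_mem _ (Submodule.neg_mem _ (Submodule.mem_span_singleton_self _))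
        (Submodule.mem_span_singleton_self _)
    by_cases h1 : i = p 1
    · rw [h1, g1, k0, k1, h.sub, h.sub, h.neg (p 0) (p 1)]
      exact Submodule.sub_mem _ (Submodule.mem_span_singleton_self _)
        (Submodule.neg_mem _ (Submodule.mem_span_singleton_self _))
    rcases gk i h0 h1 with hg | ⟨hk, hgk⟩
    · rw [hg, sub_self, sub_self, sub_self]; exact Submodule.zero_mem _
    · rw [hk, hgk, sub_self]; exact Submodule.zero_mem _
  | zero => rw [LinearMap.map_zero]; exact Submodule.zero_mem _
  | add x y _ _ hx hy => rw [map_add]; exact Submodule.add_mem _ hx hy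
  | smul a x _ hx => rw [map_smul]; exact Submodule.smul_mem _ _ hx

/-- Schur's lemma for the standard representation: an endomorphism commuting with the even
permutations acts on it as a real scalar. -/
lemma IsStdFamily.exists_scalar [FiniteDimensional ℝ V] (h : IsStdFamily R Y)
    (hfix : ∀ x ∈ (stdSpan Y)ᗮ, ∀ g, sign g = 1 → R g x = x)
    (p : Fin 7 ↪ α) {T : V →ₗ[ℝ] V} (hT : ∀ g, sign g = 1 → ∀ x, T (R g x) = R g (T x)) :
    ∃ a : ℝ, ∀ i j, T (Y i j) = a • Y i j := by
  have ne : ∀ i j : Fin 7, i ≠ j → p i ≠ p j := fun i j h => p.injective.ne h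
  have sg := sign_two_swaps (ne 0 1 (by decide)) (ne 2 3 (by decide))
  have sh := sign_two_swaps (ne 0 1 (by decide)) (ne 4 5 (by decide))
  set g := swap (p 0) (p 1) * swap (p 2) (p 3) with hgdef
  set k := swap (p 0) (p 1) * swap (p 4) (p 5) with hkdef
  have g0 : R g (Y (p 0) (p 1)) = - Y (p 0) (p 1) := by
    rw [h.equi _ sg, ← h.neg]; simp [hgdef, swap_apply_def]
  have k0 : R k (Y (p 0) (p 1)) = - Y (p 0) (p 1) := by
    rw [h.equi _ sh, ← h.neg]; simp [hkdef, swap_apply_def]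
  obtain ⟨s, hs, f, hf, hsf⟩ := (stdSpan Y).exists_add_mem_mem_orthogonal (T (Y (p 0) (p 1)))
  have e1 : ((1 - R k) * (1 - R g)) (T (Y (p 0) (p 1))) = (4 : ℝ) • T (Y (p 0) (p 1)) := by
    simp only [Module.End.mul_apply, LinearMap.sub_apply, Module.End.one_apply, map_sub,
      ← hT _ sg, ← hT _ sh, g0, k0, map_neg]
    module
  have e2 : ((1 - R k) * (1 - R g)) f = 0 := by
    simp only [Module.End.mul_apply, LinearMap.sub_apply, Module.End.one_apply, hfix f hf g sg,
      sub_self, map_zero]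
  have e3 := h.project p hs
  have e4 : (4 : ℝ) • T (Y (p 0) (p 1)) ∈ Submodule.span ℝ {Y (p 0) (p 1)} := by
    rw [← e1, hsf, map_add, e2, add_zero]
    exact e3
  obtain ⟨a, ha⟩ := Submodule.mem_span_singleton.1 e4
  refine ⟨a / 4, fun i j => ?_⟩
  by_cases hij : i = j
  · rw [hij, h.self, map_zero, smul_zero]
  obtain ⟨r, hr, rfl, rfl⟩ := exists_even_pair p hij
  have e5 : T (Y (p 0) (p 1)) = (a / 4) • Y (p 0) (p 1) := by
    rw [div_eq_inv_mul, mul_smul, ha, smul_smul]; norm_num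
  rw [← h.equi r hr, hT r hr, e5, map_smul]
end final

/-- The linear action of `ρ` on Euclidean space. -/
noncomputable def act {G : Type} [Group G] {d : ℕ} (ρ : G →* Matrix.orthogonalGroup (Fin d) ℝ) :
    G →* (EuclideanSpace ℝ (Fin d) →ₗ[ℝ] EuclideanSpace ℝ (Fin d)) where
  toFun x := Matrix.toEuclideanLin (ρ x : Matrix (Fin d) (Fin d) ℝ)
  map_one' := by rw [map_one]; exact Matrix.toLpLin_one 2
  map_mul' x y := by rw [map_mul]; exact Matrix.toLpLin_mul_same 2 _ _

lemma act_inner {G : Type} [Group G] {d : ℕ} (ρ : G →* Matrix.orthogonalGroup (Fin d) ℝ) (g : G)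
    (x y : EuclideanSpace ℝ (Fin d)) : ⟪act ρ g x, act ρ g y⟫_ℝ = ⟪x, y⟫_ℝ := by
  have h : (act ρ g).adjoint * act ρ g = 1 := by
    change (Matrix.toEuclideanLin (ρ g : Matrix (Fin d) (Fin d) ℝ)).adjoint *
      Matrix.toEuclideanLin (ρ g : Matrix (Fin d) (Fin d) ℝ) = 1
    rw [← Matrix.toEuclideanLin_conjTranspose_eq_adjoint]
    refine (Matrix.toLpLin_mul_same 2 _ _).symm.trans ?_
    have := (Matrix.mem_orthogonalGroup_iff' (Fin d) ℝ).1 (ρ g).2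
    rw [Matrix.conjTranspose_eq_transpose_of_trivial, this]
    exact Matrix.toLpLin_one 2
  rw [← LinearMap.adjoint_inner_right, ← Module.End.mul_apply, h, Module.End.one_apply]

lemma act_injective {G : Type} [Group G] {d : ℕ} {ρ : G →* Matrix.orthogonalGroup (Fin d) ℝ}
    (hρ : Function.Injective ρ) : Function.Injective (act ρ) := fun _ _ h =>
  hρ (Subtype.ext (Matrix.toEuclideanLin.injective h))

/-- The action of the even permutations through the second factor, extended by the identity to
the odd ones. -/
noncomputable def evenAct {n d : ℕ} {Q : Type} [Group Q]
    (ρ : Q × alternatingGroup (Fin n) →* Matrix.orthogonalGroup (Fin d) ℝ) (g : Perm (Fin n)) :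
    EuclideanSpace ℝ (Fin d) →ₗ[ℝ] EuclideanSpace ℝ (Fin d) :=
  if h : sign g = 1 then act ρ (1, ⟨g, mem_alternatingGroup.2 h⟩) else 1

lemma evenAct_of {n d : ℕ} {Q : Type} [Group Q]
    (ρ : Q × alternatingGroup (Fin n) →* Matrix.orthogonalGroup (Fin d) ℝ) {g : Perm (Fin n)}
    (hg : sign g = 1) : evenAct ρ g = act ρ (1, ⟨g, mem_alternatingGroup.2 hg⟩) :=
  dif_pos hg

lemma evenAct_isEvenRep {n d : ℕ} {Q : Type} [Group Q]
    (ρ : Q × alternatingGroup (Fin n) →* Matrix.orthogonalGroup (Fin d) ℝ) :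
    IsEvenRep (evenAct ρ) where
  one := by
    rw [evenAct_of ρ Perm.sign_one]; exact map_one (act ρ)
  mul g h hg hh := by
    have hgh : sign (g * h) = 1 := by rw [Perm.sign_mul, hg, hh, one_mul]
    rw [evenAct_of ρ hg, evenAct_of ρ hh, evenAct_of ρ hgh, ← (act ρ).map_mul, Prod.mk_mul_mk,
      one_mul]
    rfl
  inner g hg x y := by rw [evenAct_of ρ hg, act_inner]

end AltRep

open AltRep in
/-- Let `n ≥ 7`, let `Q` be a finite group and let `ρ : Q × A_n → O(n+3)` be a faithful
orthogonal representation on `ℝ^{n+3}`. Let `F` be the subspace of vectors fixed by the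
`A_n`-factor. Then (i) `F` has dimension `4`; (ii) `F` is invariant under the `Q`-factor;
(iii) every element of the commutator subgroup `[Q,Q]` acts as the identity on `Fᗮ`; and
(iv) any element of `[Q,Q]` acting trivially on `F` is trivial. -/
theorem fixed_subspace_of_alternating_factor (n : ℕ) (hn : 7 ≤ n)
    (Q : Type) [Group Q] [Finite Q]
    (ρ : Q × alternatingGroup (Fin n) →* Matrix.orthogonalGroup (Fin (n + 3)) ℝ)
    (hρ : Function.Injective ρ)
    (F : Submodule ℝ (EuclideanSpace ℝ (Fin (n + 3))))
    (hF : ∀ v : EuclideanSpace ℝ (Fin (n + 3)),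
      v ∈ F ↔ ∀ σ : alternatingGroup (Fin n),
        Matrix.toEuclideanLin (ρ (1, σ) : Matrix (Fin (n + 3)) (Fin (n + 3)) ℝ) v = v) :
    Module.finrank ℝ F = 4 ∧
    (∀ q : Q, ∀ v ∈ F,
      Matrix.toEuclideanLin (ρ (q, 1) : Matrix (Fin (n + 3)) (Fin (n + 3)) ℝ) v ∈ F) ∧
    (∀ q ∈ commutator Q, ∀ w ∈ Fᗮ,
      Matrix.toEuclideanLin (ρ (q, 1) : Matrix (Fin (n + 3)) (Fin (n + 3)) ℝ) w = w) ∧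
    (∀ q ∈ commutator Q,
      (∀ v ∈ F, Matrix.toEuclideanLin (ρ (q, 1) : Matrix (Fin (n + 3)) (Fin (n + 3)) ℝ) v = v)
        → q = 1) := by
  have hR := evenAct_isEvenRep ρ
  have H := disjointKill n hn _ _ hR (by simp)
  let p : Fin 7 ↪ Fin n := Fin.castLEEmb hn
  have ne : ∀ i j : Fin 7, i ≠ j → p i ≠ p j := fun i j h => p.injective.ne h
  have sv := sign_two_swaps (ne 0 1 (by decide)) (ne 2 3 (by decide))
  have hv : evenAct ρ (swap (p 0) (p 1) * swap (p 2) (p 3)) ≠ 1 := by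
    intro h
    rw [evenAct_of ρ sv, ← map_one (act ρ)] at h
    have h := congrArg Subtype.val (congrArg Prod.snd (act_injective hρ h))
    have h0 : (swap (p 0) (p 1) * swap (p 2) (p 3)) (p 0) = p 0 :=
      congrArg (fun g : Perm (Fin n) => g (p 0)) h
    have h1 : (swap (p 0) (p 1) * swap (p 2) (p 3)) (p 0) = p 1 := by
      rw [Perm.mul_apply, swap_apply_of_ne_of_ne (ne 0 2 (by decide)) (ne 0 3 (by decide)),
        swap_apply_left]
    exact ne 0 1 (by decide) (h0.symm.trans h1)
  obtain ⟨Y, hY⟩ := exists_stdFamily hR H p hv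
  have hS : finrank ℝ (stdSpan Y) = n - 1 := by simpa using hY.finrank_span hR p
  have hS4 : finrank ℝ (stdSpan Y)ᗮ = 4 := by
    have := (stdSpan Y).finrank_add_finrank_orthogonal
    rw [hS, finrank_euclideanSpace_fin] at this
    omega
  have hmem := hY.mem_orthogonal_iff hR H p (by rw [hS4, Fintype.card_fin]; omega)
  have hFS : F = (stdSpan Y)ᗮ := by
    ext x
    rw [hF, hmem]
    constructor
    · intro h g hg
      rw [evenAct_of ρ hg]; exact h ⟨g, mem_alternatingGroup.2 hg⟩
    · intro h σ
      have := h σ.1 (mem_alternatingGroup.1 σ.2)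
      rwa [evenAct_of ρ (mem_alternatingGroup.1 σ.2)] at this
  have hcomm : ∀ q g, sign g = 1 → ∀ x, act ρ (q, 1) (evenAct ρ g x) =
      evenAct ρ g (act ρ (q, 1) x) := by
    intro q g hg x
    rw [evenAct_of ρ hg, ← Module.End.mul_apply, ← Module.End.mul_apply, ← map_mul, ← map_mul,
      Prod.mk_mul_mk, Prod.mk_mul_mk, one_mul, mul_one, one_mul, mul_one]
  have hmul : ∀ (a b : Q) x, act ρ (a * b, 1) x = act ρ (a, 1) (act ρ (b, 1) x) := by
    intro a b x
    rw [← Module.End.mul_apply, ← map_mul, Prod.mk_mul_mk, mul_one]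
  have hone : ∀ x, act ρ ((1 : Q), 1) x = x := fun x => by
    rw [show ((1 : Q), (1 : alternatingGroup (Fin n))) = 1 from rfl, map_one, Module.End.one_apply]
  have hfix := fun x hx => (hmem x).1 hx
  -- `Q` acts on the standard part by scalars, so commutators act trivially
  have hQ := fun q => hY.exists_scalar hfix p (hcomm q)
  let N : Subgroup Q :=
    { carrier := {q | ∀ i j, act ρ (q, 1) (Y i j) = Y i j}
      one_mem' := fun i j => hone _
      mul_mem' := fun {a b} ha hb i j => by rw [hmul, hb, ha]
      inv_mem' := fun {a} ha i j => by
        nth_rewrite 1 [← ha i j]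
        rw [← hmul, inv_mul_cancel, hone] }
  have hN : commutator Q ≤ N := by
    rw [commutator_def, Subgroup.commutator_le]
    intro a _ b _ i j
    obtain ⟨x, hx⟩ := hQ a
    obtain ⟨y, hy⟩ := hQ b
    obtain ⟨z, hz⟩ := hQ (b * a)⁻¹
    have e : act ρ (a * b, 1) (Y i j) = act ρ (b * a, 1) (Y i j) := by
      rw [hmul, hmul, hx, hy, map_smul, map_smul, hx, hy, smul_comm]
    rw [show ⁅a, b⁆ = a * b * (b * a)⁻¹ by rw [commutatorElement_def]; group, hmul, hz, map_smul,
      e, ← map_smul, ← hz, ← hmul, mul_inv_cancel, hone]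
  have h3 : ∀ q ∈ commutator Q, ∀ w ∈ Fᗮ, act ρ (q, 1) w = w := by
    intro q hq w hw
    rw [hFS, Submodule.orthogonal_orthogonal] at hw
    induction hw using Submodule.span_induction with
    | mem w hw => obtain ⟨⟨i, j⟩, rfl⟩ := hw; exact hN hq i j
    | zero => rw [map_zero]
    | add x y _ _ hx hy => rw [map_add, hx, hy]
    | smul a x _ hx => rw [map_smul, hx]
  refine ⟨by rw [hFS, hS4], ?_, h3, ?_⟩
  · intro q x hx
    change act ρ (q, 1) x ∈ F
    rw [hFS, hmem] at hx ⊢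
    intro g hg
    rw [← hcomm q g hg, hx g hg]
  · intro q hq hqF
    have : act ρ (q, 1) = act ρ 1 := by
      rw [map_one]
      ext1 x
      obtain ⟨y, hy, z, hz, rfl⟩ := F.exists_add_mem_mem_orthogonal x
      rw [map_add, h3 q hq z hz, Module.End.one_apply]
      congr 1
      exact hqF y hy
    exact congrArg Prod.fst (act_injective hρ this)
end

section
/- Let Q be a finite group possessing exactly one element of order 2, suppose this element lies in the commutator subgroup [Q,Q], and suppose the abelianization Q/[Q,Q] is a 2-group (i.e., has order a power of 2). Then every nontrivial subgroup of Q has nontrivial intersection with [Q,Q]; in particular, every nontrivial normal subgroup of Q intersects [Q,Q] nontrivially. -/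
/-!
If `H ∩ [Q,Q]` is trivial then `H` embeds in the abelianization, so each of its elements has
2-power order. A nontrivial element of `H` therefore has an involution among its powers; that
involution lies in `[Q,Q]` by hypothesis, which contradicts the triviality of `H ∩ [Q,Q]`.
-/

/-- Let `Q` be a finite group with exactly one element of order `2`, lying in the
commutator subgroup `[Q,Q]`, and whose abelianization is a `2`-group. Then every
nontrivial subgroup of `Q` meets `[Q,Q]` nontrivially; in particular, every nontrivial
normal subgroup of `Q` meets `[Q,Q]` nontrivially. -/
theorem subgroups_meet_commutator (Q : Type) [Group Q] [Finite Q]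
    (hunique : ∃! x : Q, orderOf x = 2)
    (hin : ∀ x : Q, orderOf x = 2 → x ∈ commutator Q)
    (hab : ∃ m : ℕ, Nat.card (Abelianization Q) = 2 ^ m) :
    (∀ H : Subgroup Q, H ≠ ⊥ → H ⊓ commutator Q ≠ ⊥) ∧
    (∀ N : Subgroup Q, N.Normal → N ≠ ⊥ → N ⊓ commutator Q ≠ ⊥) := by
  have main : ∀ H : Subgroup Q, H ≠ ⊥ → H ⊓ commutator Q ≠ ⊥ := by
    intro H hH hbot
    obtain ⟨m, hm⟩ := hab
    obtain ⟨h, hhH, h1⟩ := H.bot_or_exists_ne_one.resolve_left hH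
    have trivial_of_mem : ∀ x ∈ H, x ∈ commutator Q → x = 1 := fun x hx hc =>
      Subgroup.mem_bot.mp (hbot ▸ Subgroup.mem_inf.mpr ⟨hx, hc⟩)
    -- The abelianization has exponent dividing `2 ^ m`, so `h ^ 2 ^ m` lies in `H ∩ [Q,Q]`.
    have hpow : h ^ 2 ^ m = 1 := by
      refine trivial_of_mem _ (H.pow_mem hhH _) ?_
      rw [← Abelianization.ker_of, MonoidHom.mem_ker, map_pow, ← hm]
      exact pow_card_eq_one'
    -- Hence `h` has even order, and a suitable power of it is an involution in `H ∩ [Q,Q]`.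
    have hdvd : 2 ∣ orderOf h := by
      obtain ⟨k, -, hk⟩ := (Nat.dvd_prime_pow Nat.prime_two).mp (orderOf_dvd_of_pow_eq_one hpow)
      rw [hk]
      refine dvd_pow_self 2 ?_
      rintro rfl
      exact h1 (orderOf_eq_one_iff.mp (by simpa using hk))
    have hord : orderOf (h ^ (orderOf h / 2)) = 2 :=
      orderOf_pow_orderOf_div (orderOf_pos h).ne' hdvd
    rw [trivial_of_mem _ (H.pow_mem hhH _) (hin _ hord), orderOf_one] at hord
    omega
  exact ⟨main, fun N _ => main N⟩
end

section
/- Let Q be a finite group such that every nontrivial normal subgroup of Q has nontrivial intersection with the commutator subgroup [Q,Q], and suppose there is no injective group homomorphism from Q into the orthogonal group O(4). Then there is no injective group homomorphism from the direct product Q × S_5 into the orthogonal group O(8), where S_5 is the symmetric group on 5 letters. -/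
/-!
Only a Frobenius subgroup `⟨c, t⟩ ≤ S_5` of order 20 is needed, with `c` a 5-cycle and
`t c t⁻¹ = c²`. Given an embedding of `Q × S_5` into `O(8)`, let `C`, `T` be the matrices of `c`,
`t`, let `E = (1/5) ∑ Cⁱ` and `F = (1/4) ∑ Tʲ` be the projections onto their fixed spaces, and put
`P = (1 - E) F`. Then `E` and `P` are orthogonal projections commuting with `Q`, and

  `∑ᵢ Cⁱ P C⁻ⁱ = (5/4) (1 - E)`      (`proj_data`).

Taking traces, `rank E + 4 * rank P = 8`. Moreover an element of `Q` that is trivial on the range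
of `P` is trivial on the range of `1 - E`. Since `C ≠ 1`, also `P ≠ 0`, so `rank P` is 1 or 2.

* If `rank P = 1`, then `Q` acts on the range of `P` through the abelian group `O(1)`, so
  `[Q, Q]` acts trivially on the range of `1 - E`, hence faithfully on the 4-dimensional range
  of `E`.
* If `rank P = 2`, then `E = 0`, and `Q` acts faithfully on the 2-dimensional range of `P`.

In both cases there is a homomorphism `Q → O(4)` whose kernel meets `[Q, Q]` trivially; by the
hypothesis on normal subgroups it is injective, which is excluded.
-/

open Matrix

/-- A real orthogonal projection `P` factors as `B Bᵀ`, the columns of `B` being an orthonormal basis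
of its range, so the trace of `P` is its rank. -/
theorem exists_factor {n : ℕ} (P : Matrix (Fin n) (Fin n) ℝ) (hs : Pᵀ = P) (hi : P * P = P) :
    ∃ (k : ℕ) (B : Matrix (Fin n) (Fin k) ℝ), B * Bᵀ = P ∧ P.trace = k := by
  classical
  have hH : P.IsHermitian := by
    rw [Matrix.IsHermitian, Matrix.conjTranspose_eq_transpose_of_trivial, hs]
  obtain ⟨U, d, hU, hU', hP⟩ : ∃ (U : Matrix (Fin n) (Fin n) ℝ) (d : Fin n → ℝ),
      Uᵀ * U = 1 ∧ U * Uᵀ = 1 ∧ P = U * diagonal d * Uᵀ := by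
    refine ⟨hH.eigenvectorUnitary, hH.eigenvalues, ?_, ?_, ?_⟩
    · exact Unitary.coe_star_mul_self hH.eigenvectorUnitary
    · exact Unitary.coe_mul_star_self hH.eigenvectorUnitary
    · have := hH.spectral_theorem
      rw [Unitary.conjStarAlgAut_apply] at this
      exact this
  have hD : diagonal d = Uᵀ * P * U := by
    calc diagonal d = (Uᵀ * U) * diagonal d * (Uᵀ * U) := by simp [hU]
      _ = _ := by rw [hP]; simp only [Matrix.mul_assoc]
  have hd : ∀ i, d i = 0 ∨ d i = 1 := by
    intro i
    have h : diagonal d * diagonal d = diagonal d := by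
      calc diagonal d * diagonal d = Uᵀ * P * (U * Uᵀ) * P * U := by
            rw [hD]; simp only [Matrix.mul_assoc]
        _ = Uᵀ * (P * P) * U := by rw [hU']; simp only [Matrix.mul_assoc, Matrix.mul_one]
        _ = diagonal d := by rw [hi, hD]
    rw [diagonal_mul_diagonal] at h
    have h2 : d i * d i = d i := congrFun (diagonal_injective h) i
    rcases mul_eq_zero.1 (show d i * (d i - 1) = 0 by linarith) with h | h
    · exact Or.inl h
    · exact Or.inr (by linarith)
  let e := Fintype.equivFin {i // d i = 1}
  have hB : (U.submatrix id fun j => (e.symm j : Fin n)) *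
      (U.submatrix id fun j => (e.symm j : Fin n))ᵀ = P := by
    ext a b
    have h1 : ∑ j, U a (e.symm j) * U b (e.symm j) = ∑ i : {i // d i = 1}, U a i * U b i :=
      e.symm.sum_comp (fun i : {i // d i = 1} => U a i * U b i)
    rw [hP]
    rw [Matrix.mul_assoc, Matrix.mul_apply, Matrix.mul_apply]
    simp only [transpose_apply, submatrix_apply, id]
    rw [h1]
    simp only [diagonal_mul, transpose_apply]
    rw [← Finset.sum_subtype (Finset.univ.filter fun i => d i = 1) (by simp)
      (fun i => U a i * U b i), Finset.sum_filter]
    refine Finset.sum_congr rfl fun i _ => ?_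
    rcases hd i with h | h <;> simp [h]
  refine ⟨_, _, hB, ?_⟩
  rw [← hB, Matrix.trace_mul_comm]
  have : (U.submatrix id fun j => (e.symm j : Fin n))ᵀ *
      (U.submatrix id fun j => (e.symm j : Fin n)) = 1 := by
    rw [transpose_submatrix, ← submatrix_mul _ _ _ id _ Function.bijective_id, hU]
    exact submatrix_one _ (Subtype.val_injective.comp e.symm.injective)
  rw [this]; simp

/-- Compression of an orthogonal representation `ρ` to the range of a projection `P = B Bᵀ` commuting
with it. The columns of `B` need not be independent: on the orthogonal complement of the range of
`Bᵀ` the new representation `q ↦ Bᵀ ρ(q) B + (1 - Bᵀ B)` is trivial. -/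
theorem exists_hom {Q : Type} [Group Q] {n l : ℕ} (ρ : Q →* Matrix.orthogonalGroup (Fin n) ℝ)
    (P : Matrix (Fin n) (Fin n) ℝ) (hi : P * P = P)
    (hc : ∀ q, (ρ q : Matrix (Fin n) (Fin n) ℝ) * P = P * (ρ q : Matrix (Fin n) (Fin n) ℝ))
    (B : Matrix (Fin n) (Fin l) ℝ) (hB : B * Bᵀ = P) :
    ∃ φ : Q →* Matrix.orthogonalGroup (Fin l) ℝ,
      ∀ q, φ q = 1 → (ρ q : Matrix (Fin n) (Fin n) ℝ) * P = P := by
  have hs : Pᵀ = P := by rw [← hB]; simp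
  have hPB : P * B = B := by
    have h : (P * B - B) * (P * B - B)ᴴ = 0 := by
      simp only [conjTranspose_eq_transpose_of_trivial, transpose_sub, transpose_mul, hs]
      calc (P * B - B) * (Bᵀ * P - Bᵀ)
          = P * (B * Bᵀ) * P - P * (B * Bᵀ) - (B * Bᵀ) * P + B * Bᵀ := by
            simp only [Matrix.mul_sub, Matrix.sub_mul, Matrix.mul_assoc]; abel
        _ = 0 := by simp [hB, hi]
    exact sub_eq_zero.1 (Matrix.self_mul_conjTranspose_eq_zero.1 h)
  have hBP : Bᵀ * P = Bᵀ := by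
    have := congrArg transpose hPB
    rwa [transpose_mul, hs] at this
  have hBB : Bᵀ * B * Bᵀ = Bᵀ := by rw [Matrix.mul_assoc, hB, hBP]
  have hBB' : B * (Bᵀ * B) = B := by rw [← Matrix.mul_assoc, hB, hPB]
  have key : ∀ X Y : Matrix (Fin n) (Fin n) ℝ, X * P = P * X →
      (Bᵀ * X * B + (1 - Bᵀ * B)) * (Bᵀ * Y * B + (1 - Bᵀ * B)) =
        Bᵀ * (X * Y) * B + (1 - Bᵀ * B) := by
    intro X Y hX
    have h1 : (Bᵀ * X * B) * (Bᵀ * Y * B) = Bᵀ * (X * Y) * B := by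
      calc (Bᵀ * X * B) * (Bᵀ * Y * B) = Bᵀ * (X * (B * Bᵀ)) * Y * B := by
            simp only [Matrix.mul_assoc]
        _ = Bᵀ * P * X * Y * B := by rw [hB, hX]; simp only [Matrix.mul_assoc]
        _ = _ := by rw [hBP]; simp only [Matrix.mul_assoc]
    have h2 : (Bᵀ * X * B) * (1 - Bᵀ * B) = 0 := by
      rw [Matrix.mul_sub, Matrix.mul_one, Matrix.mul_assoc _ B, hBB', sub_self]
    have h3 : (1 - Bᵀ * B) * (Bᵀ * Y * B) = 0 := by
      rw [Matrix.sub_mul, Matrix.one_mul, Matrix.mul_assoc Bᵀ Y, ← Matrix.mul_assoc (Bᵀ * B), hBB,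
        sub_self]
    have h4 : (1 - Bᵀ * B) * (1 - Bᵀ * B) = 1 - Bᵀ * B := by
      rw [Matrix.mul_sub, Matrix.mul_one, Matrix.sub_mul, Matrix.one_mul, ← Matrix.mul_assoc,
        hBB, sub_self, sub_zero]
    rw [Matrix.add_mul, Matrix.mul_add, Matrix.mul_add, h1, h2, h3, h4, add_zero, zero_add]
  have horth : ∀ q, (ρ q : Matrix (Fin n) (Fin n) ℝ) * (ρ q : Matrix (Fin n) (Fin n) ℝ)ᵀ = 1 :=
    fun q => (Matrix.mem_orthogonalGroup_iff _ _).1 (ρ q).2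
  refine ⟨{ toFun := fun q => ⟨Bᵀ * (ρ q : Matrix (Fin n) (Fin n) ℝ) * B + (1 - Bᵀ * B), ?_⟩
            map_one' := ?_
            map_mul' := ?_ }, ?_⟩
  · rw [Matrix.mem_orthogonalGroup_iff]
    have ht : (Bᵀ * (ρ q : Matrix (Fin n) (Fin n) ℝ) * B + (1 - Bᵀ * B))ᵀ =
        Bᵀ * (ρ q : Matrix (Fin n) (Fin n) ℝ)ᵀ * B + (1 - Bᵀ * B) := by
      simp [Matrix.mul_assoc]
    rw [ht, key _ _ (hc q), horth, Matrix.mul_one, add_sub_cancel]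
  · ext1; simp
  · intro x y
    ext1
    simp [key _ _ (hc x)]
  · intro q hq
    have h1 : Bᵀ * (ρ q : Matrix (Fin n) (Fin n) ℝ) * B + (1 - Bᵀ * B) = 1 :=
      congrArg Subtype.val hq
    have h2 : Bᵀ * (ρ q : Matrix (Fin n) (Fin n) ℝ) * B = Bᵀ * B := by
      rw [← sub_eq_zero, ← sub_eq_zero.2 h1]; abel
    calc (ρ q : Matrix (Fin n) (Fin n) ℝ) * P = P * (ρ q : Matrix (Fin n) (Fin n) ℝ) * P := by
          rw [← hc, Matrix.mul_assoc, hi]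
      _ = B * (Bᵀ * (ρ q : Matrix (Fin n) (Fin n) ℝ) * B) * Bᵀ := by
          rw [← hB]; simp only [Matrix.mul_assoc]
      _ = (B * Bᵀ) * (B * Bᵀ) := by rw [h2]; simp only [Matrix.mul_assoc]
      _ = P := by rw [hB, hi]

theorem exists_pad {n k l : ℕ} (hkl : k ≤ l) (B : Matrix (Fin n) (Fin k) ℝ) :
    ∃ B' : Matrix (Fin n) (Fin l) ℝ, B' * B'ᵀ = B * Bᵀ := by
  let J : Matrix (Fin k) (Fin l) ℝ := (1 : Matrix (Fin l) (Fin l) ℝ).submatrix (Fin.castLE hkl) id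
  have hJ : J * Jᵀ = 1 := by
    rw [transpose_submatrix, ← submatrix_mul _ _ _ id _ Function.bijective_id, transpose_one,
      Matrix.mul_one]
    exact submatrix_one _ (Fin.castLE_injective hkl)
  refine ⟨B * J, ?_⟩
  rw [transpose_mul, Matrix.mul_assoc, ← Matrix.mul_assoc J, hJ, Matrix.one_mul]

theorem pow_mul_pow_of_semiconj {A : Type*} [Ring A] {C T : A} (hTC : T * C = C ^ 2 * T) (j : ℕ) :
    ∀ i, T ^ j * C ^ i = C ^ (2 ^ j * i) * T ^ j := by
  have h : SemiconjBy T C (C ^ 2) := hTC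
  induction j with
  | zero => simp
  | succ j ih =>
    intro i
    have h2 := (h.pow_right (2 ^ j * i)).eq
    rw [pow_succ', mul_assoc, ih, ← mul_assoc, h2, ← pow_mul, ← mul_assoc, ← mul_assoc, pow_succ']

/-- Conjugation by `C` averages `T ^ j` for `j = 1, 2, 3` over the coset `⟨C⟩ T ^ j`, because `2 ^ j - 1`
is invertible modulo 5. The exponent `4 * i` stands for `-i`. -/
theorem sum_conj {A : Type*} [Ring A] {C T : A} (hC : C ^ 5 = 1) (hTC : T * C = C ^ 2 * T) :
    ∑ i ∈ Finset.range 5, C ^ i * (∑ j ∈ Finset.range 4, T ^ j) * C ^ (4 * i) =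
      5 + (∑ i ∈ Finset.range 5, C ^ i) * (T + T ^ 2 + T ^ 3) := by
  have hf := pow_mul_pow_of_semiconj hTC
  have hm : ∀ k, C ^ k = C ^ (k % 5) := fun k => pow_eq_pow_mod k hC
  have hj : ∀ i j, C ^ i * T ^ j * C ^ (4 * i) = C ^ ((i + 2 ^ j * (4 * i)) % 5) * T ^ j := by
    intro i j
    rw [mul_assoc, hf, ← mul_assoc, ← pow_add, hm]
  simp only [Finset.mul_sum, Finset.sum_mul, hj]
  simp only [Finset.sum_range_succ, Finset.sum_range_zero]
  norm_num
  simp only [mul_add]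
  have h5 : (5 : A) = 1 + 1 + 1 + 1 + 1 := by norm_num
  rw [h5]
  abel

/-- The projections attached to an orthogonal representation of the Frobenius group of order 20: `E` is
the projection onto the fixed space of `C`, and `P` the projection onto the vectors fixed by `T` in
the orthogonal complement of that space. -/
theorem proj_data {n : ℕ} {C T : Matrix (Fin n) (Fin n) ℝ} (hC : C ^ 5 = 1) (hT : T ^ 4 = 1)
    (hTC : T * C = C ^ 2 * T) (hCo : C * Cᵀ = 1) (hTo : T * Tᵀ = 1) :
    ∃ E P : Matrix (Fin n) (Fin n) ℝ,
      Eᵀ = E ∧ E * E = E ∧ Pᵀ = P ∧ P * P = P ∧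
      (∑ i ∈ Finset.range 5, C ^ i * P * C ^ (4 * i) = (5 / 4 : ℝ) • (1 - E)) ∧
      (C * E = E) ∧
      ∀ X : Matrix (Fin n) (Fin n) ℝ, X * C = C * X → X * T = T * X →
        X * E = E * X ∧ X * P = P * X := by
  have hCt : Cᵀ = C ^ 4 := by
    calc Cᵀ = C ^ 5 * Cᵀ := by rw [hC, one_mul]
      _ = C ^ 4 := by rw [pow_succ, mul_assoc, hCo, mul_one]
  have hTt : Tᵀ = T ^ 3 := by
    calc Tᵀ = T ^ 4 * Tᵀ := by rw [hT, one_mul]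
      _ = T ^ 3 := by rw [pow_succ, mul_assoc, hTo, mul_one]
  have hmC : ∀ k, C ^ k = C ^ (k % 5) := fun k => pow_eq_pow_mod k hC
  have hmT : ∀ k, T ^ k = T ^ (k % 4) := fun k => pow_eq_pow_mod k hT
  have hsum := sum_conj hC hTC
  set S := ∑ i ∈ Finset.range 5, C ^ i with hS
  set R := ∑ i ∈ Finset.range 4, T ^ i with hR
  have hCS : C * S = S := by
    simp only [hS, Finset.sum_range_succ, Finset.sum_range_zero, mul_add, ← pow_succ', hC]
    simp
    abel
  have hTR : T * R = R := by
    simp only [hR, Finset.sum_range_succ, Finset.sum_range_zero, mul_add, ← pow_succ', hT]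
    simp
    abel
  have hCS' : ∀ i, C ^ i * S = S := by
    intro i
    induction i with
    | zero => simp
    | succ i ih => rw [pow_succ, mul_assoc, hCS, ih]
  have hTR' : ∀ i, T ^ i * R = R := by
    intro i
    induction i with
    | zero => simp
    | succ i ih => rw [pow_succ, mul_assoc, hTR, ih]
  have hSS : S * S = (5 : ℝ) • S := by
    nth_rw 1 [hS]
    rw [Finset.sum_mul]
    simp [hCS', ← Nat.cast_smul_eq_nsmul ℝ]
  have hRR : R * R = (4 : ℝ) • R := by
    nth_rw 1 [hR]
    rw [Finset.sum_mul]
    simp [hTR', ← Nat.cast_smul_eq_nsmul ℝ]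
  have hSt : Sᵀ = S := by
    simp only [hS, Finset.sum_range_succ, Finset.sum_range_zero, transpose_add, transpose_pow, hCt,
      ← pow_mul, transpose_zero]
    rw [hmC (4 * 2), hmC (4 * 3), hmC (4 * 4)]
    norm_num
    abel
  have hRt : Rᵀ = R := by
    simp only [hR, Finset.sum_range_succ, Finset.sum_range_zero, transpose_add, transpose_pow, hTt,
      ← pow_mul, transpose_zero]
    rw [hmT (3 * 2), hmT (3 * 3)]
    norm_num
    abel
  have hTS : Commute T S := by
    have h := pow_mul_pow_of_semiconj hTC 1
    simp only [pow_one] at h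
    simp only [Commute, SemiconjBy, hS, Finset.sum_range_succ, Finset.sum_range_zero, mul_add, h]
    rw [hmC (2 * 3), hmC (2 * 4)]
    norm_num
    simp only [add_mul, one_mul]
    abel
  have hRS : Commute R S := Commute.sum_left _ _ _ fun i _ => hTS.pow_left i
  have hCSc : Commute C S := Commute.sum_right _ _ _ fun i _ => (Commute.refl C).pow_right i
  set E : Matrix (Fin n) (Fin n) ℝ := (1 / 5 : ℝ) • S with hE
  set F : Matrix (Fin n) (Fin n) ℝ := (1 / 4 : ℝ) • R with hF
  have hEE : E * E = E := by
    rw [hE, smul_mul_smul_comm, hSS, smul_smul]; norm_num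
  have hFF : F * F = F := by
    rw [hF, smul_mul_smul_comm, hRR, smul_smul]; norm_num
  have hEt : Eᵀ = E := by rw [hE, transpose_smul, hSt]
  have hFt : Fᵀ = F := by rw [hF, transpose_smul, hRt]
  have hFE : Commute F E := (hRS.smul_left _).smul_right _
  have hF1E : Commute F (1 - E) := (Commute.one_right F).sub_right hFE
  have h1E : (1 - E) * (1 - E) = 1 - E := by
    rw [mul_sub, mul_one, sub_mul, one_mul, hEE, sub_self, sub_zero]
  have h1ES : (1 - E) * S = 0 := by
    rw [sub_mul, one_mul, hE, smul_mul_assoc, hSS, smul_smul]; norm_num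
  refine ⟨E, (1 - E) * F, hEt, hEE, ?_, ?_, ?_, ?_, ?_⟩
  · rw [transpose_mul, transpose_sub, transpose_one, hEt, hFt, hF1E.eq]
  · calc (1 - E) * F * ((1 - E) * F) = (1 - E) * (F * (1 - E)) * F := by simp only [mul_assoc]
      _ = (1 - E) * (1 - E) * (F * F) := by rw [hF1E.eq]; simp only [mul_assoc]
      _ = _ := by rw [h1E, hFF]
  · have hc : ∀ i, Commute (C ^ i) (1 - E) := fun i =>
      ((Commute.one_right C).sub_right (hCSc.smul_right _)).pow_left i
    calc ∑ i ∈ Finset.range 5, C ^ i * ((1 - E) * F) * C ^ (4 * i)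
        = (1 - E) * ((1 / 4 : ℝ) • ∑ i ∈ Finset.range 5, C ^ i * R * C ^ (4 * i)) := by
          rw [Finset.smul_sum, Finset.mul_sum]
          refine Finset.sum_congr rfl fun i _ => ?_
          rw [← mul_assoc, (hc i).eq, hF]
          simp only [mul_assoc, smul_mul_assoc, mul_smul_comm]
      _ = (1 / 4 : ℝ) • ((1 - E) * 5) := by
          rw [hsum, mul_smul_comm, mul_add, ← mul_assoc, h1ES, zero_mul, add_zero]
      _ = _ := by
          have h5 : (5 : Matrix (Fin n) (Fin n) ℝ) = (5 : ℝ) • 1 := by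
            rw [← Algebra.algebraMap_eq_smul_one, map_ofNat]
          rw [h5, mul_smul_comm, mul_one, smul_smul]; norm_num
  · rw [hE, mul_smul_comm, hCS]
  · intro X hXC hXT
    have hXS : Commute X S := Commute.sum_right _ _ _ fun i _ => Commute.pow_right hXC i
    have hXR : Commute X R := Commute.sum_right _ _ _ fun i _ => Commute.pow_right hXT i
    have hXE : Commute X E := hXS.smul_right _
    exact ⟨hXE, ((Commute.one_right X).sub_right hXE).mul_right (hXR.smul_right _)⟩

/-- An orthogonal projection of trace `k ≤ l` commuting with `ρ` yields a representation in `O(l)` whose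
kernel acts trivially on the range of the projection. -/
theorem exists_hom_of_trace {Q : Type} [Group Q] {n k l : ℕ}
    (ρ : Q →* Matrix.orthogonalGroup (Fin n) ℝ)
    (P : Matrix (Fin n) (Fin n) ℝ) (hs : Pᵀ = P) (hi : P * P = P)
    (hc : ∀ q, (ρ q : Matrix (Fin n) (Fin n) ℝ) * P = P * (ρ q : Matrix (Fin n) (Fin n) ℝ))
    (ht : P.trace = k) (hkl : k ≤ l) :
    ∃ φ : Q →* Matrix.orthogonalGroup (Fin l) ℝ,
      ∀ q, φ q = 1 → (ρ q : Matrix (Fin n) (Fin n) ℝ) * P = P := by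
  obtain ⟨k', B, hB, hk'⟩ := exists_factor P hs hi
  obtain rfl : k' = k := by exact_mod_cast hk'.symm.trans ht
  obtain ⟨B', hB'⟩ := exists_pad hkl B
  exact exists_hom ρ P hi hc B' (hB'.trans hB)

theorem eq_zero_of_trace {n : ℕ} (P : Matrix (Fin n) (Fin n) ℝ) (hs : Pᵀ = P) (hi : P * P = P)
    (ht : P.trace = 0) : P = 0 := by
  have h : (Pᴴ * P).trace = 0 := by
    rw [conjTranspose_eq_transpose_of_trivial, hs, hi, ht]
  exact trace_conjTranspose_mul_self_eq_zero_iff.1 h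

/-- Let `Q` be a finite group in which every nontrivial normal subgroup meets the
commutator subgroup nontrivially, and which does not embed into `O(4)`. Then `Q × S_5`
does not embed into `O(8)`. -/
theorem prod_with_S5_not_subgroup_of_O8 (Q : Type) [Group Q] [Finite Q]
    (hQnormal : ∀ N : Subgroup Q, N.Normal → N ≠ ⊥ → N ⊓ commutator Q ≠ ⊥)
    (hQO4 : ¬ ∃ φ : Q →* Matrix.orthogonalGroup (Fin 4) ℝ, Function.Injective φ) :
    ¬ ∃ ψ : Q × Equiv.Perm (Fin 5) →* Matrix.orthogonalGroup (Fin 8) ℝ,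
        Function.Injective ψ := by
  rintro ⟨ψ, hψ⟩
  let val := (Matrix.orthogonalGroup (Fin 8) ℝ).subtype
  let ρ : Q →* Matrix.orthogonalGroup (Fin 8) ℝ := ψ.comp (MonoidHom.inl Q _)
  let σ : Equiv.Perm (Fin 5) →* Matrix (Fin 8) (Fin 8) ℝ :=
    (val.comp ψ).comp (MonoidHom.inr Q _)
  have hσo : ∀ s, σ s * (σ s)ᵀ = 1 := fun s =>
    (Matrix.mem_orthogonalGroup_iff _ _).1 (ψ (1, s)).2
  have hcomm : ∀ q s, (ρ q : Matrix (Fin 8) (Fin 8) ℝ) * σ s = σ s * ρ q := by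
    intro q s
    have h : ψ (q, 1) * ψ (1, s) = ψ (1, s) * ψ (q, 1) := by
      rw [← map_mul, ← map_mul]; simp
    exact congrArg Subtype.val h
  have hρ1 : ∀ q, (ρ q : Matrix (Fin 8) (Fin 8) ℝ) = 1 → q = 1 := by
    intro q hq
    have h : ψ (q, 1) = ψ 1 := by rw [map_one]; exact Subtype.ext hq
    exact congrArg Prod.fst (hψ h)
  have hσ1 : ∀ s, σ s = 1 → s = 1 := by
    intro s hs
    have h : ψ (1, s) = ψ 1 := by rw [map_one]; exact Subtype.ext hs
    exact congrArg Prod.snd (hψ h)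
  -- A homomorphism to `O(4)` faithful on `[Q, Q]` is faithful, by the hypothesis on normal subgroups.
  have hfaith : ∀ φ : Q →* Matrix.orthogonalGroup (Fin 4) ℝ,
      ¬ ∀ q ∈ commutator Q, φ q = 1 → q = 1 := by
    intro φ hφ
    refine hQO4 ⟨φ, (MonoidHom.ker_eq_bot_iff φ).1 ?_⟩
    by_contra hne
    refine hQnormal φ.ker inferInstance hne ((Subgroup.eq_bot_iff_forall _).2 ?_)
    rintro q ⟨hq, hq'⟩
    exact hφ q hq' hq
  obtain ⟨c, t, hc5, ht4, htc, hc1⟩ : ∃ c t : Equiv.Perm (Fin 5),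
      c ^ 5 = 1 ∧ t ^ 4 = 1 ∧ t * c = c ^ 2 * t ∧ c ≠ 1 :=
    -- `c` is `i ↦ i + 1` and `t` is `i ↦ 2 i` modulo 5.
    ⟨finRotate 5, ⟨fun i => 2 * i, fun i => 3 * i, by decide, by decide⟩,
      by decide, by decide, by decide, by decide⟩
  obtain ⟨E, P, hEt, hEE, hPt, hPP, hsum, hCE, hX⟩ := proj_data (C := σ c) (T := σ t)
    (by rw [← map_pow, hc5, map_one]) (by rw [← map_pow, ht4, map_one])
    (by rw [← map_mul, htc, map_mul, map_pow]) (hσo c) (hσo t)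
  have hρE := fun q => (hX (ρ q) (hcomm q c) (hcomm q t)).1
  have hρP := fun q => (hX (ρ q) (hcomm q c) (hcomm q t)).2
  have htr : E.trace + 4 * P.trace = 8 := by
    have h := congrArg Matrix.trace hsum
    have hterm : ∀ i, (σ c ^ i * P * σ c ^ (4 * i)).trace = P.trace := by
      intro i
      rw [Matrix.trace_mul_comm, ← mul_assoc, ← pow_add, show 4 * i + i = 5 * i by ring, pow_mul,
        ← map_pow, hc5, map_one, one_pow, one_mul]
    rw [Matrix.trace_sum] at h
    simp only [hterm, Finset.sum_const, Finset.card_range, trace_smul, trace_sub, trace_one,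
      Fintype.card_fin, nsmul_eq_mul, smul_eq_mul] at h
    push_cast at h
    linarith
  have hext : ∀ q, (ρ q : Matrix (Fin 8) (Fin 8) ℝ) * P = P →
      (ρ q : Matrix (Fin 8) (Fin 8) ℝ) * (1 - E) = 1 - E := by
    intro q hq
    have h : (ρ q : Matrix (Fin 8) (Fin 8) ℝ) * ((5 / 4 : ℝ) • (1 - E)) =
        (5 / 4 : ℝ) • (1 - E) := by
      rw [← hsum, Finset.mul_sum]
      refine Finset.sum_congr rfl fun i _ => ?_
      rw [← map_pow, ← mul_assoc, ← mul_assoc, hcomm, mul_assoc (σ _), hq]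
    rw [mul_smul_comm] at h
    exact smul_right_injective _ (by norm_num : (5 / 4 : ℝ) ≠ 0) h
  have hE1 : E ≠ 1 := by
    rintro rfl
    exact hc1 (hσ1 c (by simpa using hCE))
  have hP0 : P ≠ 0 := by
    rintro rfl
    apply hE1
    simp only [mul_zero, zero_mul, Finset.sum_const_zero] at hsum
    have h := (smul_eq_zero.1 hsum.symm).resolve_left (by norm_num)
    exact (sub_eq_zero.1 h).symm
  obtain ⟨a, _, -, ha⟩ := exists_factor E hEt hEE
  obtain ⟨m, _, -, hm⟩ := exists_factor P hPt hPP
  have ham : a + 4 * m = 8 := by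
    rw [ha, hm] at htr; exact_mod_cast htr
  have hm0 : m ≠ 0 := by
    rintro rfl
    exact hP0 (eq_zero_of_trace P hPt hPP (by simpa using hm))
  obtain rfl | rfl : m = 1 ∨ m = 2 := by omega
  · obtain rfl : a = 4 := by omega
    obtain ⟨φ, hφ⟩ := exists_hom_of_trace ρ E hEt hEE hρE ha le_rfl
    obtain ⟨χ, hχ⟩ := exists_hom_of_trace ρ P hPt hPP hρP hm le_rfl
    refine hfaith φ fun q hq hφq => hρ1 q ?_
    have hχq : χ q = 1 := by
      have hle : commutator Q ≤ χ.ker := by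
        rw [commutator_def, Subgroup.commutator_le]
        intro x _ y _
        rw [MonoidHom.mem_ker, map_commutatorElement, commutatorElement_eq_one_iff_mul_comm]
        ext i j
        simp [Matrix.mul_apply, Subsingleton.elim i 0, Subsingleton.elim j 0, mul_comm]
      exact hle hq
    have h1 := hext q (hχ q hχq)
    have h2 := hφ q hφq
    rw [mul_sub, mul_one, h2] at h1
    exact sub_left_injective h1
  · obtain rfl : a = 0 := by omega
    have hE0 : E = 0 := eq_zero_of_trace E hEt hEE (by simpa using ha)
    obtain ⟨φ, hφ⟩ := exists_hom_of_trace ρ P hPt hPP hρP hm (by norm_num : 2 ≤ 4)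
    refine hfaith φ fun q _ hφq => hρ1 q ?_
    simpa [hE0] using hext q (hφ q hφq)
end
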